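/- arXiv:2106.10911 — 4 statements merged into one kernel-verified Lean document; each statement's English description precedes it below -/
import Mathlib

section
/- The flow map of the ODE y' = f(t, y) on ℝᴰ (f smooth) preserves Lebesgue measure for all initial times and time spans if and only if div_y f = Σ_{d=1}^{D} ∂f_d/∂y_d = 0 identically. -/
open MeasureTheory Set

/-!
Along a trajectory `t ↦ Φ t x` of `v`, the spatial derivative `J` of the flow solves the linear
variational equation `J' = v'(t, Φ t x) ∘ J`, so by Jacobi's formula for the derivative of the
determinant it satisfies Liouville's formula `det J = exp ∫ tr v'(t, Φ t x) dt`, where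
`tr v' = div v`. By the change of variables formula, a bijective flow map preserves Lebesgue measure
if and only if this determinant is `1` almost everywhere, that is, if and only if the integral of
the divergence along almost every trajectory vanishes. If this holds for arbitrarily short time
spans, then differentiating the integral at the initial time shows that the divergence vanishes
almost everywhere, hence everywhere by continuity. Flow maps are bijective because solutions are
unique and can be followed backwards in time.

The variational equation is derived from Grönwall's inequality: `Φ t x - Φ t x₀ - J t (x - x₀)`
solves it up to an error that is `o(x - x₀)` uniformly in `t`.
-/

open Filter Metric Topology
open scoped NNReal

/-- `Φ` is a flow of the time-dependent vector field `v` on the time interval `[a, b]`: `Φ t x` is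
the position at time `t` of the integral curve of `v` that is at `x` at the initial time `a`. -/
structure IsFlowOn {E : Type*} [NormedAddCommGroup E] [NormedSpace ℝ E]
    (Φ : ℝ → E → E) (v : ℝ → E → E) (a b : ℝ) : Prop where
  initial : ∀ x, Φ a x = x
  isIntegralCurveOn : ∀ x, IsIntegralCurveOn (Φ · x) v (Icc a b)

section IntegralCurves

variable {E : Type*} [NormedAddCommGroup E] [NormedSpace ℝ E]
  {v : ℝ → E → E} {v' : ℝ → E → E →L[ℝ] E} {γ η : ℝ → E} {a b : ℝ}

theorem hasDerivWithinAt_Ici_of_isIntegralCurveOn {t : ℝ} (hγ : IsIntegralCurveOn γ v (Icc a b))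
    (ht : t ∈ Ico a b) : HasDerivWithinAt γ (v t (γ t)) (Ici t) t :=
  (hγ t (Ico_subset_Icc_self ht)).mono_of_mem_nhdsWithin (Icc_mem_nhdsGE_of_mem ht)

theorem hasDerivWithinAt_Iic_of_isIntegralCurveOn {t : ℝ} (hγ : IsIntegralCurveOn γ v (Icc a b))
    (ht : t ∈ Ioc a b) : HasDerivWithinAt γ (v t (γ t)) (Iic t) t :=
  (hγ t (Ioc_subset_Icc_self ht)).mono_of_mem_nhdsWithin (Icc_mem_nhdsLE_of_mem ht)

-- The rate `K + 1 > K` makes the growth strict, so that `γ` cannot escape from the tube of radius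
-- `ρ` around `η`, which is the only region where `v` is known to be Lipschitz.
theorem norm_sub_le_mul_exp_of_lipschitzOnWith_closedBall {K : ℝ≥0} {r ρ : ℝ}
    (hK : ∀ t ∈ Icc a b, LipschitzOnWith K (v t) (closedBall (η t) ρ))
    (hγ : IsIntegralCurveOn γ v (Icc a b)) (hη : IsIntegralCurveOn η v (Icc a b))
    (hr : 0 < r) (hrρ : r * Real.exp ((K + 1) * (b - a)) ≤ ρ) (ha : ‖γ a - η a‖ ≤ r) :
    ∀ t ∈ Icc a b, ‖γ t - η t‖ ≤ r * Real.exp ((K + 1) * (t - a)) := by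
  have hB (t : ℝ) : HasDerivAt (fun t ↦ r * Real.exp ((K + 1) * (t - a)))
      ((K + 1) * (r * Real.exp ((K + 1) * (t - a)))) t := by
    convert! (((hasDerivAt_id t).sub_const a).const_mul (K + 1 : ℝ)).exp.const_mul r using 1
    simp only [id]
    ring
  refine image_norm_le_of_norm_deriv_right_lt_deriv_boundary (hγ.continuousOn.sub hη.continuousOn)
    (fun t ht ↦ (hasDerivWithinAt_Ici_of_isIntegralCurveOn hγ ht).sub
      (hasDerivWithinAt_Ici_of_isIntegralCurveOn hη ht)) (by simpa using ha) hB ?_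
  intro t ht (heq : ‖γ t - η t‖ = _)
  have hpos : 0 < ‖γ t - η t‖ := heq ▸ by positivity
  have hmem : ‖γ t - η t‖ ≤ ρ := by
    refine heq.trans_le (le_trans ?_ hrρ)
    gcongr
    exact ht.2.le
  rw [← heq]
  calc ‖v t (γ t) - v t (η t)‖ ≤ K * ‖γ t - η t‖ :=
        (hK t (Ico_subset_Icc_self ht)).norm_sub_le (mem_closedBall_iff_norm.2 hmem)
          (mem_closedBall_self (hpos.le.trans hmem))
    _ < (K + 1) * ‖γ t - η t‖ := by linarith

variable [ProperSpace E]

theorem exists_lipschitzOnWith_closedBall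
    (hv : ∀ t ∈ Icc a b, ∀ x, HasFDerivAt (v t) (v' t x) x)
    (hv' : ContinuousOn (Function.uncurry v') (Icc a b ×ˢ univ)) (x₀ : E) (R : ℝ) :
    ∃ K : ℝ≥0, ∀ t ∈ Icc a b, LipschitzOnWith K (v t) (closedBall x₀ R) := by
  obtain ⟨K, hK⟩ := (isCompact_Icc.prod (isCompact_closedBall x₀ R)).exists_bound_of_continuousOn
    (hv'.mono (prod_mono_right (subset_univ _)))
  refine ⟨K.toNNReal, fun t ht ↦ ?_⟩
  exact (convex_closedBall x₀ R).lipschitzOnWith_of_nnnorm_hasFDerivWithin_le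
    (fun x _ ↦ (hv t ht x).hasFDerivWithinAt)
    fun x hx ↦ NNReal.le_toNNReal_of_coe_le (hK (t, x) ⟨ht, hx⟩)

theorem exists_lipschitzOnWith_of_continuousOn
    (hv : ∀ t ∈ Icc a b, ∀ x, HasFDerivAt (v t) (v' t x) x)
    (hv' : ContinuousOn (Function.uncurry v') (Icc a b ×ˢ univ))
    (hγ : ContinuousOn γ (Icc a b)) (hη : ContinuousOn η (Icc a b)) :
    ∃ (s : Set E) (K : ℝ≥0), (∀ t ∈ Icc a b, LipschitzOnWith K (v t) s) ∧
      ∀ t ∈ Icc a b, γ t ∈ s ∧ η t ∈ s := by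
  have hbdd := (isCompact_Icc.image_of_continuousOn hγ).isBounded.union
    (isCompact_Icc.image_of_continuousOn hη).isBounded
  obtain ⟨R, hR⟩ := hbdd.subset_closedBall 0
  obtain ⟨K, hK⟩ := exists_lipschitzOnWith_closedBall hv hv' 0 R
  exact ⟨closedBall 0 R, K, hK, fun t ht ↦
    ⟨hR (.inl (mem_image_of_mem γ ht)), hR (.inr (mem_image_of_mem η ht))⟩⟩

theorem eq_left_iff_eq_right_of_isIntegralCurveOn (hab : a ≤ b)
    (hv : ∀ t ∈ Icc a b, ∀ x, HasFDerivAt (v t) (v' t x) x)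
    (hv' : ContinuousOn (Function.uncurry v') (Icc a b ×ˢ univ))
    (hγ : IsIntegralCurveOn γ v (Icc a b)) (hη : IsIntegralCurveOn η v (Icc a b)) :
    γ a = η a ↔ γ b = η b := by
  obtain ⟨s, K, hK, hs⟩ := exists_lipschitzOnWith_of_continuousOn hv hv'
    hγ.continuousOn hη.continuousOn
  constructor
  · have hIco {t} (ht : t ∈ Ico a b) := Ico_subset_Icc_self ht
    exact fun h ↦ ODE_solution_unique_of_mem_Icc_right (s := fun _ ↦ s)
      (fun t ht ↦ hK t (hIco ht))
      hγ.continuousOn (fun t ht ↦ hasDerivWithinAt_Ici_of_isIntegralCurveOn hγ ht)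
      (fun t ht ↦ (hs t (hIco ht)).1)
      hη.continuousOn (fun t ht ↦ hasDerivWithinAt_Ici_of_isIntegralCurveOn hη ht)
      (fun t ht ↦ (hs t (hIco ht)).2) h (right_mem_Icc.2 hab)
  · have hIoc {t} (ht : t ∈ Ioc a b) := Ioc_subset_Icc_self ht
    exact fun h ↦ ODE_solution_unique_of_mem_Icc_left (s := fun _ ↦ s)
      (fun t ht ↦ hK t (hIoc ht))
      hγ.continuousOn (fun t ht ↦ hasDerivWithinAt_Iic_of_isIntegralCurveOn hγ ht)
      (fun t ht ↦ (hs t (hIoc ht)).1)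
      hη.continuousOn (fun t ht ↦ hasDerivWithinAt_Iic_of_isIntegralCurveOn hη ht)
      (fun t ht ↦ (hs t (hIoc ht)).2) h (left_mem_Icc.2 hab)

theorem IsFlowOn.exists_eventually_norm_sub_le {Φ : ℝ → E → E} (hΦ : IsFlowOn Φ v a b)
    (hv : ∀ t ∈ Icc a b, ∀ x, HasFDerivAt (v t) (v' t x) x)
    (hv' : ContinuousOn (Function.uncurry v') (Icc a b ×ˢ univ)) (x₀ : E) :
    ∃ C, ∀ᶠ x in 𝓝 x₀, ∀ t ∈ Icc a b, ‖Φ t x - Φ t x₀‖ ≤ C * ‖x - x₀‖ := by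
  have hcurve := hΦ.isIntegralCurveOn
  obtain ⟨R, hR⟩ := (isCompact_Icc.image_of_continuousOn (hcurve x₀).continuousOn).isBounded
    |>.subset_closedBall 0
  obtain ⟨K, hK⟩ := exists_lipschitzOnWith_closedBall hv hv' 0 (1 + R)
  set C := Real.exp ((K + 1) * (b - a)) with hC
  have hsmall : ∀ᶠ x in 𝓝 x₀, ‖x - x₀‖ * C < 1 :=
    ContinuousAt.eventually_lt (by fun_prop) continuousAt_const (by simp)
  refine ⟨C, hsmall.mono fun x hx t ht ↦ ?_⟩
  rcases eq_or_ne x x₀ with rfl | hne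
  · simp
  calc ‖Φ t x - Φ t x₀‖ ≤ ‖x - x₀‖ * Real.exp ((K + 1) * (t - a)) :=
        norm_sub_le_mul_exp_of_lipschitzOnWith_closedBall (v := v)
          (fun s hs ↦ (hK s hs).mono (closedBall_subset_closedBall'
            (add_le_add_right (hR (mem_image_of_mem (Φ · x₀) hs)) 1)))
          (hcurve x) (hcurve x₀) (norm_sub_pos_iff.2 hne) hx.le
          (by rw [hΦ.initial, hΦ.initial]) t ht
    _ ≤ C * ‖x - x₀‖ := by
        rw [mul_comm, hC]
        gcongr
        exact ht.2

end IntegralCurves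

theorem continuousOn_apply_of_continuousOn_uncurry {X Y Z : Type*} [TopologicalSpace X]
    [TopologicalSpace Y] [TopologicalSpace Z] {g : X → Y → Z} {γ : X → Y} {s : Set X}
    (hg : ContinuousOn (Function.uncurry g) (s ×ˢ univ)) (hγ : ContinuousOn γ s) :
    ContinuousOn (fun t ↦ g t (γ t)) s :=
  hg.comp (continuousOn_id.prodMk hγ) fun _ ht ↦ ⟨ht, mem_univ _⟩

theorem gronwallBound_zero_left (K ε x : ℝ) :
    gronwallBound 0 K ε x = ε * gronwallBound 0 K 1 x := by
  rcases eq_or_ne K 0 with rfl | hK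
  · simp [gronwallBound_K0]
  · simp only [gronwallBound_of_K_ne_0 hK]
    ring

section Differentiability

variable {E : Type*} [NormedAddCommGroup E] [NormedSpace ℝ E]
  {v : ℝ → E → E} {v' : ℝ → E → E →L[ℝ] E} {γ : ℝ → E} {Φ : ℝ → E → E} {a b : ℝ}

theorem norm_sub_sub_apply_le_gronwallBound {η : ℝ → E} {A J : ℝ → E →L[ℝ] E} {K ε : ℝ}
    (hγ : IsIntegralCurveOn γ v (Icc a b)) (hη : IsIntegralCurveOn η v (Icc a b))
    (hJ : IsIntegralCurveOn J (fun t L ↦ A t ∘L L) (Icc a b))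
    (hJa : J a = ContinuousLinearMap.id ℝ E) (hK : ∀ t ∈ Icc a b, ‖A t‖ ≤ K)
    (hε : ∀ t ∈ Icc a b, ‖v t (γ t) - v t (η t) - A t (γ t - η t)‖ ≤ ε) :
    ∀ t ∈ Icc a b, ‖γ t - η t - J t (γ a - η a)‖ ≤ gronwallBound 0 K ε (t - a) := by
  refine norm_le_gronwallBound_of_norm_deriv_right_le
    ((hγ.continuousOn.sub hη.continuousOn).sub (hJ.continuousOn.clm_apply continuousOn_const))
    (fun t ht ↦ ((hasDerivWithinAt_Ici_of_isIntegralCurveOn hγ ht).sub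
      (hasDerivWithinAt_Ici_of_isIntegralCurveOn hη ht)).sub
      ((hasDerivWithinAt_Ici_of_isIntegralCurveOn hJ ht).clm_apply
        (hasDerivWithinAt_const t _ (γ a - η a))))
    (by simp [hJa]) fun t ht ↦ ?_
  have ht' := Ico_subset_Icc_self ht
  have hsplit : v t (γ t) - v t (η t) - A t (J t (γ a - η a)) =
      A t (γ t - η t - J t (γ a - η a)) + (v t (γ t) - v t (η t) - A t (γ t - η t)) := by
    rw [map_sub (A t) (γ t - η t)]
    abel
  simp only [map_zero, add_zero, ContinuousLinearMap.comp_apply]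
  rw [hsplit]
  exact norm_add_le_of_le ((A t).le_of_opNorm_le (hK t ht') _) (hε t ht')

variable [ProperSpace E]

theorem exists_norm_sub_sub_fderiv_le_of_continuousOn
    (hv : ∀ t ∈ Icc a b, ∀ x, HasFDerivAt (v t) (v' t x) x)
    (hv' : ContinuousOn (Function.uncurry v') (Icc a b ×ˢ univ))
    (hγ : ContinuousOn γ (Icc a b)) {ε : ℝ} (hε : 0 < ε) :
    ∃ δ > 0, ∀ t ∈ Icc a b, ∀ x, ‖x - γ t‖ ≤ δ →
      ‖v t x - v t (γ t) - v' t (γ t) (x - γ t)‖ ≤ ε * ‖x - γ t‖ := by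
  obtain ⟨R, hR⟩ := (isCompact_Icc.image_of_continuousOn hγ).isBounded.subset_closedBall 0
  have hunif := (isCompact_Icc.prod (isCompact_closedBall (0 : E) (1 + R)))
    |>.uniformContinuousOn_of_continuous (hv'.mono (prod_mono_right (subset_univ _)))
  obtain ⟨δ, hδ, hδε⟩ := Metric.uniformContinuousOn_iff.1 hunif ε hε
  refine ⟨min 1 (δ / 2), by positivity, fun t ht x hx ↦ ?_⟩
  have hball {y} (hy : y ∈ closedBall (γ t) (min 1 (δ / 2))) : y ∈ closedBall 0 (1 + R) :=
    closedBall_subset_closedBall'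
      (add_le_add (min_le_left _ _) (hR (mem_image_of_mem γ ht))) hy
  have hcenter : γ t ∈ closedBall (γ t) (min 1 (δ / 2)) := mem_closedBall_self (by positivity)
  refine (convex_closedBall (γ t) (min 1 (δ / 2))).norm_image_sub_le_of_norm_hasFDerivWithin_le'
    (fun y _ ↦ (hv t ht y).hasFDerivWithinAt) (fun y hy ↦ ?_) hcenter (mem_closedBall_iff_norm.2 hx)
  have hdist : dist (t, y) (t, γ t) < δ := by
    rw [dist_prod_same_left]
    exact (hy.trans (min_le_right _ _)).trans_lt (half_lt_self hδ)
  rw [← dist_eq_norm]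
  exact (hδε (t, y) ⟨ht, hball hy⟩ (t, γ t) ⟨ht, hball hcenter⟩ hdist).le

theorem IsFlowOn.eventually_norm_sub_sub_fderiv_le (hΦ : IsFlowOn Φ v a b)
    (hv : ∀ t ∈ Icc a b, ∀ x, HasFDerivAt (v t) (v' t x) x)
    (hv' : ContinuousOn (Function.uncurry v') (Icc a b ×ˢ univ)) (x₀ : E) {ε : ℝ} (hε : 0 < ε) :
    ∀ᶠ x in 𝓝 x₀, ∀ t ∈ Icc a b,
      ‖v t (Φ t x) - v t (Φ t x₀) - v' t (Φ t x₀) (Φ t x - Φ t x₀)‖ ≤ ε * ‖x - x₀‖ := by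
  obtain ⟨C, hC⟩ := hΦ.exists_eventually_norm_sub_le hv hv' x₀
  obtain ⟨δ, hδ, hexp⟩ := exists_norm_sub_sub_fderiv_le_of_continuousOn hv hv'
    (hΦ.isIntegralCurveOn x₀).continuousOn (div_pos hε (show 0 < |C| + 1 by positivity))
  have hsmall : ∀ᶠ x in 𝓝 x₀, (|C| + 1) * ‖x - x₀‖ < δ :=
    ContinuousAt.eventually_lt (by fun_prop) continuousAt_const (by simpa)
  filter_upwards [hC, hsmall] with x hCx hδx t ht
  have htube : ‖Φ t x - Φ t x₀‖ ≤ (|C| + 1) * ‖x - x₀‖ := by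
    refine (hCx t ht).trans ?_
    gcongr
    linarith [le_abs_self C]
  calc _ ≤ ε / (|C| + 1) * ‖Φ t x - Φ t x₀‖ := hexp t ht _ (htube.trans hδx.le)
    _ ≤ ε / (|C| + 1) * ((|C| + 1) * ‖x - x₀‖) := by gcongr
    _ = ε * ‖x - x₀‖ := by field_simp

theorem IsFlowOn.hasFDerivAt (hΦ : IsFlowOn Φ v a b) (hab : a ≤ b)
    (hv : ∀ t ∈ Icc a b, ∀ x, HasFDerivAt (v t) (v' t x) x)
    (hv' : ContinuousOn (Function.uncurry v') (Icc a b ×ˢ univ)) {x₀ : E} {J : ℝ → E →L[ℝ] E}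
    (hJ : IsIntegralCurveOn J (fun t L ↦ v' t (Φ t x₀) ∘L L) (Icc a b))
    (hJa : J a = ContinuousLinearMap.id ℝ E) : HasFDerivAt (Φ b) (J b) x₀ := by
  have hcurve := hΦ.isIntegralCurveOn
  obtain ⟨K, hK⟩ := isCompact_Icc.exists_bound_of_continuousOn
    (continuousOn_apply_of_continuousOn_uncurry hv' (hcurve x₀).continuousOn)
  set G := gronwallBound 0 K 1 (b - a)
  have hG : 0 < |G| + 1 := by positivity
  rw [hasFDerivAt_iff_isLittleO, Asymptotics.isLittleO_iff]
  intro c hc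
  filter_upwards [hΦ.eventually_norm_sub_sub_fderiv_le hv hv' x₀ (div_pos hc hG)] with x hx
  calc ‖Φ b x - Φ b x₀ - J b (x - x₀)‖
      ≤ gronwallBound 0 K (c / (|G| + 1) * ‖x - x₀‖) (b - a) := by
        simpa only [hΦ.initial] using norm_sub_sub_apply_le_gronwallBound (hcurve x) (hcurve x₀)
          hJ hJa hK hx b (right_mem_Icc.2 hab)
    _ = c / (|G| + 1) * ‖x - x₀‖ * G := gronwallBound_zero_left K _ _
    _ ≤ c / (|G| + 1) * ‖x - x₀‖ * (|G| + 1) := by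
        gcongr
        linarith [le_abs_self G]
    _ = c * ‖x - x₀‖ := by field_simp

end Differentiability

section LinearODE

variable {F : Type*} [NormedAddCommGroup F] [NormedSpace ℝ F] {a b : ℝ}

theorem exists_isIntegralCurveOn_of_lipschitzWith_of_bounded [CompleteSpace F] {v : ℝ → F → F}
    {K C : ℝ≥0} (hab : a ≤ b) (hv : ∀ t ∈ Icc a b, LipschitzWith K (v t))
    (hv' : ∀ x, ContinuousOn (v · x) (Icc a b)) (hC : ∀ t ∈ Icc a b, ∀ x, ‖v t x‖ ≤ C) (x₀ : F) :
    ∃ γ : ℝ → F, γ a = x₀ ∧ IsIntegralCurveOn γ v (Icc a b) := by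
  have hPL : IsPicardLindelof v (⟨a, left_mem_Icc.2 hab⟩ : Icc a b) x₀
      (C * (b - a).toNNReal) 0 C K :=
    { lipschitzOnWith t ht := (hv t ht).lipschitzOnWith
      continuousOn x _ := hv' x
      norm_le t ht x _ := hC t ht x
      mul_max_le := by simp [hab] }
  exact hPL.exists_eq_forall_mem_Icc_hasDerivWithinAt₀

theorem norm_le_mul_exp_of_isIntegralCurveOn {v : ℝ → F → F} {γ : ℝ → F} {M : ℝ}
    (hγ : IsIntegralCurveOn γ v (Icc a b)) (hM : ∀ t ∈ Icc a b, ∀ x, ‖v t x‖ ≤ M * ‖x‖) :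
    ∀ t ∈ Icc a b, ‖γ t‖ ≤ ‖γ a‖ * Real.exp (M * (t - a)) := by
  intro t ht
  rw [← gronwallBound_ε0]
  exact norm_le_gronwallBound_of_norm_deriv_right_le hγ.continuousOn
    (fun s hs ↦ hasDerivWithinAt_Ici_of_isIntegralCurveOn hγ hs) le_rfl
    (fun s hs ↦ by simpa using hM s (Ico_subset_Icc_self hs) (γ s)) t ht

variable [FiniteDimensional ℝ F]

theorem exists_lipschitzWith_bounded_eqOn_closedBall_id {R : ℝ} (hR : 0 < R) :
    ∃ (P : F → F) (K C : ℝ≥0), LipschitzWith K P ∧ (∀ y, ‖P y‖ ≤ C) ∧ (∀ y, ‖P y‖ ≤ ‖y‖) ∧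
      EqOn P id (closedBall 0 R) := by
  let χ : ContDiffBump (0 : F) := ⟨R, R + 1, hR, lt_add_one R⟩
  have hsmooth : ContDiff ℝ 1 fun y ↦ χ y • y := χ.contDiff.smul contDiff_id
  have hsupp : HasCompactSupport fun y ↦ χ y • y := χ.hasCompactSupport.smul_right
  obtain ⟨K, hK⟩ := hsmooth.lipschitzWith_of_hasCompactSupport hsupp one_ne_zero
  obtain ⟨C, hC⟩ := hsupp.exists_bound_of_continuous hsmooth.continuous
  refine ⟨fun y ↦ χ y • y, K, C.toNNReal, hK, fun y ↦ (hC y).trans (Real.le_coe_toNNReal C),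
    fun y ↦ ?_, fun y hy ↦ ?_⟩
  · rw [norm_smul, Real.norm_of_nonneg χ.nonneg]
    exact mul_le_of_le_one_left (norm_nonneg y) χ.le_one
  · simp only [χ.one_of_mem_closedBall hy, one_smul, id]

-- Composing `A t` with a bounded cutoff of the identity makes the Picard-Lindelöf theorem
-- applicable on all of `[a, b]`; the a priori bound on the solution shows that the cutoff never
-- acts.
theorem exists_isIntegralCurveOn_clm (hab : a ≤ b) {A : ℝ → F →L[ℝ] F}
    (hA : ContinuousOn A (Icc a b)) (x₀ : F) :
    ∃ γ : ℝ → F, γ a = x₀ ∧ IsIntegralCurveOn γ (fun t y ↦ A t y) (Icc a b) := by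
  have : CompleteSpace F := FiniteDimensional.complete ℝ F
  obtain ⟨M', hM'⟩ := isCompact_Icc.exists_bound_of_continuousOn hA
  lift max M' 0 to ℝ≥0 using le_max_right M' 0 with M hMM'
  have hM {t} (ht : t ∈ Icc a b) : ‖A t‖ ≤ M := hMM' ▸ (hM' t ht).trans (le_max_left _ _)
  set R := ‖x₀‖ * Real.exp (M * (b - a)) + 1
  obtain ⟨P, K, C, hK, hC, hP, hPid⟩ :=
    exists_lipschitzWith_bounded_eqOn_closedBall_id (F := F) (show 0 < R by positivity)
  obtain ⟨γ, hγa, hγ⟩ := exists_isIntegralCurveOn_of_lipschitzWith_of_bounded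
    (v := fun t y ↦ A t (P y)) (K := M * K) (C := M * C) hab
    (fun t ht ↦ ((A t).lipschitz.weaken (hM ht)).comp hK)
    (fun y ↦ hA.clm_apply continuousOn_const)
    (fun t ht y ↦ (A t).le_of_opNorm_le_of_le (hM ht) (hC y)) x₀
  have hγR {t} (ht : t ∈ Icc a b) : γ t ∈ closedBall 0 R := by
    rw [mem_closedBall_zero_iff]
    calc ‖γ t‖ ≤ ‖γ a‖ * Real.exp (M * (t - a)) := norm_le_mul_exp_of_isIntegralCurveOn hγ
          (fun s hs y ↦ (A s).le_of_opNorm_le_of_le (hM hs) (hP y)) t ht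
      _ ≤ ‖x₀‖ * Real.exp (M * (b - a)) := by
          rw [hγa]
          gcongr
          exact ht.2
      _ ≤ R := (lt_add_one _).le
  refine ⟨γ, hγa, fun t ht ↦ ?_⟩
  simpa only [hPid (hγR ht), id] using hγ t ht

end LinearODE

section Determinant

variable {𝕜 E : Type*} [NontriviallyNormedField 𝕜] [NormedAddCommGroup E] [NormedSpace 𝕜 E]

theorem hasDerivAt_det_one_add_smul {n : Type*} [Fintype n] [DecidableEq n] (M : Matrix n n 𝕜) :
    HasDerivAt (fun s : 𝕜 ↦ (1 + s • M).det) M.trace 0 := by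
  obtain ⟨q, hq⟩ : ∃ q : Polynomial 𝕜, ∀ s : 𝕜,
      (1 + s • M).det = 1 + M.trace * s + q.eval s * s ^ 2 :=
    ⟨_, fun s ↦ Matrix.det_one_add_smul s M⟩
  have hlin := ((hasDerivAt_id (0 : 𝕜)).const_mul M.trace).const_add 1
  have hquad := (q.hasDerivAt 0).mul ((hasDerivAt_id (0 : 𝕜)).pow 2)
  simp only [hq]
  convert! hlin.add hquad using 1
  simp

variable [FiniteDimensional 𝕜 E]

theorem hasDerivAt_det_id_add_smul (A : E →L[𝕜] E) :
    HasDerivAt (fun s : 𝕜 ↦ (ContinuousLinearMap.id 𝕜 E + s • A).det)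
      (LinearMap.trace 𝕜 E A) 0 := by
  let β := Module.finBasis 𝕜 E
  rw [LinearMap.trace_eq_matrix_trace 𝕜 β]
  convert! hasDerivAt_det_one_add_smul (LinearMap.toMatrix β β (A : E →ₗ[𝕜] E)) using 2 with s
  rw [ContinuousLinearMap.det, ← LinearMap.det_toMatrix β]
  simp

variable [CompleteSpace 𝕜]

theorem differentiable_det : Differentiable 𝕜 fun L : E →L[𝕜] E ↦ L.det := by
  let β := Module.finBasis 𝕜 E
  have hdet (L : E →L[𝕜] E) : L.det =
      ∑ σ : Equiv.Perm _, ((Equiv.Perm.sign σ : ℤ) : 𝕜) * ∏ i, β.equivFunL (L (β i)) (σ i) := by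
    rw [ContinuousLinearMap.det, ← LinearMap.det_toMatrix β, Matrix.det_apply']
    simp only [LinearMap.toMatrix_apply]
    rfl
  simp only [hdet]
  fun_prop

theorem fderiv_det_comp (A J : E →L[𝕜] E) :
    fderiv 𝕜 (fun L : E →L[𝕜] E ↦ L.det) J (A ∘L J) = LinearMap.trace 𝕜 E A * J.det := by
  have hline : HasDerivAt (fun s : 𝕜 ↦ J + s • A ∘L J) (A ∘L J) 0 := by
    simpa using ((hasDerivAt_id (0 : 𝕜)).smul_const (A ∘L J)).const_add J
  have hdet : HasDerivAt (fun s : 𝕜 ↦ (J + s • A ∘L J).det)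
      (LinearMap.trace 𝕜 E A * J.det) 0 := by
    convert! (hasDerivAt_det_id_add_smul A).mul_const J.det using 2 with s
    rw [← ContinuousLinearMap.smul_comp]
    nth_rewrite 1 [← J.id_comp]
    rw [← ContinuousLinearMap.add_comp]
    exact LinearMap.det_comp _ _
  exact ((differentiable_det J).hasFDerivAt.comp_hasDerivAt_of_eq 0 hline (by simp)).unique hdet

end Determinant

section LiouvilleFormula

variable {a b : ℝ}

theorem eq_exp_integral_mul_of_isIntegralCurveOn {c y : ℝ → ℝ} (hab : a ≤ b)
    (hc : ContinuousOn c (Icc a b)) (hy : IsIntegralCurveOn y (fun t x ↦ c t * x) (Icc a b)) :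
    y b = Real.exp (∫ t in a..b, c t) * y a := by
  have hint {t} (ht : t ∈ Icc a b) :
      HasDerivWithinAt (fun u ↦ ∫ s in a..u, c s) (c t) (Icc a b) t := by
    have : Fact (t ∈ Icc a b) := ⟨ht⟩
    have hat := (hc.mono (Icc_subset_Icc_right ht.2)).intervalIntegrable_of_Icc (μ := volume) ht.1
    exact intervalIntegral.integral_hasDerivWithinAt_right hat
      (hc.stronglyMeasurableAtFilter_nhdsWithin measurableSet_Icc t) (hc t ht)
  let w (t : ℝ) := Real.exp (-∫ s in a..t, c s) * y t
  have hw (t) (ht : t ∈ Icc a b) : HasDerivWithinAt w 0 (Icc a b) t := by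
    convert! (hint ht).neg.exp.mul (hy t ht) using 1
    ring
  have hwb : w b = w a := constant_of_has_deriv_right_zero (fun t ht ↦ (hw t ht).continuousWithinAt)
    (fun t ht ↦ (hw t (Ico_subset_Icc_self ht)).mono_of_mem_nhdsWithin (Icc_mem_nhdsGE_of_mem ht))
    b (right_mem_Icc.2 hab)
  simp only [w, intervalIntegral.integral_same, neg_zero, Real.exp_zero, one_mul] at hwb
  rw [← hwb, ← mul_assoc, ← Real.exp_add, add_neg_cancel, Real.exp_zero, one_mul]

variable {E : Type*} [NormedAddCommGroup E] [NormedSpace ℝ E] [FiniteDimensional ℝ E]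

theorem continuous_trace : Continuous fun L : E →L[ℝ] E ↦ LinearMap.trace ℝ E L :=
  LinearMap.continuous_of_finiteDimensional
    ((LinearMap.trace ℝ E) ∘ₗ (ContinuousLinearMap.coeLM ℝ))

theorem det_eq_exp_integral_trace_mul_det {A J : ℝ → E →L[ℝ] E} (hab : a ≤ b)
    (hA : ContinuousOn A (Icc a b))
    (hJ : IsIntegralCurveOn J (fun t L ↦ A t ∘L L) (Icc a b)) :
    (J b).det = Real.exp (∫ t in a..b, LinearMap.trace ℝ E (A t)) * (J a).det :=
  eq_exp_integral_mul_of_isIntegralCurveOn (y := fun t ↦ (J t).det) hab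
    (continuous_trace.comp_continuousOn hA) fun t ht ↦ by
      simp only [← fderiv_det_comp]
      exact (differentiable_det (J t)).hasFDerivAt.comp_hasDerivWithinAt t (hJ t ht)

theorem IsFlowOn.exists_hasFDerivAt_det_eq {v : ℝ → E → E} {v' : ℝ → E → E →L[ℝ] E}
    {Φ : ℝ → E → E} (hΦ : IsFlowOn Φ v a b) (hab : a ≤ b)
    (hv : ∀ t ∈ Icc a b, ∀ x, HasFDerivAt (v t) (v' t x) x)
    (hv' : ContinuousOn (Function.uncurry v') (Icc a b ×ˢ univ)) (x : E) :
    ∃ L : E →L[ℝ] E, HasFDerivAt (Φ b) L x ∧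
      L.det = Real.exp (∫ t in a..b, LinearMap.trace ℝ E (v' t (Φ t x))) := by
  have : ProperSpace E := FiniteDimensional.proper_real E
  have hA : ContinuousOn (fun t ↦ v' t (Φ t x)) (Icc a b) :=
    continuousOn_apply_of_continuousOn_uncurry hv' (hΦ.isIntegralCurveOn x).continuousOn
  obtain ⟨J, hJa, hJ⟩ := exists_isIntegralCurveOn_clm hab
    ((ContinuousLinearMap.compL ℝ E E E).continuous.comp_continuousOn hA)
    (ContinuousLinearMap.id ℝ E)
  refine ⟨J b, hΦ.hasFDerivAt hab hv hv' hJ hJa, ?_⟩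
  rw [det_eq_exp_integral_trace_mul_det hab hA hJ, hJa]
  simp [ContinuousLinearMap.det]

end LiouvilleFormula

section MeasurePreserving

variable {E : Type*} [NormedAddCommGroup E] [NormedSpace ℝ E] [FiniteDimensional ℝ E]
  [MeasurableSpace E] [BorelSpace E] (μ : Measure E) [μ.IsAddHaarMeasure]

theorem measurePreserving_iff_ae_abs_det_eq_one {g : E → E} {g' : E → E →L[ℝ] E}
    (hg : ∀ x, HasFDerivAt g (g' x) x) (hbij : Function.Bijective g) :
    MeasurePreserving g μ μ ↔ ∀ᵐ x ∂μ, |(g' x).det| = 1 := by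
  have hcont : Continuous g := continuous_iff_continuousAt.2 fun x ↦ (hg x).continuousAt
  have hemb : MeasurableEmbedding g := hcont.measurableEmbedding hbij.injective
  have hmap : (μ.withDensity fun x ↦ ENNReal.ofReal |(g' x).det|).map g = μ := by
    simpa only [Measure.restrict_univ, image_univ, hbij.surjective.range_eq] using
      map_withDensity_abs_det_fderiv_eq_addHaar μ nullMeasurableSet_univ
        (fun x _ ↦ (hg x).hasFDerivWithinAt) hbij.injective.injOn
  have hmeas : AEMeasurable (fun x ↦ ENNReal.ofReal |(g' x).det|) μ := by
    simpa only [Measure.restrict_univ] using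
      aemeasurable_ofReal_abs_det_fderivWithin μ MeasurableSet.univ
        fun x _ ↦ (hg x).hasFDerivWithinAt
  have hmap_inj : Function.Injective (Measure.map g) :=
    Function.LeftInverse.injective hemb.comap_map
  calc MeasurePreserving g μ μ
      ↔ (μ.withDensity 1).map g = (μ.withDensity fun x ↦ ENNReal.ofReal |(g' x).det|).map g := by
        rw [hmap, withDensity_one]
        exact ⟨fun h ↦ h.map_eq, fun h ↦ ⟨hcont.measurable, h⟩⟩
    _ ↔ μ.withDensity (fun x ↦ ENNReal.ofReal |(g' x).det|) = μ.withDensity 1 := by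
        rw [hmap_inj.eq_iff, eq_comm]
    _ ↔ ∀ᵐ x ∂μ, |(g' x).det| = 1 := by
        rw [withDensity_eq_iff_of_sigmaFinite hmeas measurable_one.aemeasurable]
        simp only [EventuallyEq, Pi.one_apply, ENNReal.ofReal_eq_one]

theorem IsFlowOn.measurePreserving_iff {a b : ℝ} {v : ℝ → E → E} {v' : ℝ → E → E →L[ℝ] E}
    {Φ : ℝ → E → E} (hΦ : IsFlowOn Φ v a b) (hab : a ≤ b)
    (hv : ∀ t ∈ Icc a b, ∀ x, HasFDerivAt (v t) (v' t x) x)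
    (hv' : ContinuousOn (Function.uncurry v') (Icc a b ×ˢ univ))
    (hbij : Function.Bijective (Φ b)) :
    MeasurePreserving (Φ b) μ μ ↔
      ∀ᵐ x ∂μ, ∫ t in a..b, LinearMap.trace ℝ E (v' t (Φ t x)) = 0 := by
  choose L hL hdet using hΦ.exists_hasFDerivAt_det_eq hab hv hv'
  simp only [measurePreserving_iff_ae_abs_det_eq_one μ hL hbij, hdet, Real.abs_exp,
    Real.exp_eq_one_iff]

end MeasurePreserving

theorem eq_zero_of_frequently_integral_eq_zero {E : Type*} [NormedAddCommGroup E]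
    [NormedSpace ℝ E] [CompleteSpace E] {g : ℝ → E} {a : ℝ}
    (hmeas : StronglyMeasurableAtFilter g (𝓝[>] a)) (hg : ContinuousWithinAt g (Ioi a) a)
    (hint : ∃ᶠ u in 𝓝[>] a, ∫ t in a..u, g t = 0) : g a = 0 := by
  have hderiv : HasDerivWithinAt (fun u ↦ ∫ t in a..u, g t) (g a) (Ici a) a :=
    intervalIntegral.integral_hasDerivWithinAt_right IntervalIntegrable.refl hmeas hg
  by_contra hne
  have hev := hderiv.eventually_ne hne (c := 0)
  rw [Ici_sdiff_left] at hev
  exact hint hev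

section Divergence

variable {E : Type*} [NormedAddCommGroup E] [NormedSpace ℝ E] {v : ℝ → E → E}
  {v' : ℝ → E → E →L[ℝ] E} {Φ : ℝ → E → E} {a b : ℝ}

theorem IsFlowOn.mono {c : ℝ} (hΦ : IsFlowOn Φ v a b) (hc : c ≤ b) : IsFlowOn Φ v a c :=
  ⟨hΦ.initial, fun x ↦ (hΦ.isIntegralCurveOn x).mono (Icc_subset_Icc_right hc)⟩

theorem IsFlowOn.bijective [ProperSpace E] (hΦ : IsFlowOn Φ v a b) (hab : a ≤ b)
    (hv : ∀ t ∈ Icc a b, ∀ x, HasFDerivAt (v t) (v' t x) x)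
    (hv' : ContinuousOn (Function.uncurry v') (Icc a b ×ˢ univ))
    (hsurj : ∀ y, ∃ η : ℝ → E, IsIntegralCurveOn η v (Icc a b) ∧ η b = y) :
    Function.Bijective (Φ b) := by
  have huniq {γ η : ℝ → E} := eq_left_iff_eq_right_of_isIntegralCurveOn (γ := γ) (η := η) hab hv hv'
  refine ⟨fun x y hxy ↦ ?_, fun y ↦ ?_⟩
  · simpa only [hΦ.initial] using
      (huniq (hΦ.isIntegralCurveOn x) (hΦ.isIntegralCurveOn y)).2 hxy
  · obtain ⟨η, hη, rfl⟩ := hsurj y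
    exact ⟨η a, (huniq (hΦ.isIntegralCurveOn (η a)) hη).1 (hΦ.initial (η a))⟩

variable [FiniteDimensional ℝ E] [MeasurableSpace E] [BorelSpace E] (μ : Measure E)
  [μ.IsAddHaarMeasure]

theorem IsFlowOn.trace_eq_zero_of_forall_measurePreserving (hΦ : IsFlowOn Φ v a b) (hab : a < b)
    (hv : ∀ t ∈ Icc a b, ∀ x, HasFDerivAt (v t) (v' t x) x)
    (hv' : ContinuousOn (Function.uncurry v') (Icc a b ×ˢ univ))
    (hbij : ∀ t ∈ Icc a b, Function.Bijective (Φ t))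
    (hmp : ∀ t ∈ Icc a b, MeasurePreserving (Φ t) μ μ) (x : E) :
    LinearMap.trace ℝ E (v' a x) = 0 := by
  -- The exceptional null set depends on the time, so only countably many times may be used.
  obtain ⟨u, -, hu, hua⟩ := exists_seq_strictAnti_tendsto' hab
  have hua' : Tendsto u atTop (𝓝[>] a) :=
    tendsto_nhdsWithin_iff.2 ⟨hua, .of_forall fun n ↦ (hu n).1⟩
  have hint (n : ℕ) : ∀ᵐ x ∂μ, ∫ t in a..u n, LinearMap.trace ℝ E (v' t (Φ t x)) = 0 := by
    have hn := Ioo_subset_Icc_self (hu n)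
    have hsub : Icc a (u n) ⊆ Icc a b := Icc_subset_Icc_right hn.2
    exact ((hΦ.mono hn.2).measurePreserving_iff μ hn.1 (fun t ht ↦ hv t (hsub ht))
      (hv'.mono (prod_mono_left hsub)) (hbij _ hn)).1 (hmp _ hn)
  have hae : ∀ᵐ x ∂μ, LinearMap.trace ℝ E (v' a x) = 0 := by
    filter_upwards [ae_all_iff.2 hint] with x hx
    have hcont : ContinuousOn (fun t ↦ LinearMap.trace ℝ E (v' t (Φ t x))) (Icc a b) :=
      continuous_trace.comp_continuousOn
        (continuousOn_apply_of_continuousOn_uncurry hv' (hΦ.isIntegralCurveOn x).continuousOn)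
    have hIoc : 𝓝[>] a ≤ 𝓝[Icc a b] a :=
      (nhdsWithin_Ioc_eq_nhdsGT hab).ge.trans (nhdsWithin_mono a Ioc_subset_Icc_self)
    simpa only [hΦ.initial] using eq_zero_of_frequently_integral_eq_zero
      ((hcont.stronglyMeasurableAtFilter_nhdsWithin measurableSet_Icc a).filter_mono hIoc)
      ((hcont a (left_mem_Icc.2 hab.le)).mono_left hIoc) (hua'.frequently (.of_forall hx))
  have hcont : Continuous fun x ↦ LinearMap.trace ℝ E (v' a x) :=
    continuous_trace.comp (hv'.comp_continuous (by fun_prop : Continuous fun x ↦ (a, x))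
      fun x ↦ ⟨left_mem_Icc.2 hab.le, mem_univ x⟩)
  exact congrFun ((hcont.ae_eq_iff_eq μ continuous_const).1 hae) x

end Divergence

/-- `φ` is the flow map of the ordinary differential equation `y' = f t y` on the time half-line
`[0, ∞)`: `φ τ T x` is the value at time `τ + T` of the solution that takes the value `x` at time
`τ`. The time span `T` ranges down to `-τ`, so that solutions can be followed back to time `0`. -/
structure IsFlowMap {E : Type*} [NormedAddCommGroup E] [NormedSpace ℝ E]
    (φ : ℝ → ℝ → E → E) (f : ℝ → E → E) : Prop where
  initial : ∀ τ ≥ 0, ∀ x, φ τ 0 x = x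
  isIntegralCurveOn : ∀ τ ≥ 0, ∀ x,
    IsIntegralCurveOn (fun T ↦ φ τ T x) (fun T ↦ f (τ + T)) (Ici (-τ))

section FlowMap

variable {E : Type*} [NormedAddCommGroup E] [NormedSpace ℝ E]
  {f : ℝ → E → E} {f' : ℝ → E → E →L[ℝ] E} {φ : ℝ → ℝ → E → E} {τ T : ℝ}

theorem continuousOn_uncurry_add_left {Y Z : Type*} [TopologicalSpace Y] [TopologicalSpace Z]
    {g : ℝ → Y → Z} (hg : ContinuousOn (Function.uncurry g) (Ici 0 ×ˢ univ)) (hτ : 0 ≤ τ) :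
    ContinuousOn (Function.uncurry fun t ↦ g (τ + t)) (Icc 0 T ×ˢ univ) :=
  hg.comp (f := fun p : ℝ × Y ↦ (τ + p.1, p.2)) (by fun_prop)
    fun _ hp ↦ ⟨add_nonneg hτ hp.1.1, mem_univ _⟩

theorem IsFlowMap.isFlowOn (hφ : IsFlowMap φ f) (hτ : 0 ≤ τ) (T : ℝ) :
    IsFlowOn (φ τ) (fun t ↦ f (τ + t)) 0 T :=
  ⟨hφ.initial τ hτ, fun x ↦ (hφ.isIntegralCurveOn τ hτ x).mono
    fun _ ht ↦ (neg_nonpos.2 hτ).trans ht.1⟩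

theorem IsFlowMap.isIntegralCurveOn_sub (hφ : IsFlowMap φ f) (hτ : 0 ≤ τ) (hT : 0 ≤ T) (y : E) :
    IsIntegralCurveOn (fun t ↦ φ (τ + T) (t - T) y) (fun t ↦ f (τ + t)) (Icc 0 T) := by
  have hback := (hφ.isIntegralCurveOn (τ + T) (add_nonneg hτ hT) y).comp_sub T
  simp only [Function.comp_def, add_add_sub_cancel] at hback
  refine hback.mono fun t ht ↦ ?_
  rw [mem_vadd_set_iff_neg_vadd_mem, vadd_eq_add, mem_Ici]
  linarith [ht.1]

theorem IsFlowMap.bijective [ProperSpace E] (hφ : IsFlowMap φ f)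
    (hf : ∀ t ≥ 0, ∀ x, HasFDerivAt (f t) (f' t x) x)
    (hf' : ContinuousOn (Function.uncurry f') (Ici 0 ×ˢ univ)) (hτ : 0 ≤ τ) (hT : 0 ≤ T) :
    Function.Bijective (φ τ T) :=
  (hφ.isFlowOn hτ T).bijective hT (fun t ht ↦ hf (τ + t) (add_nonneg hτ ht.1))
    (continuousOn_uncurry_add_left hf' hτ) fun y ↦ ⟨_, hφ.isIntegralCurveOn_sub hτ hT y, by
      rw [sub_self, hφ.initial (τ + T) (add_nonneg hτ hT)]⟩

end FlowMap

theorem trace_pi_eq_sum_apply_single {R ι : Type*} [CommRing R] [Fintype ι] [DecidableEq ι]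
    (L : (ι → R) →ₗ[R] ι → R) : LinearMap.trace R (ι → R) L = ∑ i, L (Pi.single i 1) i := by
  rw [LinearMap.trace_eq_matrix_trace R (Pi.basisFun R ι)]
  simp [Matrix.trace]

section Fderiv

variable {𝕜 X Y Z : Type*} [NontriviallyNormedField 𝕜] [NormedAddCommGroup X] [NormedSpace 𝕜 X]
  [NormedAddCommGroup Y] [NormedSpace 𝕜 Y] [NormedAddCommGroup Z] [NormedSpace 𝕜 Z]
  {g : X → Y → Z}

theorem hasFDerivAt_of_contDiff_uncurry (hg : ContDiff 𝕜 1 (Function.uncurry g)) (x : X) (y : Y) :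
    HasFDerivAt (g x) (fderiv 𝕜 (g x) y) y :=
  ((hg.comp (contDiff_prodMk_right x)).differentiable one_ne_zero y).hasFDerivAt

theorem continuous_fderiv_of_contDiff_uncurry (hg : ContDiff 𝕜 1 (Function.uncurry g)) :
    Continuous (Function.uncurry fun x y ↦ fderiv 𝕜 (g x) y) :=
  Continuous.fderiv (f := fun p : X × Y ↦ g p.1) (n := 1)
    (hg.comp (f := fun q : (X × Y) × Y ↦ (q.1.1, q.2)) (by fun_prop)) continuous_snd le_rfl

end Fderiv

theorem stmt9_general {E : Type*} [NormedAddCommGroup E] [NormedSpace ℝ E] [FiniteDimensional ℝ E]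
    [MeasurableSpace E] [BorelSpace E] (μ : Measure E) [μ.IsAddHaarMeasure]
    {f : ℝ → E → E} {f' : ℝ → E → E →L[ℝ] E} {φ : ℝ → ℝ → E → E}
    (hf : ∀ t ≥ 0, ∀ x, HasFDerivAt (f t) (f' t x) x)
    (hf' : ContinuousOn (Function.uncurry f') (Ici 0 ×ˢ univ)) (hφ : IsFlowMap φ f) :
    (∀ τ ≥ 0, ∀ T ≥ 0, MeasurePreserving (φ τ T) μ μ) ↔
      ∀ t ≥ 0, ∀ x, LinearMap.trace ℝ E (f' t x) = 0 := by
  have : ProperSpace E := FiniteDimensional.proper_real E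
  have hfτ {τ T : ℝ} (hτ : 0 ≤ τ) (t) (ht : t ∈ Icc 0 T) := hf (τ + t) (add_nonneg hτ ht.1)
  constructor
  · intro hmp τ hτ x
    have htrace := (hφ.isFlowOn hτ 1).trace_eq_zero_of_forall_measurePreserving μ one_pos (hfτ hτ)
      (continuousOn_uncurry_add_left hf' hτ) (fun T hT ↦ hφ.bijective hf hf' hτ hT.1)
      (fun T hT ↦ hmp τ hτ T hT.1) x
    rwa [add_zero] at htrace
  · intro htrace τ hτ T hT
    rw [(hφ.isFlowOn hτ T).measurePreserving_iff μ hT (hfτ hτ)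
      (continuousOn_uncurry_add_left hf' hτ) (hφ.bijective hf hf' hτ hT)]
    refine .of_forall fun x ↦ ?_
    rw [intervalIntegral.integral_congr (g := fun _ ↦ 0), intervalIntegral.integral_zero]
    intro t ht
    exact htrace (τ + t) (add_nonneg hτ (uIcc_of_le hT ▸ ht).1) _

/-- Liouville: For a smooth vector field `f` on `[0,∞) × ℝᴰ` with
flow `φ τ T x = y(τ+T)` where `y' = f(t,y)`, `y(τ) = x`, the flow map preserves
Lebesgue measure for all initial times `τ ≥ 0` and time spans `T ≥ 0` if and
only if the divergence `div_y f = Σ_d ∂f_d/∂y_d` vanishes identically. -/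
theorem stmt9 {D : ℕ}
    (f : ℝ → (Fin D → ℝ) → (Fin D → ℝ))
    (hf : ContDiff ℝ (⊤ : ℕ∞) (fun p : ℝ × (Fin D → ℝ) => f p.1 p.2))
    (φ : ℝ → ℝ → (Fin D → ℝ) → (Fin D → ℝ))
    (hφ0 : ∀ τ x, φ τ 0 x = x)
    (hφ : ∀ τ x T, 0 ≤ τ →
      HasDerivAt (fun u => φ τ u x) (f (τ + T) (φ τ T x)) T) :
    (∀ τ ≥ (0:ℝ), ∀ T ≥ (0:ℝ), MeasurePreserving (φ τ T) volume volume) ↔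
    (∀ t ≥ (0:ℝ), ∀ y : Fin D → ℝ,
      ∑ d : Fin D, fderiv ℝ (f t) y (Pi.single d 1) d = 0) := by
  have hf1 : ContDiff ℝ 1 (Function.uncurry f) := hf.of_le (by exact_mod_cast le_top)
  have hflow : IsFlowMap φ f :=
    ⟨fun τ _ ↦ hφ0 τ, fun τ hτ x T _ ↦ (hφ τ x T hτ).hasDerivWithinAt⟩
  simpa only [trace_pi_eq_sum_apply_single, ContinuousLinearMap.coe_coe] using stmt9_general volume
    (fun t _ ↦ hasFDerivAt_of_contDiff_uncurry hf1 t)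
    (continuous_fderiv_of_contDiff_uncurry hf1).continuousOn hflow
end

section
/- Let f : [0,∞) × ℝᴰ → ℝᴰ be a smooth time-dependent vector field with div_y f = 0 for every t. Then f can be written as a sum f = f_{1,2} + f_{2,3} + ⋯ + f_{D−1,D} of D−1 smooth vector fields, where each f_{d,d+1} is 2-Hamiltonian in the d,(d+1)-th variables, i.e., there is a smooth scalar function H_d(t,y) with f_{d,d+1} = (0,…,0, −∂H_d/∂y_{d+1}, ∂H_d/∂y_d, 0,…,0)ᵀ, the nonzero entries being in positions d and d+1. -/
/-!
Choose `H₀` with `-∂₁ H₀ = f₀`. Subtracting from `f` the 2-Hamiltonian field of `H₀` in the first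
two variables kills the component `f₀` and preserves the divergence, since 2-Hamiltonian fields are
divergence-free. The remaining components form a divergence-free field with respect to the remaining
variables, and we recurse. For the last two variables the remaining component `r` does not depend on
the last variable, so it has a primitive `K` in the penultimate variable with the same invariance,
and adding `K` to the Hamiltonian absorbs `r` without changing the other component.

Time and the variables already removed take part only as parameters, so the recursion is run for a
linearly independent family of directions in a fixed normed space.
-/

open Function MeasureTheory Set
open scoped ContDiff Convolution Interval

section Derivatives

variable {V E : Type*} [NormedAddCommGroup V] [NormedSpace ℝ V]
  [NormedAddCommGroup E] [NormedSpace ℝ E] {g : V → E} {w : V}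

theorem fderiv_fderiv_apply_comm (hg : ContDiff ℝ 2 g) (v w x : V) :
    fderiv ℝ (fun y => fderiv ℝ g y v) x w = fderiv ℝ (fun y => fderiv ℝ g y w) x v := by
  have h_diff : DifferentiableAt ℝ (fderiv ℝ g) x :=
    (hg.fderiv_right (m := 1) le_rfl).differentiable one_ne_zero x
  have h_symm : IsSymmSndFDerivAt ℝ g x := hg.contDiffAt.isSymmSndFDerivAt (by simp)
  simpa [fderiv_clm_apply h_diff] using h_symm w v

theorem fderiv_comp_prodMk_right {T : Type*} [NormedAddCommGroup T] [NormedSpace ℝ T]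
    {G : T × V → E} {t : T} {y : V} (hG : DifferentiableAt ℝ G (t, y)) (w : V) :
    fderiv ℝ (fun z => G (t, z)) y w = fderiv ℝ G (t, y) (0, w) := by
  have := (hG.hasFDerivAt.comp y (hasFDerivAt_prodMk_right (𝕜 := ℝ) t y)).fderiv
  simpa [comp_def] using congr($this w)

theorem periodic_smul_of_fderiv_apply_eq_zero (hg : Differentiable ℝ g)
    (hw : ∀ x, fderiv ℝ g x w = 0) (τ : ℝ) : Periodic g (τ • w) := fun x => by
  have h_deriv (s : ℝ) : HasDerivAt (fun s : ℝ => g (x + s • w)) 0 s := by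
    have h := (hg (x + s • w)).hasFDerivAt.comp_hasDerivAt s
      (((hasDerivAt_id s).smul_const w).const_add x)
    simpa [hw, comp_def] using h
  simpa using is_const_of_deriv_eq_zero (fun s => (h_deriv s).differentiableAt)
    (fun s => (h_deriv s).deriv) τ 0

theorem fderiv_apply_eq_zero_of_periodic_smul (hg : Differentiable ℝ g)
    (hw : ∀ τ : ℝ, Periodic g (τ • w)) (x : V) : fderiv ℝ g x w = 0 := by
  rw [← (hg x).lineDeriv_eq_fderiv, lineDeriv]
  simp [hw _ x]

end Derivatives

section ParametricIntegral

variable {V E : Type*} [NormedAddCommGroup V] [NormedSpace ℝ V]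
  [NormedAddCommGroup E] [NormedSpace ℝ E]

theorem contDiff_intervalIntegral {n : ℕ∞} {F : V → ℝ → E} (hF : ContDiff ℝ n (uncurry F))
    (a b : ℝ) : ContDiff ℝ n fun x => ∫ t in a..b, F x t := by
  -- The integral is the value at `0` of the convolution of the indicator function of the interval
  -- with `s ↦ F x (-s)`, cut off so that it has compact support.
  let χ : ContDiffBump (0 : ℝ) := ⟨|a| + |b| + 1, |a| + |b| + 2, by positivity, by linarith⟩
  have χ_neg_eq_one {t : ℝ} (ht : t ∈ Ι a b) : χ (-t) = 1 := by
    refine χ.one_of_mem_closedBall ?_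
    rw [mem_closedBall_zero_iff, norm_neg, Real.norm_eq_abs, abs_le]
    rcases mem_uIoc.1 ht with h | h <;> constructor <;>
      linarith [neg_abs_le a, neg_abs_le b, le_abs_self a, le_abs_self b, abs_nonneg a,
        abs_nonneg b]
  have integral_eq_convolution (x : V) : ∫ t in Ι a b, F x t =
      ((Ι a b).indicator (1 : ℝ → ℝ) ⋆[ContinuousLinearMap.lsmul ℝ ℝ, volume]
        fun s => χ s • F x (-s)) 0 := by
    rw [convolution_def, ← integral_indicator measurableSet_uIoc]
    congr 1 with t
    by_cases ht : t ∈ Ι a b <;> simp [ht, χ_neg_eq_one]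
  simp only [intervalIntegral.intervalIntegral_eq_integral_uIoc, integral_eq_convolution]
  refine contDiff_const.smul (contDiffOn_univ.1 ?_)
  refine contDiffOn_convolution_right_with_param_comp _ contDiffOn_const isOpen_univ
    χ.hasCompactSupport (fun x s _ hs => ?_) ?_ ?_
  · simp [image_eq_zero_of_notMem_tsupport hs]
  · exact (integrableOn_const (by simp)).integrable_indicator measurableSet_uIoc
      |>.locallyIntegrable
  · refine ContDiff.contDiffOn ?_
    exact (χ.contDiff.comp contDiff_snd).smul (hF.comp (contDiff_fst.prodMk contDiff_snd.neg))

end ParametricIntegral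

section DirectionalPrimitive

variable {V E : Type*} [NormedAddCommGroup V] [NormedSpace ℝ V]
  [NormedAddCommGroup E] [NormedSpace ℝ E]

/-- The integral of `g` along the line through `x` in direction `v`, from the hyperplane `ker l`
to `x`. When `l v = 1` it is a primitive of `g` in direction `v`. -/
noncomputable def linePrimitive (l : StrongDual ℝ V) (v : V) (g : V → E) (x : V) : E :=
  ∫ s in (0 : ℝ)..l x, g (x + (s - l x) • v)

variable {l : StrongDual ℝ V} {v w : V} {g : V → E}

theorem linePrimitive_eq_smul_integral (x : V) :
    linePrimitive l v g x = l x • ∫ s in (0 : ℝ)..1, g (x + (l x * s - l x) • v) := by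
  simp [linePrimitive,
    intervalIntegral.smul_integral_comp_mul_left fun s => g (x + (s - l x) • v)]

theorem contDiff_linePrimitive {n : ℕ∞} (hg : ContDiff ℝ n g) :
    ContDiff ℝ n (linePrimitive l v g) := by
  rw [funext linePrimitive_eq_smul_integral]
  refine l.contDiff.smul (contDiff_intervalIntegral (hg.comp ?_) 0 1)
  fun_prop

theorem hasLineDerivAt_linePrimitive [CompleteSpace E] (hg : Continuous g) (hl : l v = 1) (x : V) :
    HasLineDerivAt ℝ (linePrimitive l v g) (g x) x v := by
  have h_line (τ : ℝ) : linePrimitive l v g (x + τ • v) =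
      ∫ s in (0 : ℝ)..l x + τ, g (x + (s - l x) • v) := by
    simp only [linePrimitive, map_add, map_smul, hl, smul_eq_mul, mul_one]
    congr! 3
    module
  have h_cont : Continuous fun s : ℝ => g (x + (s - l x) • v) := by fun_prop
  have h_ftc := (h_cont.integral_hasStrictDerivAt 0 (l x + 0)).hasDerivAt.comp_const_add (l x) 0
  simpa [HasLineDerivAt, h_line] using h_ftc

theorem fderiv_linePrimitive_apply [CompleteSpace E] (hg : ContDiff ℝ 1 g) (hl : l v = 1) (x : V) :
    fderiv ℝ (linePrimitive l v g) x v = g x := by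
  rw [← ((contDiff_linePrimitive hg).differentiable one_ne_zero x).lineDeriv_eq_fderiv]
  exact (hasLineDerivAt_linePrimitive hg.continuous hl x).lineDeriv

theorem periodic_linePrimitive (hl : l w = 0) (hg : Periodic g w) :
    Periodic (linePrimitive l v g) w := fun x => by
  simp only [linePrimitive, map_add, hl, add_zero, add_right_comm x w, hg _]

theorem exists_strongDual_apply_eq {ι : Type*} [Finite ι] {v : ι → V}
    (hv : LinearIndependent ℝ v) (c : ι → ℝ) : ∃ l : StrongDual ℝ V, ∀ i, l (v i) = c i := by
  classical
  cases nonempty_fintype ι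
  obtain ⟨l, hl⟩ := SeparatingDual.dualMap_surjective_iff.2
    (linearIndependent_iff_injective_fintypeLinearCombination.1 hv) (Fintype.linearCombination ℝ c)
  refine ⟨l, fun i => ?_⟩
  simpa using LinearMap.congr_fun hl (Pi.single i 1)

theorem exists_contDiff_fderiv_apply_eq [CompleteSpace E] (hv : v ≠ 0) (hg : ContDiff ℝ ∞ g) :
    ∃ G : V → E, ContDiff ℝ ∞ G ∧ ∀ x, fderiv ℝ G x v = g x := by
  obtain ⟨l, hl⟩ := SeparatingDual.exists_eq_one (R := ℝ) hv
  exact ⟨linePrimitive l v g, contDiff_linePrimitive hg,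
    fderiv_linePrimitive_apply (hg.of_le (by simp)) hl⟩

theorem exists_contDiff_fderiv_apply_eq_and_eq_zero [CompleteSpace E]
    (hvw : LinearIndependent ℝ ![v, w]) (hg : ContDiff ℝ ∞ g) (hw : ∀ x, fderiv ℝ g x w = 0) :
    ∃ G : V → E, ContDiff ℝ ∞ G ∧ (∀ x, fderiv ℝ G x v = g x) ∧ ∀ x, fderiv ℝ G x w = 0 := by
  obtain ⟨l, hl⟩ := exists_strongDual_apply_eq hvw ![1, 0]
  have hlv : l v = 1 := hl 0
  have hlw : l w = 0 := hl 1
  have hG : ContDiff ℝ ∞ (linePrimitive l v g) := contDiff_linePrimitive hg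
  refine ⟨linePrimitive l v g, hG, fderiv_linePrimitive_apply (hg.of_le (by simp)) hlv, ?_⟩
  refine fderiv_apply_eq_zero_of_periodic_smul (hG.differentiable (by simp)) fun τ => ?_
  exact periodic_linePrimitive (by simp [hlw])
    (periodic_smul_of_fderiv_apply_eq_zero (hg.differentiable (by simp)) hw τ)

end DirectionalPrimitive

section TwoHamiltonian

variable {V : Type*} [NormedAddCommGroup V] [NormedSpace ℝ V] {n : ℕ}

/-- The divergence of the vector field `∑ i, F i • v i`, for constant directions `v i`. -/
noncomputable def frameDivergence (v : Fin n → V) (F : Fin n → V → ℝ) (x : V) : ℝ :=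
  ∑ i, fderiv ℝ (F i) x (v i)

theorem frameDivergence_sub {v : Fin n → V} {F G : Fin n → V → ℝ}
    (hF : ∀ i, Differentiable ℝ (F i)) (hG : ∀ i, Differentiable ℝ (G i)) (x : V) :
    frameDivergence v (F - G) x = frameDivergence v F x - frameDivergence v G x := by
  simp only [frameDivergence, Pi.sub_apply, ← Finset.sum_sub_distrib]
  refine Finset.sum_congr rfl fun i _ => ?_
  rw [fderiv_sub (hF i x) (hG i x), sub_apply]

theorem frameDivergence_tail {v : Fin (n + 1) → V} {F : Fin (n + 1) → V → ℝ} (hF : F 0 = 0)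
    (x : V) : frameDivergence (Fin.tail v) (Fin.tail F) x = frameDivergence v F x := by
  simp [frameDivergence, Fin.sum_univ_succ, Fin.tail, hF]

/-- The components, with respect to the directions `v`, of the 2-Hamiltonian vector field in the
consecutive directions `v d.castSucc` and `v d.succ` with Hamiltonian `H`. -/
noncomputable def twoHamiltonian (v : Fin (n + 1) → V) (d : Fin n) (H : V → ℝ)
    (i : Fin (n + 1)) (x : V) : ℝ :=
  if i = d.castSucc then -(fderiv ℝ H x (v d.succ))
  else if i = d.succ then fderiv ℝ H x (v d.castSucc)
  else 0

variable {v : Fin (n + 1) → V} {d : Fin n} {H : V → ℝ}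

theorem twoHamiltonian_castSucc_self :
    twoHamiltonian v d H d.castSucc = fun x => -fderiv ℝ H x (v d.succ) := by
  ext x; simp [twoHamiltonian]

theorem twoHamiltonian_succ_self :
    twoHamiltonian v d H d.succ = fun x => fderiv ℝ H x (v d.castSucc) := by
  ext x; simp [twoHamiltonian, Fin.castSucc_lt_succ.ne']

theorem twoHamiltonian_of_ne {i : Fin (n + 1)} (hi : i ≠ d.castSucc) (hi' : i ≠ d.succ) :
    twoHamiltonian v d H i = 0 := by
  ext x; simp [twoHamiltonian, hi, hi']

theorem twoHamiltonian_succ_apply_zero (v : Fin (n + 2) → V) :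
    twoHamiltonian v d.succ H 0 = 0 :=
  twoHamiltonian_of_ne (by simp [Fin.ext_iff]) (Fin.succ_ne_zero _).symm

theorem twoHamiltonian_succ_apply_succ (v : Fin (n + 2) → V) (i : Fin (n + 1)) :
    twoHamiltonian v d.succ H i.succ = twoHamiltonian (Fin.tail v) d H i := by
  ext x
  simp [twoHamiltonian, Fin.tail, Fin.castSucc_succ]

theorem contDiff_twoHamiltonian (hH : ContDiff ℝ ∞ H) (i : Fin (n + 1)) :
    ContDiff ℝ ∞ (twoHamiltonian v d H i) := by
  have h_fderiv (w : V) : ContDiff ℝ ∞ fun x => fderiv ℝ H x w :=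
    (contDiff_infty_iff_fderiv.1 hH).2.clm_apply contDiff_const
  unfold twoHamiltonian
  split_ifs
  exacts [(h_fderiv _).neg, h_fderiv _, contDiff_const]

theorem frameDivergence_twoHamiltonian (hH : ContDiff ℝ 2 H) (x : V) :
    frameDivergence v (twoHamiltonian v d H) x = 0 := by
  rw [frameDivergence, Fintype.sum_eq_add d.castSucc d.succ Fin.castSucc_lt_succ.ne
    fun i hi => by simp [twoHamiltonian_of_ne hi.1 hi.2],
    twoHamiltonian_castSucc_self, twoHamiltonian_succ_self, fderiv_fun_neg, neg_apply,
    fderiv_fderiv_apply_comm hH, neg_add_cancel]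

theorem twoHamiltonian_add {K : V → ℝ} (hH : Differentiable ℝ H) (hK : Differentiable ℝ K)
    (i : Fin (n + 1)) :
    twoHamiltonian v d (H + K) i = twoHamiltonian v d H i + twoHamiltonian v d K i := by
  ext x
  simp only [twoHamiltonian, Pi.add_apply, fderiv_add (hH x) (hK x), add_apply]
  split_ifs <;> ring

theorem exists_twoHamiltonian_frameDivergence_tail {v : Fin (n + 2) → V} (hv : v 1 ≠ 0)
    {F : Fin (n + 2) → V → ℝ} (hF : ∀ i, ContDiff ℝ ∞ (F i))
    (hdiv : ∀ x, frameDivergence v F x = 0) :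
    ∃ H : V → ℝ, ContDiff ℝ ∞ H ∧ F 0 = twoHamiltonian v 0 H 0 ∧
      ∀ x, frameDivergence (Fin.tail v) (Fin.tail (F - twoHamiltonian v 0 H)) x = 0 := by
  obtain ⟨H, hH, hHF⟩ := exists_contDiff_fderiv_apply_eq hv (hF 0).neg
  have h_zero : F 0 = twoHamiltonian v 0 H 0 := by
    ext x; simp [twoHamiltonian, hHF]
  refine ⟨H, hH, h_zero, fun x => ?_⟩
  calc frameDivergence (Fin.tail v) (Fin.tail (F - twoHamiltonian v 0 H)) x
      = frameDivergence v (F - twoHamiltonian v 0 H) x :=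
        frameDivergence_tail (sub_eq_zero.2 h_zero) x
    _ = frameDivergence v F x - frameDivergence v (twoHamiltonian v 0 H) x :=
        frameDivergence_sub (fun i => (hF i).differentiable (by simp))
          (fun i => (contDiff_twoHamiltonian hH i).differentiable (by simp)) x
    _ = 0 := by
        rw [hdiv, frameDivergence_twoHamiltonian (contDiff_infty.1 hH 2), sub_zero]

theorem exists_eq_twoHamiltonian {v : Fin 2 → V} (hv : LinearIndependent ℝ v) {F : Fin 2 → V → ℝ}
    (hF : ∀ i, ContDiff ℝ ∞ (F i)) (hdiv : ∀ x, frameDivergence v F x = 0) :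
    ∃ H : V → ℝ, ContDiff ℝ ∞ H ∧ F = twoHamiltonian v 0 H := by
  obtain ⟨H, hH, hF_zero, hdiv_tail⟩ :=
    exists_twoHamiltonian_frameDivergence_tail (hv.ne_zero 1) hF hdiv
  have hv' : LinearIndependent ℝ ![v 0, v 1] := by convert hv; ext i; fin_cases i <;> rfl
  obtain ⟨K, hK, hK_left, hK_right⟩ := exists_contDiff_fderiv_apply_eq_and_eq_zero hv'
    (g := F 1 - twoHamiltonian v 0 H 1) ((hF 1).sub (contDiff_twoHamiltonian hH 1)) fun x => by
      simpa [frameDivergence, Fin.tail] using hdiv_tail x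
  refine ⟨H + K, hH.add hK, ?_⟩
  ext i x
  rw [twoHamiltonian_add (hH.differentiable (by simp)) (hK.differentiable (by simp))]
  fin_cases i
  · simp [hF_zero, hK_right, twoHamiltonian]
  · simp [hK_left, twoHamiltonian]

theorem exists_eq_sum_twoHamiltonian (hn : 1 ≤ n) {v : Fin (n + 1) → V}
    (hv : LinearIndependent ℝ v) {F : Fin (n + 1) → V → ℝ} (hF : ∀ i, ContDiff ℝ ∞ (F i))
    (hdiv : ∀ x, frameDivergence v F x = 0) :
    ∃ H : Fin n → V → ℝ, (∀ d, ContDiff ℝ ∞ (H d)) ∧ F = ∑ d, twoHamiltonian v d (H d) := by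
  induction n, hn using Nat.le_induction with
  | base =>
    obtain ⟨H, hH, rfl⟩ := exists_eq_twoHamiltonian hv hF hdiv
    exact ⟨fun _ => H, fun _ => hH, by simp⟩
  | succ n _ ih =>
    obtain ⟨H₀, hH₀, hF_zero, hdiv_tail⟩ :=
      exists_twoHamiltonian_frameDivergence_tail (hv.ne_zero 1) hF hdiv
    obtain ⟨H, hH, hF_tail⟩ := ih (v := Fin.tail v)
      (F := Fin.tail (F - twoHamiltonian v 0 H₀)) (hv.comp Fin.succ (Fin.succ_injective _))
      (fun i => (hF i.succ).sub (contDiff_twoHamiltonian hH₀ i.succ)) hdiv_tail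
    refine ⟨Fin.cons H₀ H, Fin.cases hH₀ hH, ?_⟩
    ext i x
    rw [Fin.sum_univ_succ]
    cases i using Fin.cases with
    | zero => simp [hF_zero, twoHamiltonian_succ_apply_zero]
    | succ i =>
      have hF_succ : F i.succ x - twoHamiltonian v 0 H₀ i.succ x =
          ∑ d, twoHamiltonian (Fin.tail v) d (H d) i x := by
        simpa [Fin.tail] using congr($hF_tail i x)
      simp [twoHamiltonian_succ_apply_succ, ← hF_succ]

end TwoHamiltonian

theorem stmt10_general {T : Type*} [NormedAddCommGroup T] [NormedSpace ℝ T] {n : ℕ} (hn : 1 ≤ n)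
    (f : T → (Fin (n + 1) → ℝ) → (Fin (n + 1) → ℝ))
    (hf : ContDiff ℝ (⊤ : ℕ∞) (fun p : T × (Fin (n + 1) → ℝ) => f p.1 p.2))
    (hdiv : ∀ t : T, ∀ y : Fin (n + 1) → ℝ,
      ∑ d : Fin (n + 1), fderiv ℝ (f t) y (Pi.single d 1) d = 0) :
    ∃ H : Fin n → T → (Fin (n + 1) → ℝ) → ℝ,
      (∀ d, ContDiff ℝ (⊤ : ℕ∞) (fun p : T × (Fin (n + 1) → ℝ) => H d p.1 p.2)) ∧
      ∀ t : T, ∀ y : Fin (n + 1) → ℝ, ∀ i : Fin (n + 1),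
        f t y i = ∑ d : Fin n,
          (if i = d.castSucc then -(fderiv ℝ (H d t) y (Pi.single d.succ 1))
           else if i = d.succ then fderiv ℝ (H d t) y (Pi.single d.castSucc 1)
           else 0) := by
  let v (i : Fin (n + 1)) : T × (Fin (n + 1) → ℝ) := (0, Pi.single i 1)
  let F (i : Fin (n + 1)) (p : T × (Fin (n + 1) → ℝ)) : ℝ := f p.1 p.2 i
  have hv : LinearIndependent ℝ v :=
    (Pi.linearIndependent_single_one (Fin (n + 1)) ℝ).map' (LinearMap.inr ℝ T _) (by simp)
  have hF (i) : ContDiff ℝ ∞ (F i) := contDiff_pi.1 hf i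
  have hF_div (p) : frameDivergence v F p = 0 := by
    have h_diff : DifferentiableAt ℝ (f p.1) p.2 :=
      (hf.comp (contDiff_prodMk_right p.1)).differentiable (by simp) p.2
    simp [← hdiv p.1 p.2, frameDivergence, v, F, fderiv_apply h_diff,
      ← fderiv_comp_prodMk_right ((hF _).differentiable (by simp) _)]
  obtain ⟨H, hH, hFH⟩ := exists_eq_sum_twoHamiltonian hn hv hF hF_div
  refine ⟨fun d t y => H d (t, y), hH, fun t y i => ?_⟩
  simpa [fderiv_comp_prodMk_right ((hH _).differentiable (by simp) _), twoHamiltonian]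
    using congr($hFH i (t, y))

/-- Feng–Shang decomposition: A smooth divergence-free
time-dependent vector field `f` on `ℝᴰ` (`D = n+1 ≥ 2`) can be written as a sum
`f = f_{1,2} + ⋯ + f_{D-1,D}` of `D-1` smooth vector fields, where
`f_{d,d+1}` is 2-Hamiltonian in the `d,(d+1)`-th variables: it has nonzero
entries only in positions `d` and `d+1`, given by `(-∂H_d/∂y_{d+1}, ∂H_d/∂y_d)`
for a smooth scalar function `H_d(t,y)`. -/
theorem stmt10 {n : ℕ} (hn : 1 ≤ n)
    (f : ℝ → (Fin (n + 1) → ℝ) → (Fin (n + 1) → ℝ))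
    (hf : ContDiff ℝ (⊤ : ℕ∞) (fun p : ℝ × (Fin (n + 1) → ℝ) => f p.1 p.2))
    (hdiv : ∀ t : ℝ, ∀ y : Fin (n + 1) → ℝ,
      ∑ d : Fin (n + 1), fderiv ℝ (f t) y (Pi.single d 1) d = 0) :
    ∃ H : Fin n → ℝ → (Fin (n + 1) → ℝ) → ℝ,
      (∀ d, ContDiff ℝ (⊤ : ℕ∞) (fun p : ℝ × (Fin (n + 1) → ℝ) => H d p.1 p.2)) ∧
      ∀ t : ℝ, ∀ y : Fin (n + 1) → ℝ, ∀ i : Fin (n + 1),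
        f t y i = ∑ d : Fin n,
          (if i = d.castSucc then -(fderiv ℝ (H d t) y (Pi.single d.succ 1))
           else if i = d.succ then fderiv ℝ (H d t) y (Pi.single d.castSucc 1)
           else 0) :=
  stmt10_general hn f hf hdiv
end

section
/- Let U ⊆ ℝᴰ be compact and let φ_{τ,T,f} be the time-T flow starting at time τ of y' = f(t,y) where f is smooth and separable 2-Hamiltonian in the d,(d+1)-th variables. Then φ_{τ,T,f} lies in the sup-norm closure over U of the set Ψ of compositions of additive coupling modules (measure-preserving neural networks) whose control networks satisfy the compact-Lipschitz and universal-approximation assumptions. -/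
open Set

/-- The upper additive coupling module: `x̂[:s] = x[:s] + f_net(x[s:])`,
`x̂[s:] = x[s:]` (indices `i` with `i < s-1` form the first block). -/
def upModule (D s : ℕ)
    (f : ({i : Fin D // ¬ i.val < s - 1} → ℝ) → ({i : Fin D // i.val < s - 1} → ℝ)) :
    (Fin D → ℝ) → (Fin D → ℝ) :=
  fun x i => if h : i.val < s - 1 then x i + f (fun j => x j.1) ⟨i, h⟩ else x i

/-- The lower additive coupling module: `x̂[:s] = x[:s]`,
`x̂[s:] = x[s:] + f_net(x[:s])`. -/
def lowModule (D s : ℕ)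
    (f : ({i : Fin D // i.val < s - 1} → ℝ) → ({i : Fin D // ¬ i.val < s - 1} → ℝ)) :
    (Fin D → ℝ) → (Fin D → ℝ) :=
  fun x i => if h : i.val < s - 1 then x i else x i + f (fun j => x j.1) ⟨i, h⟩

/-- Assumption on a control family: every member is Lipschitz on every compact
set, and the family can uniformly approximate every smooth function on every
compact set. -/
def IsGoodFamily {ι κ : Type} [Fintype ι] [Fintype κ]
    (F : Set ((ι → ℝ) → (κ → ℝ))) : Prop :=
  (∀ f ∈ F, ∀ K : Set (ι → ℝ), IsCompact K → ∃ L : NNReal, LipschitzOnWith L f K) ∧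
  (∀ V : Set (ι → ℝ), IsCompact V → ∀ g : (ι → ℝ) → (κ → ℝ), ContDiff ℝ (⊤ : ℕ∞) g →
    ∀ ε > 0, ∃ f ∈ F, ∀ x ∈ V, ‖g x - f x‖ ≤ ε)

/-- The set `Ψ` of measure-preserving neural networks: all finite compositions
of upper and lower coupling modules with controls from the families `NN1`, `NN2`. -/
def Psi (D s : ℕ)
    (NN1 : Set (({i : Fin D // ¬ i.val < s - 1} → ℝ) → ({i : Fin D // i.val < s - 1} → ℝ)))
    (NN2 : Set (({i : Fin D // i.val < s - 1} → ℝ) → ({i : Fin D // ¬ i.val < s - 1} → ℝ))) :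
    Set ((Fin D → ℝ) → (Fin D → ℝ)) :=
  { g | ∃ l : List ((Fin D → ℝ) → (Fin D → ℝ)), l ≠ [] ∧
      (∀ m ∈ l, (∃ f ∈ NN1, m = upModule D s f) ∨ (∃ f ∈ NN2, m = lowModule D s f)) ∧
      g = l.foldl (fun h m => m ∘ h) id }

/-!
A vector field whose `i`-th component never depends on `x i` is a sum of fields generating shears
`x ↦ x + e_i h(x)`, `h` independent of `x i`. Its flow is therefore the limit of a one-step
splitting method all of whose steps are compositions of such shears. Proving convergence of the
method with a moving starting point gives continuity of the flow map and locally uniform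
convergence in one go.

A coupling module only realises shears along `e_i` whose profile reads the coordinates of the block
opposite to `i`. Conjugating such a shear along `e_d` with profile `exp (v ⬝ᵥ x)` by a linear shear
along some `e_i` of the opposite block yields the profile `exp (w ⬝ᵥ x)` for every `w` with
`w d = 0` and `w i ≠ 0`. By continuity the last condition can be dropped, and by the
Stone–Weierstrass theorem the exponentials span a dense set of profiles.
-/

open Filter Topology
open scoped ContDiff NNReal

section OneStepMethod

theorem le_mul_exp_of_step_le {u : ℕ → ℝ} {a b r : ℝ} {n : ℕ} (ha : 0 ≤ a) (hb : 0 ≤ b)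
    (hu₀ : 0 ≤ u 0) (hu : ∀ k < n, u k ≤ r → u (k + 1) ≤ (1 + a) * u k + b)
    (hr : (u 0 + n * b) * Real.exp (n * a) ≤ r) {k : ℕ} (hk : k ≤ n) :
    u k ≤ (u 0 + k * b) * Real.exp (k * a) := by
  induction k with
  | zero => simp
  | succ k ih =>
    have hkn : (k : ℝ) ≤ n := by exact_mod_cast (Nat.le_succ k).trans hk
    have ih := ih ((Nat.le_succ k).trans hk)
    have hur : u k ≤ r := ih.trans (le_trans (by gcongr) hr)
    have hexp : 1 + a ≤ Real.exp a := by linarith [Real.add_one_le_exp a]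
    calc u (k + 1) ≤ (1 + a) * u k + b := hu k hk hur
      _ ≤ (1 + a) * ((u 0 + k * b) * Real.exp (k * a)) + b := by gcongr
      _ ≤ Real.exp a * ((u 0 + k * b) * Real.exp (k * a)) + b * Real.exp ((k + 1) * a) := by
          gcongr
          exact le_mul_of_one_le_right hb (Real.one_le_exp (by positivity))
      _ = (u 0 + (k + 1 : ℕ) * b) * Real.exp ((k + 1 : ℕ) * a) := by
          push_cast
          rw [add_one_mul (k : ℝ) a, Real.exp_add]
          ring

theorem tendstoLocallyUniformly_of_forall_tendsto_prod {α β κ : Type*} [TopologicalSpace α]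
    [UniformSpace β] {F : κ → α → β} {f : α → β} {l : Filter κ} [l.NeBot]
    (h : ∀ x, Tendsto (fun p : κ × α => F p.1 p.2) (l ×ˢ 𝓝 x) (𝓝 (f x))) :
    TendstoLocallyUniformly F f l := by
  have hf : Continuous f := by
    refine continuous_iff_continuousAt.2 fun x =>
      (closed_nhds_basis (f x)).tendsto_right_iff.2 fun V ⟨hV, hVc⟩ => ?_
    have hmem : ∀ᶠ p : α × κ in 𝓝 x ×ˢ l, F p.2 p.1 ∈ V :=
      ((h x).comp tendsto_prod_swap).eventually_mem hV
    filter_upwards [hmem.curry] with y hy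
    exact hVc.mem_of_tendsto ((h y).comp (tendsto_id.prodMk tendsto_const_nhds)) hy
  rw [tendstoLocallyUniformly_iff_forall_tendsto]
  intro x
  exact (hf.continuousAt.tendsto.comp tendsto_snd).prodMk_nhds (h x) |>.mono_right
    (nhds_prod_eq (x := f x) (y := f x) ▸ nhds_le_uniformity (f x))

variable {E : Type*} [NormedAddCommGroup E] [NormedSpace ℝ E]

theorem norm_sub_add_smul_le {γ γ' : ℝ → E} {a b C : ℝ} {v : E} (hab : a ≤ b)
    (hγ : ∀ t ∈ Icc a b, HasDerivWithinAt γ (γ' t) (Icc a b) t)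
    (hC : ∀ t ∈ Icc a b, ‖γ' t - v‖ ≤ C) : ‖γ b - (γ a + (b - a) • v)‖ ≤ C * (b - a) := by
  have h := (convex_Icc a b).norm_image_sub_le_of_norm_hasDerivWithin_le
    (f := fun t => γ t - t • v) (f' := fun t => γ' t - v)
    (fun t ht => by simpa using (hγ t ht).fun_sub ((hasDerivWithinAt_id t _).smul_const v)) hC
    (left_mem_Icc.2 hab) (right_mem_Icc.2 hab)
  rw [Real.norm_of_nonneg (sub_nonneg.2 hab)] at h
  convert h using 2
  rw [sub_smul]
  abel

theorem exists_lipschitzOnWith_of_isIntegralCurveOn {γ : ℝ → E} {v : ℝ → E → E} {s : Set ℝ}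
    (hs : IsCompact s) (hsc : Convex ℝ s) (hv : Continuous fun p : ℝ × E => v p.1 p.2)
    (hγ : IsIntegralCurveOn γ v s) : ∃ M, LipschitzOnWith M γ s := by
  obtain ⟨M, hM⟩ := hs.exists_bound_of_continuousOn
    (hv.comp_continuousOn (continuousOn_id.prodMk hγ.continuousOn))
  exact ⟨M.toNNReal, hsc.lipschitzOnWith_of_nnnorm_hasDerivWithin_le hγ fun t ht =>
    NNReal.le_toNNReal_of_coe_le (hM t ht)⟩

/-- The numerical solution after `k` steps of size `h`, starting from `x` at time `0`, of the
one-step method with increment function `Φ`: at time `t` the method moves `y` to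
`y + h • Φ (h, t, y)`. -/
def oneStep (Φ : ℝ × ℝ × E → E) (h : ℝ) : ℕ → E → E
  | 0, x => x
  | k + 1, x => oneStep Φ h k x + h • Φ (h, k * h, oneStep Φ h k x)

variable {Φ : ℝ × ℝ × E → E} {γ : ℝ → E} {T : ℝ}

theorem exists_truncation_error_le (hΦ : LocallyLipschitz Φ)
    (hγ : IsIntegralCurveOn γ (fun t x => Φ (0, t, x)) (Icc 0 T)) :
    ∃ C : ℝ≥0, ∀ t h, 0 ≤ t → 0 ≤ h → t + h ≤ T →
      ‖γ (t + h) - (γ t + h • Φ (h, t, γ t))‖ ≤ C * h * h := by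
  obtain ⟨M, hM⟩ := exists_lipschitzOnWith_of_isIntegralCurveOn isCompact_Icc (convex_Icc 0 T)
    (hΦ.continuous.comp (Continuous.prodMk continuous_const continuous_id)) hγ
  have hcurve : LipschitzOnWith (max 1 (max 1 M)) (fun p : ℝ × ℝ => (p.1, p.2, γ p.2))
      (Icc 0 T ×ˢ Icc 0 T) := by
    have hsnd : LipschitzOnWith 1 (Prod.snd : ℝ × ℝ → ℝ) (Icc 0 T ×ˢ Icc 0 T) :=
      LipschitzWith.prod_snd.lipschitzOnWith
    have hγsnd := hM.comp hsnd fun p hp => hp.2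
    rw [mul_one] at hγsnd
    exact LipschitzWith.prod_fst.lipschitzOnWith.prodMk (hsnd.prodMk hγsnd)
  have hcompact : IsCompact ((fun p : ℝ × ℝ => (p.1, p.2, γ p.2)) '' (Icc 0 T ×ˢ Icc 0 T)) :=
    (isCompact_Icc.prod isCompact_Icc).image_of_continuousOn hcurve.continuousOn
  obtain ⟨L, hL⟩ := hΦ.locallyLipschitzOn.exists_lipschitzOnWith_of_compact hcompact
  have hG := hL.comp hcurve (mapsTo_image _ _)
  refine ⟨L * max 1 (max 1 M), fun t h ht hh hth => ?_⟩
  have hsub : Icc t (t + h) ⊆ Icc 0 T := Icc_subset_Icc ht hth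
  have hderiv : ∀ u ∈ Icc t (t + h), ‖Φ (0, u, γ u) - Φ (h, t, γ t)‖ ≤
      (L * max 1 (max 1 M) : ℝ≥0) * h := by
    intro u hu
    have hdist : dist ((0 : ℝ), u) (h, t) ≤ h := by
      rw [Prod.dist_eq, Real.dist_eq, Real.dist_eq, zero_sub, abs_neg, abs_of_nonneg hh,
        abs_of_nonneg (sub_nonneg.2 hu.1)]
      exact max_le le_rfl (by linarith [hu.2])
    rw [← dist_eq_norm]
    exact (hG.dist_le_mul (0, u) ⟨⟨le_rfl, by linarith⟩, hsub hu⟩ (h, t)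
      ⟨⟨hh, by linarith⟩, ⟨ht, by linarith⟩⟩).trans (by gcongr)
  simpa using norm_sub_add_smul_le (by linarith) (hγ.mono hsub) hderiv

theorem norm_step_sub_le {L : ℝ≥0} {s : Set E} {C h t : ℝ} {y z z' : E} (hh : 0 ≤ h)
    (hL : LipschitzOnWith L (fun x => Φ (h, t, x)) s) (hy : y ∈ s) (hz : z ∈ s)
    (hz' : ‖z' - (z + h • Φ (h, t, z))‖ ≤ C) :
    ‖y + h • Φ (h, t, y) - z'‖ ≤ (1 + h * L) * ‖y - z‖ + C := by
  have hsplit : y + h • Φ (h, t, y) - z' =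
      (y - z) + h • (Φ (h, t, y) - Φ (h, t, z)) - (z' - (z + h • Φ (h, t, z))) := by
    rw [smul_sub]
    abel
  have hΦ := hL.norm_sub_le hy hz
  calc ‖y + h • Φ (h, t, y) - z'‖
      ≤ ‖y - z‖ + ‖h • (Φ (h, t, y) - Φ (h, t, z))‖ + ‖z' - (z + h • Φ (h, t, z))‖ := by
        rw [hsplit]
        exact (norm_sub_le _ _).trans (by gcongr; exact norm_add_le _ _)
    _ ≤ ‖y - z‖ + h * (L * ‖y - z‖) + C := by
        rw [norm_smul, Real.norm_of_nonneg hh]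
        gcongr
    _ = (1 + h * L) * ‖y - z‖ + C := by ring

theorem exists_oneStep_succ_error_le [ProperSpace E] (hΦ : LocallyLipschitz Φ)
    (hγ : IsIntegralCurveOn γ (fun t x => Φ (0, t, x)) (Icc 0 T)) :
    ∃ L C : ℝ≥0, ∀ (h : ℝ) (k : ℕ) (x : E), 0 ≤ h → (k + 1 : ℕ) * h ≤ T →
      ‖oneStep Φ h k x - γ (k * h)‖ ≤ 1 →
      ‖oneStep Φ h (k + 1) x - γ ((k + 1 : ℕ) * h)‖ ≤
        (1 + h * L) * ‖oneStep Φ h k x - γ (k * h)‖ + C * h * h := by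
  have htube : IsCompact (Metric.cthickening 1 (γ '' Icc 0 T)) :=
    (isCompact_Icc.image_of_continuousOn hγ.continuousOn).cthickening
  obtain ⟨L, hL⟩ := hΦ.locallyLipschitzOn.exists_lipschitzOnWith_of_compact
    (isCompact_Icc.prod (isCompact_Icc.prod htube) :
      IsCompact (Icc 0 T ×ˢ Icc 0 T ×ˢ Metric.cthickening 1 (γ '' Icc 0 T)))
  obtain ⟨C, hC⟩ := exists_truncation_error_le hΦ hγ
  refine ⟨L, C, fun h k x hh hkT hclose => ?_⟩
  rw [Nat.cast_succ, add_one_mul] at hkT ⊢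
  have hk : 0 ≤ k * h := by positivity
  have hmem : γ (k * h) ∈ γ '' Icc 0 T := mem_image_of_mem γ ⟨hk, by linarith⟩
  have hLip : LipschitzOnWith L (fun y => Φ (h, k * h, y))
      (Metric.cthickening 1 (γ '' Icc 0 T)) := by
    refine LipschitzOnWith.of_dist_le_mul fun y hy z hz => ?_
    simpa using hL.dist_le_mul (h, k * h, y) ⟨⟨hh, by linarith⟩, ⟨hk, by linarith⟩, hy⟩
      (h, k * h, z) ⟨⟨hh, by linarith⟩, ⟨hk, by linarith⟩, hz⟩
  refine norm_step_sub_le hh hLip ?_ (Metric.self_subset_cthickening _ hmem)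
    (hC (k * h) h hk hh hkT)
  exact Metric.mem_cthickening_of_dist_le _ _ _ _ hmem (by rwa [dist_eq_norm])

theorem exists_oneStep_error_le [ProperSpace E] (hΦ : LocallyLipschitz Φ) (hT : 0 ≤ T)
    (hγ : IsIntegralCurveOn γ (fun t x => Φ (0, t, x)) (Icc 0 T)) :
    ∃ L C : ℝ≥0, ∀ n : ℕ, 0 < n → ∀ x,
      (‖x - γ 0‖ + T * C * (T / n)) * Real.exp (T * L) ≤ 1 →
      ‖oneStep Φ (T / n) n x - γ T‖ ≤ (‖x - γ 0‖ + T * C * (T / n)) * Real.exp (T * L) := by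
  obtain ⟨L, C, hLC⟩ := exists_oneStep_succ_error_le hΦ hγ
  refine ⟨L, C, fun n hn x hsmall => ?_⟩
  set h := T / n with hdef
  have hh : 0 ≤ h := by positivity
  have hnh : n * h = T := by rw [hdef]; field_simp
  have hsucc (k : ℕ) (hk : k < n) : ((k + 1 : ℕ) : ℝ) * h ≤ T := by
    rw [← hnh]
    gcongr
    exact hk
  have hbound : (‖x - γ 0‖ + n * (C * h * h)) * Real.exp (n * (h * L)) =
      (‖x - γ 0‖ + T * C * h) * Real.exp (T * L) := by
    rw [← hnh]
    ring_nf
  have herror := le_mul_exp_of_step_le (u := fun k => ‖oneStep Φ h k x - γ (k * h)‖) (r := 1)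
    (by positivity) (by positivity) (norm_nonneg _) (fun k hk => hLC h k x hh (hsucc k hk))
    (by simpa [oneStep, hbound] using hsmall) le_rfl
  simpa [oneStep, hbound, hnh] using herror

theorem tendsto_oneStep [ProperSpace E] (hΦ : LocallyLipschitz Φ) (hT : 0 ≤ T)
    (hγ : IsIntegralCurveOn γ (fun t x => Φ (0, t, x)) (Icc 0 T)) :
    Tendsto (fun p : ℕ × E => oneStep Φ (T / p.1) p.1 p.2) (atTop ×ˢ 𝓝 (γ 0)) (𝓝 (γ T)) := by
  obtain ⟨L, C, hLC⟩ := exists_oneStep_error_le hΦ hT hγ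
  have hstart : Tendsto (fun p : ℕ × E => ‖p.2 - γ 0‖) (atTop ×ˢ 𝓝 (γ 0)) (𝓝 0) :=
    tendsto_iff_norm_sub_tendsto_zero.1 tendsto_snd
  have hstep : Tendsto (fun p : ℕ × E => T / (p.1 : ℝ)) (atTop ×ˢ 𝓝 (γ 0)) (𝓝 0) :=
    (tendsto_const_div_atTop_nhds_zero_nat T).comp tendsto_fst
  have hbound : Tendsto (fun p : ℕ × E =>
      (‖p.2 - γ 0‖ + T * C * (T / p.1)) * Real.exp (T * L)) (atTop ×ˢ 𝓝 (γ 0)) (𝓝 0) := by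
    simpa using (hstart.add (hstep.const_mul (T * C))).mul_const (Real.exp (T * L))
  rw [tendsto_iff_norm_sub_tendsto_zero]
  refine squeeze_zero' (Eventually.of_forall fun p => norm_nonneg _) ?_ hbound
  filter_upwards [hbound.eventually_le_const zero_lt_one,
    tendsto_fst.eventually (eventually_gt_atTop 0)] with p hp hp₀ using hLC p.1 hp₀ p.2 hp

theorem tendstoLocallyUniformly_oneStep [ProperSpace E] {X : ℝ → E → E}
    (hΦ : LocallyLipschitz Φ) (hT : 0 ≤ T) (hX₀ : ∀ x, X 0 x = x)
    (hX : ∀ x, IsIntegralCurveOn (fun t => X t x) (fun t y => Φ (0, t, y)) (Icc 0 T)) :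
    TendstoLocallyUniformly (fun n : ℕ => oneStep Φ (T / n) n) (X T) atTop :=
  tendstoLocallyUniformly_of_forall_tendsto_prod fun x => by
    simpa only [hX₀] using tendsto_oneStep hΦ hT (hX x)

variable {𝒯 : Set C(E, E)}

theorem exists_mem_coe_eq_oneStep (hcomp : ∀ F ∈ 𝒯, ∀ G ∈ 𝒯, F.comp G ∈ 𝒯)
    (hΦ : ∀ h t, ∃ F ∈ 𝒯, ⇑F = fun x => x + h • Φ (h, t, x)) (h : ℝ) (k : ℕ) :
    ∃ F ∈ 𝒯, ⇑F = oneStep Φ h k := by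
  induction k with
  | zero => simpa [funext_iff, oneStep] using hΦ 0 0
  | succ k ih =>
    obtain ⟨F, hF, hFk⟩ := ih
    obtain ⟨G, hG, hGk⟩ := hΦ h (k * h)
    exact ⟨G.comp F, hcomp G hG F hF, by rw [ContinuousMap.coe_comp, hFk, hGk]; rfl⟩

theorem exists_mem_coe_eq_flow_of_nonneg [ProperSpace E] (hclosed : IsClosed 𝒯)
    (hcomp : ∀ F ∈ 𝒯, ∀ G ∈ 𝒯, F.comp G ∈ 𝒯) (hLip : LocallyLipschitz Φ)
    (hΦ : ∀ h t, ∃ F ∈ 𝒯, ⇑F = fun x => x + h • Φ (h, t, x)) {X : ℝ → E → E} (hT : 0 ≤ T)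
    (hX₀ : ∀ x, X 0 x = x)
    (hX : ∀ x, IsIntegralCurveOn (fun t => X t x) (fun t y => Φ (0, t, y)) (Icc 0 T)) :
    ∃ F ∈ 𝒯, ⇑F = X T := by
  choose F hF hFn using fun n : ℕ => exists_mem_coe_eq_oneStep hcomp hΦ (T / n) n
  have hconv : TendstoLocallyUniformly (fun n => ⇑(F n)) (X T) atTop := by
    simpa only [hFn] using tendstoLocallyUniformly_oneStep hLip hT hX₀ hX
  have hcont : Continuous (X T) := hconv.continuous (.of_forall fun n => (F n).continuous)
  exact ⟨⟨X T, hcont⟩, hclosed.mem_of_tendsto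
    (ContinuousMap.tendsto_of_tendstoLocallyUniformly hconv)
    (.of_forall hF), rfl⟩

end OneStepMethod

section CompactClosure

theorem mem_closure_iff_forall_isCompact {α β : Type*} [TopologicalSpace α]
    [PseudoMetricSpace β] {S : Set C(α, β)} {f : C(α, β)} :
    f ∈ closure S ↔ ∀ K, IsCompact K → ∀ ε > 0, ∃ g ∈ S, ∀ x ∈ K, dist (f x) (g x) < ε := by
  have hbasis := nhds_basis_uniformity'
    (Metric.uniformity_basis_dist.compactConvergenceUniformity (α := α) (β := β)) (x := f)
  rw [mem_closure_iff_nhds_basis' hbasis]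
  constructor
  · intro h K hK ε hε
    obtain ⟨g, hg, hgS⟩ := h (K, ε) ⟨hK, hε⟩
    exact ⟨g, hgS, hg⟩
  · rintro h ⟨K, ε⟩ ⟨hK, hε⟩
    obtain ⟨g, hgS, hg⟩ := h K hK ε hε
    exact ⟨g, hg, hgS⟩

variable {α β : Type*} [TopologicalSpace α] [PseudoMetricSpace β]

/-- The continuous maps that are uniform limits on every compact set of the functions in `S`,
which need not be continuous themselves. -/
def compactClosure (S : Set (α → β)) : Set C(α, β) :=
  {F | ∀ K, IsCompact K → ∀ ε > 0, ∃ g ∈ S, ∀ x ∈ K, dist (F x) (g x) ≤ ε}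

theorem isClosed_compactClosure (S : Set (α → β)) : IsClosed (compactClosure S) := by
  refine isClosed_of_closure_subset fun F hF K hK ε hε => ?_
  obtain ⟨G, hG, hFG⟩ :=
    mem_closure_iff_forall_isCompact.1 hF K hK (ε / 2) (half_pos hε)
  obtain ⟨g, hg, hGg⟩ := hG K hK (ε / 2) (half_pos hε)
  refine ⟨g, hg, fun x hx => ?_⟩
  linarith [dist_triangle (F x) (G x) (g x), hFG x hx, hGg x hx]

theorem comp_mem_compactClosure [ProperSpace β] {S : Set (β → β)}
    (hS : ∀ g ∈ S, ∀ g' ∈ S, g ∘ g' ∈ S) {F G : C(β, β)} (hF : F ∈ compactClosure S)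
    (hG : G ∈ compactClosure S) : F.comp G ∈ compactClosure S := by
  intro K hK ε hε
  have hK' : IsCompact (Metric.cthickening 1 (G '' K)) :=
    (hK.image G.continuous).cthickening
  obtain ⟨δ, hδ, hFδ⟩ := Metric.uniformContinuousOn_iff_le.1
    (hK'.uniformContinuousOn_of_continuous F.continuous.continuousOn) (ε / 2) (half_pos hε)
  obtain ⟨f, hf, hFf⟩ := hF _ hK' (ε / 2) (half_pos hε)
  obtain ⟨g, hg, hGg⟩ := hG K hK (min δ 1) (lt_min hδ one_pos)
  refine ⟨f ∘ g, hS f hf g hg, fun x hx => ?_⟩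
  have hGx : G x ∈ G '' K := mem_image_of_mem G hx
  have hgx : g x ∈ Metric.cthickening 1 (G '' K) :=
    Metric.mem_cthickening_of_dist_le _ _ _ _ hGx
      ((dist_comm _ _).trans_le ((hGg x hx).trans (min_le_right _ _)))
  calc dist (F (G x)) (f (g x)) ≤ dist (F (G x)) (F (g x)) + dist (F (g x)) (f (g x)) :=
        dist_triangle _ _ _
    _ ≤ ε / 2 + ε / 2 := add_le_add
        (hFδ _ (Metric.self_subset_cthickening _ hGx) _ hgx ((hGg x hx).trans (min_le_left _ _)))
        (hFf _ hgx)
    _ = ε := add_halves ε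

end CompactClosure

section Shear

variable {ι : Type*} [DecidableEq ι]

/-- The shear along the `i`-th coordinate with profile `h`, of use when `h` does not depend on
that coordinate. -/
def shear (i : ι) (h : C(ι → ℝ, ℝ)) : C(ι → ℝ, ι → ℝ) where
  toFun x := x + (Pi.single i (h x) : ι → ℝ)
  continuous_toFun := continuous_id.add ((continuous_single i).comp h.continuous)

theorem shear_apply (i : ι) (h : C(ι → ℝ, ℝ)) (x : ι → ℝ) : shear i h x = x + Pi.single i (h x) :=
  rfl

theorem continuous_shear [LocallyCompactSpace (ι → ℝ)] (i : ι) : Continuous (shear i) :=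
  ContinuousMap.continuous_of_continuous_uncurry _ (by
    simp only [Function.uncurry_def, shear_apply]
    exact continuous_snd.add ((continuous_single (A := fun _ => ℝ) i).comp continuous_eval))

theorem apply_add_single_of_dependsOn {β : Type*} {i : ι} {s : Set ι} {h : (ι → ℝ) → β}
    (hh : DependsOn h s) (hi : i ∉ s) (x : ι → ℝ) (c : ℝ) : h (x + Pi.single i c) = h x :=
  hh fun j hj => by simp [ne_of_mem_of_not_mem hj hi]

theorem shear_zero (i : ι) : shear i 0 = ContinuousMap.id _ := by
  ext x
  simp [shear_apply]

theorem shear_comp_shear_self {i : ι} {s : Set ι} {f : C(ι → ℝ, ℝ)} (hf : DependsOn f s)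
    (hi : i ∉ s) (g : C(ι → ℝ, ℝ)) :
    (shear i f).comp (shear i g) = shear i (f + g) := by
  ext1 x
  simp only [ContinuousMap.comp_apply, shear_apply, ContinuousMap.add_apply,
    apply_add_single_of_dependsOn hf hi, add_assoc, ← Pi.single_add, add_comm (g x)]

theorem shear_conj {i d : ι} {s : Set ι} {f : C(ι → ℝ, ℝ)} (hf : DependsOn f s)
    (hi : i ∉ s) (hd : d ∉ s) (g : C(ι → ℝ, ℝ)) :
    ((shear i (-f)).comp (shear d g)).comp (shear i f) = shear d (g.comp (shear i f)) := by
  ext1 x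
  simp only [ContinuousMap.comp_apply, shear_apply, ContinuousMap.neg_apply,
    apply_add_single_of_dependsOn hf hi, apply_add_single_of_dependsOn hf hd, Pi.single_neg]
  abel

/-- The projection `x ↦ Function.update x d 0` onto the hyperplane `x d = 0`. -/
def updateZero (d : ι) : C(ι → ℝ, ι → ℝ) where
  toFun x := Function.update x d 0
  continuous_toFun := continuous_id.update d continuous_const

theorem dependsOn_comp_updateZero (q : C(ι → ℝ, ℝ)) (d : ι) :
    DependsOn (q.comp (updateZero d)) {d}ᶜ := by
  intro x y hxy
  refine congrArg q (funext fun j => ?_)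
  rcases eq_or_ne j d with rfl | hj
  · simp [updateZero]
  · simpa [updateZero, hj] using hxy j hj

theorem comp_updateZero_of_dependsOn {d : ι} {q : C(ι → ℝ, ℝ)} (hq : DependsOn q {d}ᶜ) :
    q.comp (updateZero d) = q :=
  ContinuousMap.ext fun _ => hq fun _ hj => Function.update_of_ne hj _ _

end Shear

section ExpRidge

variable {ι : Type*} [Fintype ι]

/-- The linear form `x ↦ w ⬝ᵥ x` as a continuous map. -/
def linearForm (w : ι → ℝ) : C(ι → ℝ, ℝ) where
  toFun x := w ⬝ᵥ x
  continuous_toFun := by fun_prop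

theorem linearForm_apply (w x : ι → ℝ) : linearForm w x = w ⬝ᵥ x := rfl

theorem linearForm_neg (w : ι → ℝ) : linearForm (-w) = -linearForm w :=
  ContinuousMap.ext fun x => neg_dotProduct w x

theorem contDiff_linearForm (w : ι → ℝ) : ContDiff ℝ ∞ (linearForm w) :=
  ContDiff.sum fun i _ => contDiff_const.mul (contDiff_apply ℝ ℝ i)

theorem dependsOn_linearForm (w : ι → ℝ) : DependsOn (linearForm w) (Function.support w) := by
  intro x y hxy
  simp only [linearForm_apply, dotProduct]
  refine Finset.sum_congr rfl fun i _ => ?_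
  by_cases hi : w i = 0
  · simp [hi]
  · rw [hxy i hi]

/-- The exponential ridge function `x ↦ exp (w ⬝ᵥ x)`; these span a dense subalgebra of the
continuous functions. -/
noncomputable def expRidge (w : ι → ℝ) : C(ι → ℝ, ℝ) where
  toFun x := Real.exp (linearForm w x)
  continuous_toFun := by fun_prop

theorem expRidge_apply (w x : ι → ℝ) : expRidge w x = Real.exp (w ⬝ᵥ x) := rfl

theorem contDiff_expRidge (w : ι → ℝ) : ContDiff ℝ ∞ (expRidge w) :=
  (contDiff_linearForm w).exp

theorem dependsOn_expRidge (w : ι → ℝ) : DependsOn (expRidge w) (Function.support w) :=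
  fun _ _ hxy => congrArg Real.exp (dependsOn_linearForm w hxy)

theorem continuous_expRidge : Continuous (expRidge (ι := ι)) :=
  ContinuousMap.continuous_of_continuous_uncurry _ (by
    simp only [Function.uncurry_def, expRidge_apply]
    fun_prop)

theorem expRidge_comp_shear [DecidableEq ι] (v u : ι → ℝ) (i : ι) :
    (expRidge v).comp (shear i (linearForm u)) = expRidge (v + v i • u) := by
  ext x
  simp only [ContinuousMap.comp_apply, expRidge_apply, shear_apply, linearForm_apply,
    dotProduct_add, dotProduct_single, add_dotProduct, smul_dotProduct, smul_eq_mul]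

theorem expRidge_comp_updateZero [DecidableEq ι] (w : ι → ℝ) (d : ι) :
    (expRidge w).comp (updateZero d) = expRidge (Function.update w d 0) := by
  ext x
  simp only [ContinuousMap.comp_apply, expRidge_apply, dotProduct]
  congr 1
  refine Finset.sum_congr rfl fun j _ => ?_
  rcases eq_or_ne j d with rfl | hj
  · simp [updateZero]
  · simp [updateZero, hj]

theorem dense_of_separatesPoints {X : Type*} [TopologicalSpace X] {A : Subalgebra ℝ C(X, ℝ)}
    (hA : A.SeparatesPoints) : Dense (A : Set C(X, ℝ)) := fun f =>
  mem_closure_iff_forall_isCompact.2 fun K hK ε hε => by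
    obtain ⟨g, hg, hgK⟩ :=
      ContinuousMap.exists_mem_subalgebra_near_continuous_of_isCompact_of_separatesPoints hA f hK hε
    exact ⟨g, hg, fun x hx => (dist_comm _ _).trans_lt (hgK x hx)⟩

theorem closure_range_expRidge_subset :
    (Submonoid.closure (range (expRidge (ι := ι))) : Set C(ι → ℝ, ℝ)) ⊆ range expRidge := by
  let M : Submonoid C(ι → ℝ, ℝ) :=
    { carrier := range expRidge
      one_mem' := ⟨0, by ext x; simp [expRidge_apply]⟩
      mul_mem' := by
        rintro _ _ ⟨w, rfl⟩ ⟨w', rfl⟩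
        exact ⟨w + w', by ext x; simp [expRidge_apply, add_dotProduct, Real.exp_add]⟩ }
  exact Submonoid.closure_le (S := M).2 subset_rfl

theorem separatesPoints_adjoin_expRidge :
    (Algebra.adjoin ℝ (range (expRidge (ι := ι)))).SeparatesPoints := by
  classical
  intro x y hxy
  obtain ⟨i, hi⟩ := Function.ne_iff.1 hxy
  refine ⟨_, ⟨expRidge (Pi.single i 1), Algebra.subset_adjoin (mem_range_self _), rfl⟩, ?_⟩
  simpa [expRidge_apply] using hi

theorem dense_span_expRidge :
    Dense (Submodule.span ℝ (range (expRidge (ι := ι))) : Set C(ι → ℝ, ℝ)) := by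
  rw [← Algebra.adjoin_eq_span_of_subset ℝ
    (closure_range_expRidge_subset.trans Submodule.subset_span)]
  exact dense_of_separatesPoints separatesPoints_adjoin_expRidge

end ExpRidge

section BlockShear

variable {ι κ : Type*} [Fintype ι] [DecidableEq ι]

/-- `𝒯` is a set of self-maps of `ι → ℝ`, closed in the compact-open topology and under
composition, that contains all shears along a coordinate `i` whose profile is smooth and reads
only coordinates outside the block of `i`, the blocks being the fibres of `c`. -/
structure IsBlockShearClosed (c : ι → κ) (𝒯 : Set C(ι → ℝ, ι → ℝ)) : Prop where
  isClosed : IsClosed 𝒯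
  comp_mem : ∀ F ∈ 𝒯, ∀ G ∈ 𝒯, F.comp G ∈ 𝒯
  shear_mem : ∀ (i : ι) (b : C(ι → ℝ, ℝ)), ContDiff ℝ ∞ b → DependsOn b {j | c j ≠ c i} →
    shear i b ∈ 𝒯

namespace IsBlockShearClosed

variable {c : ι → κ} {𝒯 : Set C(ι → ℝ, ι → ℝ)}

theorem shear_linearForm_mem (h𝒯 : IsBlockShearClosed c 𝒯) {i : ι} {u : ι → ℝ}
    (hu : Function.support u ⊆ {j | c j ≠ c i}) : shear i (linearForm u) ∈ 𝒯 :=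
  h𝒯.shear_mem i _ (contDiff_linearForm u) ((dependsOn_linearForm u).mono hu)

theorem shear_smul_expRidge_mem (h𝒯 : IsBlockShearClosed c 𝒯) {i d : ι} (hid : c i ≠ c d) (a : ℝ)
    {w : ι → ℝ} (hwd : w d = 0) (hwi : w i ≠ 0) : shear d (a • expRidge w) ∈ 𝒯 := by
  classical
  set u := (w i)⁻¹ • indicator {j | c j = c d} w with hu
  set v := indicator {j | c j = c d}ᶜ w with hv
  have hw : v + v i • u = w := by
    rw [hu, hv, indicator_of_mem (show i ∈ {j | c j = c d}ᶜ from hid), smul_inv_smul₀ hwi,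
      indicator_compl_add_self]
  have hsupp : Function.support u ⊆ {j | c j = c d ∧ j ≠ d} := fun j hj =>
    ⟨by_contra fun hjd => hj (by simp [hu, hjd]), fun hjd => hj (by simp [hu, hjd, hwd])⟩
  have hsupp' : Function.support u ⊆ {j | c j ≠ c i} := fun j hj =>
    (hsupp hj).1.trans_ne hid.symm
  have hridge : shear d (a • expRidge v) ∈ 𝒯 := by
    refine h𝒯.shear_mem d _ ((contDiff_expRidge v).const_smul a) fun x y hxy => ?_
    exact congrArg (a * ·) ((dependsOn_expRidge v).mono support_indicator_subset hxy)
  have hconj := shear_conj ((dependsOn_linearForm u).mono hsupp) (fun hi => hid hi.1)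
    (fun hd => hd.2 rfl) (a • expRidge v)
  rw [ContinuousMap.smul_comp, expRidge_comp_shear, hw, ← linearForm_neg] at hconj
  rw [← hconj]
  exact h𝒯.comp_mem _ (h𝒯.comp_mem _ (h𝒯.shear_linearForm_mem (by rwa [Function.support_neg])) _
    hridge) _ (h𝒯.shear_linearForm_mem hsupp')

theorem shear_smul_expRidge_comp_updateZero_mem (h𝒯 : IsBlockShearClosed c 𝒯) {i d : ι}
    (hid : c i ≠ c d) (a : ℝ) (w : ι → ℝ) :
    shear d (a • (expRidge w).comp (updateZero d)) ∈ 𝒯 := by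
  have hclosed : IsClosed {w | shear d (a • expRidge (Function.update w d 0)) ∈ 𝒯} :=
    h𝒯.isClosed.preimage ((continuous_shear d).comp
      ((continuous_expRidge.comp (continuous_id.update d continuous_const)).const_smul a))
  have hdense : Dense {w : ι → ℝ | w i ≠ 0} :=
    (dense_compl_singleton 0).preimage (isOpenMap_eval i)
  rw [expRidge_comp_updateZero]
  refine hclosed.closure_subset_iff.2 (fun w hw => ?_) (hdense w)
  exact h𝒯.shear_smul_expRidge_mem hid a (by simp)
    (by rwa [Function.update_of_ne (ne_of_apply_ne c hid)])

theorem shear_comp_updateZero_mem (h𝒯 : IsBlockShearClosed c 𝒯) {i d : ι} (hid : c i ≠ c d)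
    (q : C(ι → ℝ, ℝ)) : shear d (q.comp (updateZero d)) ∈ 𝒯 := by
  have hclosed : IsClosed {q : C(ι → ℝ, ℝ) | shear d (q.comp (updateZero d)) ∈ 𝒯} :=
    h𝒯.isClosed.preimage ((continuous_shear d).comp (ContinuousMap.continuous_precomp _))
  refine hclosed.closure_subset_iff.2 (fun q hq => ?_) (dense_span_expRidge q)
  suffices ∀ a : ℝ, shear d (a • q.comp (updateZero d)) ∈ 𝒯 by simpa using this 1
  induction hq using Submodule.span_induction with
  | mem _ hx =>
    obtain ⟨w, rfl⟩ := hx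
    exact fun a => h𝒯.shear_smul_expRidge_comp_updateZero_mem hid a w
  | zero =>
    intro a
    simpa using h𝒯.shear_mem d 0 contDiff_const fun _ _ _ => rfl
  | add f g _ _ hf hg =>
    intro a
    have hdep : DependsOn (a • f.comp (updateZero d)) {d}ᶜ :=
      dependsOn_comp_updateZero (a • f) d
    rw [ContinuousMap.add_comp, smul_add, ← shear_comp_shear_self hdep fun h => h rfl]
    exact h𝒯.comp_mem _ (hf a) _ (hg a)
  | smul r f _ hf =>
    intro a
    rw [ContinuousMap.smul_comp, smul_smul]
    exact hf (a * r)

theorem shear_mem_of_dependsOn (h𝒯 : IsBlockShearClosed c 𝒯) {i d : ι} (hid : c i ≠ c d)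
    {q : C(ι → ℝ, ℝ)} (hq : DependsOn q {d}ᶜ) : shear d q ∈ 𝒯 :=
  comp_updateZero_of_dependsOn hq ▸ h𝒯.shear_comp_updateZero_mem hid q

end IsBlockShearClosed

end BlockShear

section Splitting

variable {ι : Type*} [Fintype ι] [DecidableEq ι] {𝒯 : Set C(ι → ℝ, ι → ℝ)}
  {v : ℝ → (ι → ℝ) → ι → ℝ}

theorem exists_splitting [Nonempty ι] (hcomp : ∀ F ∈ 𝒯, ∀ G ∈ 𝒯, F.comp G ∈ 𝒯)
    (hshear : ∀ (i : ι) (q : C(ι → ℝ, ℝ)), DependsOn q {i}ᶜ → shear i q ∈ 𝒯)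
    (hv : ContDiff ℝ 1 fun p : ℝ × (ι → ℝ) => v p.1 p.2)
    (hdep : ∀ t i, DependsOn (fun x => v t x i) {i}ᶜ) (s : Finset ι) :
    ∃ Φ : ℝ × ℝ × (ι → ℝ) → ι → ℝ, ContDiff ℝ 1 Φ ∧
      (∀ t x, Φ (0, t, x) = ∑ i ∈ s, Pi.single i (v t x i)) ∧
      ∀ h t, ∃ F ∈ 𝒯, ⇑F = fun x => x + h • Φ (h, t, x) := by
  induction s using Finset.induction_on with
  | empty =>
    refine ⟨0, contDiff_const, fun _ _ => rfl, fun h t => ?_⟩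
    obtain ⟨i⟩ := ‹Nonempty ι›
    exact ⟨shear i 0, hshear i 0 fun _ _ _ => rfl, by rw [shear_zero]; ext x; simp⟩
  | insert e s he ih =>
    obtain ⟨Φ, hΦ, hΦ₀, hΦ𝒯⟩ := ih
    have hve : ContDiff ℝ 1 fun p : ℝ × ℝ × (ι → ℝ) => v p.2.1 (p.2.2 + p.1 • Φ p) e :=
      (contDiff_apply ℝ ℝ e).comp (hv.comp (contDiff_snd.fst.prodMk
        (contDiff_snd.snd.add (contDiff_fst.smul hΦ))))
    refine ⟨fun p => Φ p + (Pi.single e (v p.2.1 (p.2.2 + p.1 • Φ p) e) : ι → ℝ),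
      hΦ.add ((contDiff_single ..).comp hve), fun t x => ?_, fun h t => ?_⟩
    · simp [Finset.sum_insert he, hΦ₀, add_comm]
    · obtain ⟨F, hF, hFΦ⟩ := hΦ𝒯 h t
      let q : C(ι → ℝ, ℝ) := ⟨fun x => h * v t x e, by have := hv.continuous; fun_prop⟩
      refine ⟨(shear e q).comp F, hcomp _ (hshear e q fun x y hxy => ?_) F hF, ?_⟩
      · exact congrArg (h * ·) (hdep t e hxy)
      · ext1 x
        rw [ContinuousMap.comp_apply, shear_apply, hFΦ, smul_add, add_assoc, ← Pi.single_smul]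
        rfl

theorem exists_mem_coe_eq_flow_of_dependsOn [Nonempty ι] (hclosed : IsClosed 𝒯)
    (hcomp : ∀ F ∈ 𝒯, ∀ G ∈ 𝒯, F.comp G ∈ 𝒯)
    (hshear : ∀ (i : ι) (q : C(ι → ℝ, ℝ)), DependsOn q {i}ᶜ → shear i q ∈ 𝒯)
    (hv : ContDiff ℝ 1 fun p : ℝ × (ι → ℝ) => v p.1 p.2)
    (hdep : ∀ t i, DependsOn (fun x => v t x i) {i}ᶜ) {X : ℝ → (ι → ℝ) → ι → ℝ} {T : ℝ}
    (hX₀ : ∀ x, X 0 x = x) (hX : ∀ x, IsIntegralCurveOn (fun t => X t x) v (uIcc 0 T)) :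
    ∃ F ∈ 𝒯, ⇑F = X T := by
  -- Rescaling time by `T` covers both signs of `T` at once.
  have hw : ContDiff ℝ 1 fun p : ℝ × (ι → ℝ) => T • v (p.1 * T) p.2 :=
    (hv.comp ((contDiff_fst.mul contDiff_const).prodMk contDiff_snd)).const_smul T
  obtain ⟨Φ, hΦ, hΦ₀, hΦ𝒯⟩ := exists_splitting hcomp hshear hw
    (fun t i _ _ hxy => congrArg (T * ·) (hdep (t * T) i hxy)) Finset.univ
  have hscaled (x) :
      IsIntegralCurveOn (fun t => X (t * T) x) (fun t y => Φ (0, t, y)) (Icc 0 1) := by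
    simp only [hΦ₀, Finset.univ_sum_single]
    refine ((hX x).comp_mul T).mono fun t ht => ?_
    rw [← uIcc_of_le zero_le_one] at ht
    simpa only [mem_ofPred_eq, image_mul_const_uIcc, zero_mul, one_mul] using
      mem_image_of_mem (· * T) ht
  obtain ⟨F, hF, hFX⟩ := exists_mem_coe_eq_flow_of_nonneg hclosed hcomp hΦ.locallyLipschitz hΦ𝒯
    zero_le_one (X := fun t x => X (t * T) x) (by simpa using hX₀) hscaled
  exact ⟨F, hF, by simpa using hFX⟩

end Splitting

section Coupling

/-- Universal approximation, the second half of `IsGoodFamily`: uniformly on compact sets, the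
family `F` approximates every smooth map. -/
def ApproximatesSmooth {ι κ : Type} [Fintype ι] [Fintype κ] (F : Set ((ι → ℝ) → (κ → ℝ))) : Prop :=
  ∀ V : Set (ι → ℝ), IsCompact V → ∀ g : (ι → ℝ) → (κ → ℝ), ContDiff ℝ ∞ g →
    ∀ ε > 0, ∃ f ∈ F, ∀ x ∈ V, ‖g x - f x‖ ≤ ε

variable {D s : ℕ}
  {NN1 : Set (({i : Fin D // ¬ i.val < s - 1} → ℝ) → ({i : Fin D // i.val < s - 1} → ℝ))}
  {NN2 : Set (({i : Fin D // i.val < s - 1} → ℝ) → ({i : Fin D // ¬ i.val < s - 1} → ℝ))}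

theorem foldl_comp_eq_foldl_id_comp {α : Type*} (l : List (α → α)) (a : α → α) :
    l.foldl (fun h m => m ∘ h) a = l.foldl (fun h m => m ∘ h) id ∘ a := by
  induction l generalizing a with
  | nil => rfl
  | cons m l ih => rw [List.foldl_cons, List.foldl_cons, ih (m ∘ a), ih (m ∘ id)]; rfl

theorem comp_mem_psi {f g : (Fin D → ℝ) → (Fin D → ℝ)} (hf : f ∈ Psi D s NN1 NN2)
    (hg : g ∈ Psi D s NN1 NN2) : f ∘ g ∈ Psi D s NN1 NN2 := by
  obtain ⟨l, hl, hl', rfl⟩ := hf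
  obtain ⟨m, -, hm', rfl⟩ := hg
  refine ⟨m ++ l, by simp [hl], fun a ha => ?_, ?_⟩
  · exact (List.mem_append.1 ha).elim (hm' a) (hl' a)
  · rw [List.foldl_append, ← foldl_comp_eq_foldl_id_comp]

theorem upModule_mem_psi {f} (hf : f ∈ NN1) : upModule D s f ∈ Psi D s NN1 NN2 :=
  ⟨[upModule D s f], by simp, by simpa using .inl ⟨f, hf, rfl⟩, rfl⟩

theorem lowModule_mem_psi {f} (hf : f ∈ NN2) : lowModule D s f ∈ Psi D s NN1 NN2 :=
  ⟨[lowModule D s f], by simp, by simpa using .inr ⟨f, hf, rfl⟩, rfl⟩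

theorem dist_upModule_le (f f') (x : Fin D → ℝ) :
    dist (upModule D s f x) (upModule D s f' x) ≤ dist (f fun j => x j) (f' fun j => x j) := by
  refine (dist_pi_le_iff dist_nonneg).2 fun i => ?_
  by_cases hi : i.val < s - 1
  · simpa [upModule, hi] using dist_le_pi_dist (f fun j => x j) (f' fun j => x j) ⟨i, hi⟩
  · simp [upModule, hi]

theorem dist_lowModule_le (f f') (x : Fin D → ℝ) :
    dist (lowModule D s f x) (lowModule D s f' x) ≤ dist (f fun j => x j) (f' fun j => x j) := by
  refine (dist_pi_le_iff dist_nonneg).2 fun i => ?_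
  by_cases hi : i.val < s - 1
  · simp [lowModule, hi]
  · simpa [lowModule, hi] using dist_le_pi_dist (f fun j => x j) (f' fun j => x j) ⟨i, hi⟩

theorem mem_compactClosure_psi_of_coe_eq_upModule (hNN1 : ApproximatesSmooth NN1) {f}
    (hf : ContDiff ℝ ∞ f) {F : C(Fin D → ℝ, Fin D → ℝ)} (hF : F = upModule D s f) :
    F ∈ compactClosure (Psi D s NN1 NN2) := by
  intro K hK ε hε
  obtain ⟨f', hf', hff'⟩ := hNN1 ((fun x j => x j.1) '' K) (hK.image (by fun_prop)) f hf ε hε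
  refine ⟨upModule D s f', upModule_mem_psi hf', fun x hx => ?_⟩
  rw [hF]
  refine (dist_upModule_le f f' x).trans ?_
  rw [dist_eq_norm]
  exact hff' _ (mem_image_of_mem _ hx)

theorem mem_compactClosure_psi_of_coe_eq_lowModule (hNN2 : ApproximatesSmooth NN2) {f}
    (hf : ContDiff ℝ ∞ f) {F : C(Fin D → ℝ, Fin D → ℝ)} (hF : F = lowModule D s f) :
    F ∈ compactClosure (Psi D s NN1 NN2) := by
  intro K hK ε hε
  obtain ⟨f', hf', hff'⟩ := hNN2 ((fun x j => x j.1) '' K) (hK.image (by fun_prop)) f hf ε hε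
  refine ⟨lowModule D s f', lowModule_mem_psi hf', fun x hx => ?_⟩
  rw [hF]
  refine (dist_lowModule_le f f' x).trans ?_
  rw [dist_eq_norm]
  exact hff' _ (mem_image_of_mem _ hx)

/-- The control of the coupling module realising the shear along `d` with profile `b`: it reads the
coordinates in `p`, the others being set to `0`, and acts on the coordinates in `q`. -/
noncomputable def singleControl {ι : Type*} [DecidableEq ι] {p q : ι → Prop} (d : {i // q i})
    (b : (ι → ℝ) → ℝ) : ({i // p i} → ℝ) → {i // q i} → ℝ :=
  fun z => Pi.single d (b (Function.extend Subtype.val z 0))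

theorem contDiff_singleControl {ι : Type*} [Fintype ι] [DecidableEq ι] {p q : ι → Prop}
    [DecidablePred p] [DecidablePred q] (d : {i // q i}) {b : (ι → ℝ) → ℝ} {n : ℕ∞ω}
    (hb : ContDiff ℝ n b) : ContDiff ℝ n (singleControl (p := p) d b) :=
  have hextend : ContDiff ℝ n fun z : {i // p i} → ℝ => Function.extend Subtype.val z (0 : ι → ℝ) :=
    (Function.ExtendByZero.linearMap ℝ
      (Subtype.val : {i // p i} → ι)).toContinuousLinearMap.contDiff
  (contDiff_single ..).comp (hb.comp hextend)

theorem singleControl_restrict {ι : Type*} [DecidableEq ι] {p q : ι → Prop} (d : {i // q i})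
    {b : (ι → ℝ) → ℝ} (hb : DependsOn b {i | p i}) (x : ι → ℝ) :
    singleControl (p := p) d b (fun j => x j) = Pi.single d (b x) := by
  refine congrArg (fun r : ℝ => (Pi.single d r : {i // q i} → ℝ)) (hb fun j hj => ?_)
  exact Subtype.val_injective.extend_apply (fun i => x i) (0 : ι → ℝ) ⟨j, hj⟩

theorem coe_shear_eq_upModule {d : Fin D} (hd : d.val < s - 1) {b : C(Fin D → ℝ, ℝ)}
    (hb : DependsOn b {j | ¬ j.val < s - 1}) :
    shear d b = upModule D s (singleControl ⟨d, hd⟩ b) := by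
  ext x i
  rw [upModule, singleControl_restrict _ hb, shear_apply, Pi.add_apply]
  split_ifs with hi
  · simp [Pi.single_apply, Subtype.ext_iff]
  · rw [Pi.single_eq_of_ne (by rintro rfl; exact hi hd), add_zero]

theorem coe_shear_eq_lowModule {d : Fin D} (hd : ¬ d.val < s - 1) {b : C(Fin D → ℝ, ℝ)}
    (hb : DependsOn b {j | j.val < s - 1}) :
    shear d b = lowModule D s (singleControl ⟨d, hd⟩ b) := by
  ext x i
  rw [lowModule, singleControl_restrict _ hb, shear_apply, Pi.add_apply]
  split_ifs with hi
  · rw [Pi.single_eq_of_ne (by rintro rfl; exact hd hi), add_zero]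
  · simp [Pi.single_apply, Subtype.ext_iff]

theorem isBlockShearClosed_compactClosure_psi (hNN1 : ApproximatesSmooth NN1)
    (hNN2 : ApproximatesSmooth NN2) :
    IsBlockShearClosed (fun j : Fin D => j.val < s - 1) (compactClosure (Psi D s NN1 NN2)) where
  isClosed := isClosed_compactClosure _
  comp_mem _ hF _ hG := comp_mem_compactClosure (fun _ hf _ hg => comp_mem_psi hf hg) hF hG
  shear_mem d b hb hdep := by
    by_cases hd : d.val < s - 1
    · have hblock : {j : Fin D | (j.val < s - 1) ≠ (d.val < s - 1)} ⊆ {j | ¬ j.val < s - 1} :=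
        fun j hj h => hj (propext (iff_of_true h hd))
      exact mem_compactClosure_psi_of_coe_eq_upModule hNN1 (contDiff_singleControl ⟨d, hd⟩ hb)
        (coe_shear_eq_upModule hd (hdep.mono hblock))
    · have hblock : {j : Fin D | (j.val < s - 1) ≠ (d.val < s - 1)} ⊆ {j | j.val < s - 1} :=
        fun j hj => not_not.1 fun h => hj (propext (iff_of_false h hd))
      exact mem_compactClosure_psi_of_coe_eq_lowModule hNN2 (contDiff_singleControl ⟨d, hd⟩ hb)
        (coe_shear_eq_lowModule hd (hdep.mono hblock))

theorem exists_lt_ne_lt (hs2 : 2 ≤ s) (hsD : s ≤ D) (d : Fin D) :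
    ∃ i : Fin D, (i.val < s - 1) ≠ (d.val < s - 1) := by
  by_cases hd : d.val < s - 1
  · exact ⟨⟨s - 1, by omega⟩, by simp [hd]⟩
  · exact ⟨⟨0, by omega⟩, by simpa [hd] using by omega⟩

theorem dependsOn_single_apply {ι : Type*} [DecidableEq ι] {d : ι} {g : (ι → ℝ) → ℝ}
    (hg : DependsOn g {d}ᶜ) (i : ι) :
    DependsOn (fun y => (Pi.single d (g y) : ι → ℝ) i) {i}ᶜ := by
  intro y y' hy
  obtain rfl | hi := eq_or_ne i d
  · simpa only [Pi.single_eq_same] using hg hy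
  · simp only [Pi.single_eq_of_ne hi]

theorem stmt17_general (hs2 : 2 ≤ s) (hsD : s ≤ D)
    (hNN1 : ApproximatesSmooth NN1) (hNN2 : ApproximatesSmooth NN2)
    {f : ℝ → (Fin D → ℝ) → (Fin D → ℝ)}
    (hf : ContDiff ℝ 1 fun p : ℝ × (Fin D → ℝ) => f p.1 p.2)
    (hdep : ∀ t i, DependsOn (fun y => f t y i) {i}ᶜ) {φ : ℝ → (Fin D → ℝ) → (Fin D → ℝ)}
    {τ T : ℝ} (hφ₀ : ∀ x, φ 0 x = x)
    (hφ : ∀ x, IsIntegralCurveOn (fun u => φ u x) (fun u => f (τ + u)) (uIcc 0 T))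
    {U : Set (Fin D → ℝ)} (hU : IsCompact U) :
    ∀ ε > 0, ∃ g ∈ Psi D s NN1 NN2, ∀ x ∈ U, ‖φ T x - g x‖ ≤ ε := by
  have hpsi := isBlockShearClosed_compactClosure_psi (D := D) (s := s) hNN1 hNN2
  have hshear (d : Fin D) (q : C(Fin D → ℝ, ℝ)) (hq : DependsOn q {d}ᶜ) :
      shear d q ∈ compactClosure (Psi D s NN1 NN2) :=
    (exists_lt_ne_lt hs2 hsD d).elim fun i hi => hpsi.shear_mem_of_dependsOn hi hq
  have hfτ : ContDiff ℝ 1 fun p : ℝ × (Fin D → ℝ) => f (τ + p.1) p.2 :=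
    hf.comp ((contDiff_const.add contDiff_fst).prodMk contDiff_snd)
  have : Nonempty (Fin D) := ⟨⟨0, by omega⟩⟩
  obtain ⟨F, hF, hFφ⟩ := exists_mem_coe_eq_flow_of_dependsOn hpsi.isClosed hpsi.comp_mem hshear
    hfτ (fun u => hdep (τ + u)) hφ₀ hφ
  simpa only [hFφ, dist_eq_norm] using hF U hU

end Coupling

/-- Let `f` be a smooth vector field on `[0,∞) × ℝᴰ` that is
separable 2-Hamiltonian in the `d,(d+1)`-th variables, i.e.
`f = (0,…,0, g₁(t, ȳ_d), g₂(t, ȳ_{d+1}), 0,…,0)ᵀ` where `g₁` does not depend on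
the `d`-th coordinate and `g₂` does not depend on the `(d+1)`-th coordinate.
Then the time-`T` flow map `φ_{τ,T,f}` lies in the sup-norm closure over any
compact `U` of the set `Ψ` of measure-preserving neural networks whose control
families satisfy the compact-Lipschitz and universal-approximation
assumptions (`D ≥ s ≥ 2`). -/
theorem stmt17 {D s : ℕ} (hs2 : 2 ≤ s) (hsD : s ≤ D)
    (NN1 : Set (({i : Fin D // ¬ i.val < s - 1} → ℝ) → ({i : Fin D // i.val < s - 1} → ℝ)))
    (NN2 : Set (({i : Fin D // i.val < s - 1} → ℝ) → ({i : Fin D // ¬ i.val < s - 1} → ℝ)))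
    (hNN1 : IsGoodFamily NN1) (hNN2 : IsGoodFamily NN2)
    (d d' : Fin D) (hdd' : (d' : ℕ) = (d : ℕ) + 1)
    (g₁ g₂ : ℝ → (Fin D → ℝ) → ℝ)
    (hg₁ : ContDiff ℝ (⊤ : ℕ∞) (fun p : ℝ × (Fin D → ℝ) => g₁ p.1 p.2))
    (hg₂ : ContDiff ℝ (⊤ : ℕ∞) (fun p : ℝ × (Fin D → ℝ) => g₂ p.1 p.2))
    (hg₁ind : ∀ t : ℝ, ∀ y y' : Fin D → ℝ, (∀ i ≠ d, y i = y' i) → g₁ t y = g₁ t y')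
    (hg₂ind : ∀ t : ℝ, ∀ y y' : Fin D → ℝ, (∀ i ≠ d', y i = y' i) → g₂ t y = g₂ t y')
    (f : ℝ → (Fin D → ℝ) → (Fin D → ℝ))
    (hf : ∀ t y, f t y = Pi.single d (g₁ t y) + Pi.single d' (g₂ t y))
    (φ : ℝ → ℝ → (Fin D → ℝ) → (Fin D → ℝ))
    (hφ0 : ∀ τ' x, φ τ' 0 x = x)
    (hφ : ∀ τ' x u, HasDerivAt (fun h => φ τ' h x) (f (τ' + u) (φ τ' u x)) u)
    (τ T : ℝ) (hτ : 0 ≤ τ) (hT : 0 ≤ T)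
    (U : Set (Fin D → ℝ)) (hU : IsCompact U) :
    ∀ ε > 0, ∃ g ∈ Psi D s NN1 NN2, ∀ x ∈ U, ‖φ τ T x - g x‖ ≤ ε := by
  obtain rfl : f = fun t y => Pi.single d (g₁ t y) + Pi.single d' (g₂ t y) := funext₂ hf
  have hf : ContDiff ℝ 1 fun p : ℝ × (Fin D → ℝ) =>
      (Pi.single d (g₁ p.1 p.2) + Pi.single d' (g₂ p.1 p.2) : Fin D → ℝ) :=
    ((contDiff_single ..).comp (hg₁.of_le (mod_cast le_top))).add
      ((contDiff_single ..).comp (hg₂.of_le (mod_cast le_top)))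
  have hdep (t i) : DependsOn (fun y =>
      (Pi.single d (g₁ t y) + Pi.single d' (g₂ t y) : Fin D → ℝ) i) {i}ᶜ := fun y y' hy =>
    congrArg₂ (· + ·) (dependsOn_single_apply (fun z z' h => hg₁ind t z z' h) i hy)
      (dependsOn_single_apply (fun z z' h => hg₂ind t z z' h) i hy)
  exact stmt17_general hs2 hsD hNN1.2 hNN2.2 hf hdep (hφ0 τ)
    (fun x u _ => (hφ τ x u).hasDerivWithinAt) hU
end

section
/- (Main theorem) Let D ≥ 2, 1 ≤ p < ∞, U ⊆ ℝᴰ compact, and let Ψ be the set of finite compositions of additive coupling modules x̂[:s] = x[:s] + f_net₁(x[s:]), x̂[s:] = x[s:] and x̂[:s] = x[:s], x̂[s:] = x[s:] + f_net₂(x[:s]), for fixed 2 ≤ s ≤ D, where the control families are Lipschitz on compacts and can uniformly approximate any smooth function on any compact set. If ψ : U → ℝᴰ is Lebesgue measure-preserving, bounded, and injective, then for every ε > 0 there exists ψ_net ∈ Ψ with ‖ψ − ψ_net‖_{L^p(U)} ≤ ε. -/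
open MeasureTheory

/-!
A step function constant on the cells of a grid of mesh `1 / N` with values in `(1 / N) ℤ` defines a
shear which permutes the cells, acting on their indices as a shear of `ℤ^D`. Such integer shears
generate a group which acts highly transitively on `ℤ^D`: one shear makes the first blocks of
finitely many points distinct, after which a shear in the other direction can prescribe their second
blocks arbitrarily; once two families of points have the same, distinct second blocks, a last shear
matches their first blocks. Hence every permutation of finitely many cells is a composition of
shears controlled by step functions.

A map which does not increase volume is approximated in measure by a permutation of cells: cut the
target into small cells; their preimages are nearly unions of cells of a much finer grid, so almost
all the fine cells over a target cell can be sent injectively into it, by counting. Finally, a step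
function is locally constant almost everywhere, so it agrees with a bounded smooth function off a
set of small measure. Approximation in measure by uniformly bounded maps on balls is stable under
composition with measure-preserving maps, and on bounded sets it gives approximation in `L^p`.
-/

namespace MeasurePreservingNet

open Set Filter Topology

open scoped ENNReal ContDiff Function

section Shear

variable {ι α : Type*}

open Classical in
/-- The shear (additive coupling map) which adds `f` of the `T`-coordinates of a vector to its
`S`-coordinates. -/
noncomputable def shear [Add α] {S T : Set ι} (f : (T → α) → (S → α)) (x : ι → α) : ι → α :=
  fun i => if h : i ∈ S then x i + f (T.domRestrict x) ⟨i, h⟩ else x i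

section Add

variable [Add α] {S T : Set ι}

theorem shear_apply_of_mem (f : (T → α) → (S → α)) (x : ι → α) {i : ι} (h : i ∈ S) :
    shear f x i = x i + f (T.domRestrict x) ⟨i, h⟩ :=
  dif_pos h

theorem shear_apply_of_notMem (f : (T → α) → (S → α)) (x : ι → α) {i : ι} (h : i ∉ S) :
    shear f x i = x i :=
  dif_neg h

theorem domRestrict_shear (hST : Disjoint S T) (f : (T → α) → (S → α)) (x : ι → α) :
    T.domRestrict (shear f x) = T.domRestrict x :=
  funext fun i => shear_apply_of_notMem f x (hST.notMem_of_mem_right i.2)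

theorem domRestrict_shear_self (f : (T → α) → (S → α)) (x : ι → α) :
    S.domRestrict (shear f x) = S.domRestrict x + f (T.domRestrict x) :=
  funext fun i => shear_apply_of_mem f x i.2

theorem shear_congr {f g : (T → α) → (S → α)} {x : ι → α}
    (h : f (T.domRestrict x) = g (T.domRestrict x)) : shear f x = shear g x := by
  unfold shear
  rw [h]

end Add

theorem shear_zero [AddZeroClass α] {S T : Set ι} :
    shear (0 : (T → α) → (S → α)) = id := by
  ext x i
  by_cases h : i ∈ S
  · simp [shear_apply_of_mem _ _ h]
  · exact shear_apply_of_notMem _ _ h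

variable [AddGroup α] {S T : Set ι}

theorem shear_neg_shear (hST : Disjoint S T) (f : (T → α) → (S → α)) (x : ι → α) :
    shear (-f) (shear f x) = x := by
  ext i
  by_cases h : i ∈ S
  · simp [shear_apply_of_mem _ _ h, domRestrict_shear hST]
  · simp [shear_apply_of_notMem _ _ h]

/-- A shear as a permutation. -/
noncomputable def shearPerm (hST : Disjoint S T) (f : (T → α) → (S → α)) :
    Equiv.Perm (ι → α) where
  toFun := shear f
  invFun := shear (-f)
  left_inv := shear_neg_shear hST f
  right_inv x := by simpa using shear_neg_shear hST (-f) x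

theorem coe_shearPerm (hST : Disjoint S T) (f : (T → α) → (S → α)) :
    ⇑(shearPerm hST f) = shear f := rfl

theorem shearPerm_inv (hST : Disjoint S T) (f : (T → α) → (S → α)) :
    (shearPerm hST f)⁻¹ = shearPerm hST (-f) :=
  Equiv.ext fun _ => rfl

variable (α) in
/-- The group of permutations generated by the shears in the two directions of a pair of disjoint
blocks of coordinates. -/
def shearGroup (hST : Disjoint S T) : Subgroup (Equiv.Perm (ι → α)) :=
  Subgroup.closure (range (shearPerm hST) ∪ range (shearPerm hST.symm))

theorem shearPerm_mem_shearGroup (hST : Disjoint S T) (f : (T → α) → (S → α)) :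
    shearPerm hST f ∈ shearGroup α hST :=
  Subgroup.subset_closure (.inl (mem_range_self f))

theorem shearGroup_symm (hST : Disjoint S T) : shearGroup α hST.symm = shearGroup α hST := by
  rw [shearGroup, shearGroup, union_comm]

end Shear

section Transitivity

variable {ι κ α : Type*} {S T : Set ι}

theorem exists_domRestrict_shear_eq [AddCommGroup α] {c : κ → ι → α}
    (hc : Function.Injective fun j => T.domRestrict (c j)) (d : κ → S → α) :
    ∃ f : (T → α) → (S → α), ∀ j, S.domRestrict (shear f (c j)) = d j := by
  refine ⟨Function.extend (fun j => T.domRestrict (c j)) (fun j => d j - S.domRestrict (c j)) 0,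
    fun j => ?_⟩
  rw [domRestrict_shear_self, hc.extend_apply]
  exact add_sub_cancel _ _

-- Adding `K * n y`, with `n` injective and `K` exceeding all differences of `i₀`-coordinates,
-- separates any two points whose `T`-coordinates differ.
theorem exists_injective_domRestrict_shear [Finite κ] (hST : IsCompl S T) (hS : S.Nonempty)
    {c : κ → ι → ℤ} (hc : Function.Injective c) :
    ∃ f : (T → ℤ) → (S → ℤ), Function.Injective fun j => S.domRestrict (shear f (c j)) := by
  obtain ⟨i₀, hi₀⟩ := hS
  obtain ⟨n, hn⟩ := countable_iff_exists_injOn.1 (countable_range fun j => T.domRestrict (c j))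
  obtain ⟨K, hK⟩ : ∃ K, ∀ j j', |c j' i₀ - c j i₀| < K := by
    obtain ⟨K, hK⟩ := (finite_range fun a : κ × κ => |c a.2 i₀ - c a.1 i₀|).bddAbove
    exact ⟨K + 1, fun j j' => Int.lt_add_one_of_le (hK ⟨(j, j'), rfl⟩)⟩
  refine ⟨fun y _ => K * n y, fun j j' hjj' => hc ?_⟩
  have hS_eq : ∀ i ∈ S,
      c j i + K * n (T.domRestrict (c j)) = c j' i + K * n (T.domRestrict (c j')) := fun i hi => by
    simpa only [domRestrict_apply, shear_apply_of_mem _ _ hi] using congrFun hjj' ⟨i, hi⟩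
  have hi₀_eq : c j' i₀ - c j i₀ = 0 :=
    Int.eq_zero_of_abs_lt_dvd
      ⟨n (T.domRestrict (c j)) - n (T.domRestrict (c j')), by linear_combination -hS_eq i₀ hi₀⟩
      (hK j j')
  have hK0 : K ≠ 0 := ((abs_nonneg _).trans_lt (hK j j')).ne'
  have hn_eq : n (T.domRestrict (c j)) = n (T.domRestrict (c j')) := by
    have := mul_left_cancel₀ hK0 (show K * n (T.domRestrict (c j)) = K * n (T.domRestrict (c j'))
      by linear_combination hS_eq i₀ hi₀ + hi₀_eq)
    exact_mod_cast this
  ext i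
  by_cases hi : i ∈ S
  · simpa only [hn_eq, add_left_inj] using hS_eq i hi
  · have hiT : i ∈ T := hST.compl_eq ▸ hi
    exact congrFun (hn (mem_range_self j) (mem_range_self j') hn_eq) ⟨i, hiT⟩

theorem exists_mem_shearGroup_domRestrict_eq [Finite κ] (hST : IsCompl S T) (hS : S.Nonempty)
    {c : κ → ι → ℤ} (hc : Function.Injective c) (b : κ → T → ℤ) :
    ∃ τ ∈ shearGroup ℤ hST.disjoint, ∀ j, T.domRestrict (τ (c j)) = b j := by
  obtain ⟨f, hf⟩ := exists_injective_domRestrict_shear hST hS hc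
  obtain ⟨g, hg⟩ := exists_domRestrict_shear_eq hf b
  refine ⟨shearPerm hST.disjoint.symm g * shearPerm hST.disjoint f, mul_mem ?_ ?_, hg⟩
  · rw [← shearGroup_symm]
    exact shearPerm_mem_shearGroup hST.disjoint.symm g
  · exact shearPerm_mem_shearGroup hST.disjoint f

theorem exists_mem_shearGroup_apply_eq [Finite κ] (hST : IsCompl S T) (hS : S.Nonempty)
    (hT : T.Nonempty) {c c' : κ → ι → ℤ} (hc : Function.Injective c)
    (hc' : Function.Injective c') :
    ∃ τ ∈ shearGroup ℤ hST.disjoint, ∀ j, τ (c j) = c' j := by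
  obtain ⟨n, hn⟩ := exists_injective_nat κ
  obtain ⟨τ, hτ, hτb⟩ := exists_mem_shearGroup_domRestrict_eq hST hS hc fun j _ => (n j : ℤ)
  obtain ⟨τ', hτ', hτb'⟩ := exists_mem_shearGroup_domRestrict_eq hST hS hc' fun j _ => (n j : ℤ)
  have hinj : Function.Injective fun j => T.domRestrict (τ (c j)) := fun j j' h => by
    obtain ⟨i, hi⟩ := hT
    simp only [hτb] at h
    exact hn (by exact_mod_cast congrFun h ⟨i, hi⟩)
  obtain ⟨f, hf⟩ := exists_domRestrict_shear_eq hinj fun j => S.domRestrict (τ' (c' j))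
  refine ⟨τ'⁻¹ * shearPerm hST.disjoint f * τ,
    mul_mem (mul_mem (inv_mem hτ') (shearPerm_mem_shearGroup _ f)) hτ, fun j => ?_⟩
  have h : shear f (τ (c j)) = τ' (c' j) := by
    ext i
    by_cases hi : i ∈ S
    · exact congrFun (hf j) ⟨i, hi⟩
    · have hiT : i ∈ T := hST.compl_eq ▸ hi
      rw [shear_apply_of_notMem f _ hi]
      exact congrFun ((hτb j).trans (hτb' j).symm) ⟨i, hiT⟩
  simp [Equiv.Perm.mul_apply, coe_shearPerm, h]

end Transitivity

section Grid

variable {ι : Type*} {N : ℕ}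

/-- The index `k` of the grid cell `∏ᵢ [kᵢ / N, (kᵢ + 1) / N)` containing `x`. -/
noncomputable def gridIndex (N : ℕ) (x : ι → ℝ) : ι → ℤ := fun i => ⌊N * x i⌋

/-- The piecewise translation which moves the grid cell of index `k` onto that of index `τ k`. -/
noncomputable def gridMap (N : ℕ) (τ : (ι → ℤ) → (ι → ℤ)) (x : ι → ℝ) : ι → ℝ :=
  fun i => x i + ((τ (gridIndex N x) i - gridIndex N x i : ℤ) : ℝ) / N

theorem gridIndex_gridMap (hN : N ≠ 0) (τ : (ι → ℤ) → (ι → ℤ)) (x : ι → ℝ) :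
    gridIndex N (gridMap N τ x) = τ (gridIndex N x) := by
  ext i
  have hN' : (N : ℝ) ≠ 0 := Nat.cast_ne_zero.2 hN
  rw [gridIndex, gridMap, mul_add, mul_div_cancel₀ _ hN', Int.floor_add_intCast]
  exact add_sub_cancel (gridIndex N x i) _

theorem gridMap_comp (hN : N ≠ 0) (τ₁ τ₂ : (ι → ℤ) → (ι → ℤ)) :
    gridMap N (τ₂ ∘ τ₁) = gridMap N τ₂ ∘ gridMap N τ₁ := by
  ext x i
  rw [Function.comp_apply, gridMap, gridMap, gridIndex_gridMap hN, gridMap, Function.comp_apply]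
  push_cast
  ring

theorem gridMap_shear (N : ℕ) {S T : Set ι} (f : (T → ℤ) → (S → ℤ)) :
    gridMap N (shear f) = shear fun (y : T → ℝ) i => (f (gridIndex N y) i : ℝ) / N := by
  ext x i
  by_cases hi : i ∈ S
  · rw [gridMap, shear_apply_of_mem _ _ hi, shear_apply_of_mem _ _ hi, add_sub_cancel_left]
    rfl
  · simp [gridMap, shear_apply_of_notMem _ _ hi]

theorem gridIndex_mul_ediv {L : ℕ} (hL : L ≠ 0) (M : ℕ) (x : ι → ℝ) (i : ι) :
    gridIndex (L * M) x i / L = gridIndex M x i := by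
  rw [gridIndex, gridIndex, Nat.cast_mul, mul_assoc, Int.natCast_mul_floor_div_cancel hL]

theorem norm_sub_le_of_gridIndex_eq [Fintype ι] (hN : N ≠ 0) {x y : ι → ℝ}
    (h : gridIndex N x = gridIndex N y) : ‖x - y‖ ≤ 1 / N := by
  have hN' : (0 : ℝ) < N := by positivity
  refine (pi_norm_le_iff_of_nonneg (by positivity)).2 fun i => ?_
  have := Int.abs_sub_lt_one_of_floor_eq_floor (congrFun h i)
  rw [← mul_sub, abs_mul, abs_of_pos hN'] at this
  rw [le_div_iff₀' hN']
  exact this.le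

theorem measurable_gridIndex (N : ℕ) : Measurable (gridIndex (ι := ι) N) :=
  measurable_pi_lambda _ fun i => ((measurable_pi_apply i).const_mul _).floor

theorem measurable_gridMap [Finite ι] (N : ℕ) (τ : (ι → ℤ) → (ι → ℤ)) :
    Measurable (gridMap N τ) :=
  measurable_pi_lambda _ fun i => (measurable_pi_apply i).add <|
    (measurable_of_countable fun k : ι → ℤ => ((τ k i - k i : ℤ) : ℝ) / N).comp
      (measurable_gridIndex N)

variable [Fintype ι]

theorem volume_gridIndex_preimage_singleton (hN : N ≠ 0) (k : ι → ℤ) :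
    volume (gridIndex N ⁻¹' {k}) = ENNReal.ofReal (1 / N) ^ Fintype.card ι := by
  have hN' : (0 : ℝ) < N := by positivity
  have : gridIndex N ⁻¹' {k} = univ.pi fun i => Ico ((k i : ℝ) / N) ((k i + 1) / N) := by
    ext x
    simp [gridIndex, funext_iff, Int.floor_eq_iff, div_le_iff₀' hN', lt_div_iff₀' hN']
  rw [this, Real.volume_pi_Ico]
  simp [← sub_div]

theorem volume_gridIndex_preimage (hN : N ≠ 0) (A : Finset (ι → ℤ)) :
    volume (gridIndex N ⁻¹' (A : Set (ι → ℤ))) =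
      A.card * ENNReal.ofReal (1 / N) ^ Fintype.card ι := by
  rw [← sum_measure_preimage_singleton _ fun k _ =>
    measurable_gridIndex N (measurableSet_singleton k)]
  simp [volume_gridIndex_preimage_singleton hN]

/-- The indices of the cells which make up the box `[-ρ, ρ)^ι`. -/
noncomputable def gridBox (ι : Type*) [Fintype ι] [DecidableEq ι] (N ρ : ℕ) : Finset (ι → ℤ) :=
  Fintype.piFinset fun _ => Finset.Ico (-(N * ρ : ℤ)) (N * ρ)

variable [DecidableEq ι]

theorem gridIndex_mem_gridBox (hN : N ≠ 0) {ρ : ℕ} {x : ι → ℝ} :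
    gridIndex N x ∈ gridBox ι N ρ ↔ ∀ i, x i ∈ Ico (-ρ : ℝ) ρ := by
  have hN' : (0 : ℝ) < N := by positivity
  simp only [gridBox, Fintype.mem_piFinset, Finset.mem_Ico, gridIndex, mem_Ico]
  refine forall_congr' fun i => and_congr ?_ ?_
  · rw [Int.le_floor]
    push_cast
    rw [← mul_neg, mul_le_mul_iff_right₀ hN']
  · rw [Int.floor_lt]
    push_cast
    rw [mul_lt_mul_iff_right₀ hN']

theorem norm_le_of_gridIndex_mem_gridBox (hN : N ≠ 0) {ρ : ℕ} {x : ι → ℝ}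
    (hx : gridIndex N x ∈ gridBox ι N ρ) : ‖x‖ ≤ ρ :=
  (pi_norm_le_iff_of_nonneg ρ.cast_nonneg).2 fun i =>
    abs_le.2 (Ico_subset_Icc_self ((gridIndex_mem_gridBox hN).1 hx i))

theorem gridIndex_mem_gridBox_of_norm_lt (hN : N ≠ 0) {ρ : ℕ} {x : ι → ℝ} (hx : ‖x‖ < ρ) :
    gridIndex N x ∈ gridBox ι N ρ :=
  (gridIndex_mem_gridBox hN).2 fun i =>
    Ioo_subset_Ico_self (abs_lt.1 ((norm_le_pi_norm x i).trans_lt hx))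

end Grid

section MeasurePreserving

variable {ι : Type*} {S T : Set ι}

-- In the coordinates `(x|Sᶜ, x|S)` the shear is the skew product `(y, z) ↦ (y, z + f (y|T))`.
theorem measurePreserving_shear [Fintype ι] (hST : Disjoint S T) {f : (T → ℝ) → (S → ℝ)}
    (hf : Measurable f) : MeasurePreserving (shear f) := by
  classical
  let e := MeasurableEquiv.piEquivPiSubtypeProd (fun _ : ι => ℝ) (· ∉ S)
  have he : MeasurePreserving e := volume_preserving_piEquivPiSubtypeProd (fun _ : ι => ℝ) (· ∉ S)
  let shift (y : {i // i ∉ S} → ℝ) (i : {i // ¬ i ∉ S}) : ℝ :=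
    f (fun j => y ⟨j, hST.notMem_of_mem_right j.2⟩) ⟨i, not_not.1 i.2⟩
  have hshift : Measurable shift := measurable_pi_lambda _ fun i => (measurable_pi_apply _).comp <|
    hf.comp <| measurable_pi_lambda _ fun j => measurable_pi_apply _
  have hskew : MeasurePreserving (fun a => (a.1, a.2 + shift a.1)) (volume.prod volume)
      (volume.prod volume) :=
    (MeasurePreserving.id volume).skew_product (g := fun y z => z + shift y)
      (measurable_snd.add (hshift.comp measurable_fst))
      (.of_forall fun y => (measurePreserving_add_right volume (shift y)).map_eq)
  have heq : shear f = e.symm ∘ (fun a => (a.1, a.2 + shift a.1)) ∘ e := by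
    ext x : 1
    refine e.eq_symm_apply.2 (Prod.ext ?_ ?_) <;> ext i
    · exact shear_apply_of_notMem f x i.2
    · exact shear_apply_of_mem f x (not_not.1 i.2)
  rw [heq]
  exact (he.symm e).comp (hskew.comp he)

theorem measurePreserving_gridMap_shear [Fintype ι] (hST : Disjoint S T) (N : ℕ)
    (f : (T → ℤ) → (S → ℤ)) : MeasurePreserving (gridMap N (shear f)) := by
  rw [gridMap_shear]
  exact measurePreserving_shear hST ((measurable_of_countable fun k i => (f k i : ℝ) / N).comp
    (measurable_gridIndex N))

end MeasurePreserving

section LocallyApproximable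

variable {E : Type*} [NormedAddCommGroup E] [MeasureSpace E]

/-- `T` is locally approximable by `Ψ` if on every ball it is a limit in measure of a uniformly
bounded sequence from `Ψ`. A single `ε` measures both the deviation and the exceptional set. -/
def LocallyApproximable (Ψ : Set (E → E)) (T : E → E) : Prop :=
  ∀ R : ℝ, ∃ R' : ℝ, ∀ ε > 0, ∃ m ∈ Ψ, (∀ x ∈ Metric.closedBall 0 R, ‖m x‖ ≤ R') ∧
    volume {x ∈ Metric.closedBall 0 R | ε < ‖T x - m x‖} ≤ ENNReal.ofReal ε

theorem volume_lt_norm_comp_sub_comp_le {T₁ T₂ m₁ m₂ : E → E} {B B' : Set E} {δ ε ε' : ℝ}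
    (hT₁ : MeasurePreserving T₁)
    (h : ∀ x ∈ B, ‖T₁ x - m₁ x‖ ≤ δ → T₁ x ∈ B' ∧ ‖m₂ (T₁ x) - m₂ (m₁ x)‖ ≤ ε') :
    volume {x ∈ B | ε + ε' < ‖(T₂ ∘ T₁) x - (m₂ ∘ m₁) x‖} ≤
      volume {x ∈ B | δ < ‖T₁ x - m₁ x‖} + volume {y ∈ B' | ε < ‖T₂ y - m₂ y‖} := by
  have hsub : {x ∈ B | ε + ε' < ‖(T₂ ∘ T₁) x - (m₂ ∘ m₁) x‖} ⊆
      {x ∈ B | δ < ‖T₁ x - m₁ x‖} ∪ T₁ ⁻¹' {y ∈ B' | ε < ‖T₂ y - m₂ y‖} := by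
    rintro x ⟨hx, hxε⟩
    refine or_iff_not_imp_left.2 fun hδ => ?_
    obtain ⟨hxB', hm₂⟩ := h x hx (not_lt.1 fun hlt => hδ ⟨hx, hlt⟩)
    have htri : ‖(T₂ ∘ T₁) x - (m₂ ∘ m₁) x‖ ≤ ‖T₂ (T₁ x) - m₂ (T₁ x)‖ + ε' :=
      (norm_sub_le_norm_sub_add_norm_sub _ (m₂ (T₁ x)) _).trans (add_le_add_right hm₂ _)
    exact ⟨hxB', lt_of_add_lt_add_right (hxε.trans_le htri)⟩
  calc volume {x ∈ B | ε + ε' < ‖(T₂ ∘ T₁) x - (m₂ ∘ m₁) x‖}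
      ≤ volume {x ∈ B | δ < ‖T₁ x - m₁ x‖} + volume (T₁ ⁻¹' {y ∈ B' | ε < ‖T₂ y - m₂ y‖}) :=
        (measure_mono hsub).trans (measure_union_le _ _)
    _ ≤ volume {x ∈ B | δ < ‖T₁ x - m₁ x‖} + volume {y ∈ B' | ε < ‖T₂ y - m₂ y‖} := by
        refine add_le_add_right ?_ _
        exact (Measure.le_map_apply hT₁.aemeasurable _).trans_eq (by rw [hT₁.map_eq])

theorem LocallyApproximable.comp [ProperSpace E] {Ψ : Set (E → E)}
    (hcont : ∀ m ∈ Ψ, Continuous m) (hcomp : ∀ m₁ ∈ Ψ, ∀ m₂ ∈ Ψ, m₂ ∘ m₁ ∈ Ψ) {T₁ T₂ : E → E}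
    (h₂ : LocallyApproximable Ψ T₂) (h₁ : LocallyApproximable Ψ T₁) (hT₁ : MeasurePreserving T₁) :
    LocallyApproximable Ψ (T₂ ∘ T₁) := by
  intro R
  obtain ⟨R₁, hR₁⟩ := h₁ R
  obtain ⟨R₂, hR₂⟩ := h₂ (R₁ + 1)
  refine ⟨R₂, fun ε hε => ?_⟩
  obtain ⟨m₂, hm₂, hm₂R, hm₂ε⟩ := hR₂ (ε / 2) (half_pos hε)
  obtain ⟨δ, hδ, hδε⟩ := Metric.uniformContinuousOn_iff_le.1
    ((isCompact_closedBall (0 : E) (R₁ + 1)).uniformContinuousOn_of_continuous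
      (hcont m₂ hm₂).continuousOn) (ε / 2) (half_pos hε)
  obtain ⟨η, hη, hηδ, hη1, hηε⟩ : ∃ η > 0, η ≤ δ ∧ η ≤ 1 ∧ η ≤ ε / 2 :=
    ⟨min δ (min 1 (ε / 2)), by positivity, by simp⟩
  obtain ⟨m₁, hm₁, hm₁R, hm₁η⟩ := hR₁ η hη
  have hm₁R' : ∀ x ∈ Metric.closedBall 0 R, m₁ x ∈ Metric.closedBall 0 (R₁ + 1) := fun x hx =>
    mem_closedBall_zero_iff.2 ((hm₁R x hx).trans (by linarith))
  refine ⟨m₂ ∘ m₁, hcomp m₁ hm₁ m₂ hm₂, fun x hx => hm₂R _ (hm₁R' x hx), ?_⟩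
  have hbad := volume_lt_norm_comp_sub_comp_le (T₂ := T₂) (m₁ := m₁) (m₂ := m₂) (δ := η)
    (B := Metric.closedBall 0 R) (B' := Metric.closedBall 0 (R₁ + 1)) (ε := ε / 2) (ε' := ε / 2)
    hT₁ fun x hx hxη => by
      have hT₁x : T₁ x ∈ Metric.closedBall 0 (R₁ + 1) := mem_closedBall_zero_iff.2 <| by
        linarith [norm_le_norm_add_norm_sub' (T₁ x) (m₁ x), hm₁R x hx]
      simp only [dist_eq_norm] at hδε
      exact ⟨hT₁x, hδε _ hT₁x _ (hm₁R' x hx) (hxη.trans hηδ)⟩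
  rw [add_halves] at hbad
  calc volume {x ∈ Metric.closedBall 0 R | ε < ‖(T₂ ∘ T₁) x - (m₂ ∘ m₁) x‖}
      ≤ ENNReal.ofReal (ε / 2) + ENNReal.ofReal (ε / 2) :=
        hbad.trans (add_le_add (hm₁η.trans (ENNReal.ofReal_le_ofReal hηε)) hm₂ε)
    _ = ENNReal.ofReal ε := by rw [← ENNReal.ofReal_add (by positivity) (by positivity), add_halves]

end LocallyApproximable

section Smoothing

open scoped Manifold in
-- On a compact set `K` of points at which `h` is locally constant, glue the local values of `h`
-- by a partition of unity; off `K` only the convex constraint of lying in the ball remains.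
theorem exists_contDiff_eq_of_ae_eventually_eq {E F : Type*} [NormedAddCommGroup E]
    [NormedSpace ℝ E] [FiniteDimensional ℝ E] [MeasurableSpace E] [BorelSpace E]
    [NormedAddCommGroup F] [NormedSpace ℝ F] (μ : Measure E) [IsFiniteMeasure μ] {h : E → F}
    {C : ℝ} (hC : 0 ≤ C) (hconst : ∀ᵐ x ∂μ, ∀ᶠ y in 𝓝 x, h y = h x)
    (hbdd : ∀ᵐ x ∂μ, ‖h x‖ ≤ C) {ε : ℝ≥0∞} (hε : ε ≠ 0) :
    ∃ g : E → F, ContDiff ℝ ∞ g ∧ (∀ x, ‖g x‖ ≤ C) ∧ μ {x | g x ≠ h x} ≤ ε := by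
  classical
  let V := {x | (∀ᶠ y in 𝓝 x, h y = h x) ∧ ‖h x‖ ≤ C}
  have hV : IsOpen V := isOpen_iff_eventually.2 fun x hx => by
    filter_upwards [hx.1, hx.1.eventually_nhds] with y hy hy'
    rw [← hy] at hy'
    exact ⟨hy', hy ▸ hx.2⟩
  obtain ⟨K, hKV, hK, hKε⟩ :=
    hV.measurableSet.exists_isCompact_sdiff_lt (measure_ne_top μ V) hε
  let t (x : E) : Set F := if x ∈ K then {h x} else Metric.closedBall 0 C
  obtain ⟨g, hg⟩ := exists_contMDiffMap_forall_mem_convex_of_local_const 𝓘(ℝ, E) (n := ⊤) (t := t)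
    (fun x => by
      by_cases hx : x ∈ K <;> simp only [t, hx, if_true, if_false]
      exacts [convex_singleton _, convex_closedBall _ _])
    (fun x => by
      by_cases hx : x ∈ V
      · refine ⟨h x, hx.1.mono fun y hy => ?_⟩
        by_cases hyK : y ∈ K <;> simp [t, hyK, hy, hx.2]
      · refine ⟨0, ?_⟩
        filter_upwards [hK.isClosed.isOpen_compl.mem_nhds fun hxK => hx (hKV hxK)] with y hy
        simpa [t, show y ∉ K from hy] using hC)
  have hgK : ∀ x ∈ K, g x = h x := fun x hx => by simpa [t, hx] using hg x
  refine ⟨g, g.contMDiff.contDiff, fun x => ?_, ?_⟩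
  · by_cases hx : x ∈ K
    · exact hgK x hx ▸ (hKV hx).2
    · simpa [t, hx] using hg x
  · have hVc : μ Vᶜ = 0 := mem_ae_iff.1 (by filter_upwards [hconst, hbdd] with x hx hx'
      using ⟨hx, hx'⟩)
    have hsub : {x | g x ≠ h x} ⊆ V \ K ∪ Vᶜ := fun x hx => by
      by_cases hxV : x ∈ V
      exacts [.inl ⟨hxV, fun hxK => hx (hgK x hxK)⟩, .inr hxV]
    calc μ {x | g x ≠ h x} ≤ μ (V \ K) + μ Vᶜ := (measure_mono hsub).trans (measure_union_le _ _)
      _ ≤ ε := by rw [hVc, add_zero]; exact hKε.le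

theorem eventually_gridIndex_eq {ι : Type*} [Finite ι] {N : ℕ} {x : ι → ℝ}
    (hx : ∀ i (n : ℤ), N * x i ≠ n) : ∀ᶠ y in 𝓝 x, gridIndex N y = gridIndex N x := by
  simp only [funext_iff, eventually_all]
  intro i
  have hlt : (⌊N * x i⌋ : ℝ) < N * x i := (Int.floor_le _).lt_of_ne (hx i _).symm
  have hcont : Continuous fun y : ι → ℝ => N * y i := by fun_prop
  filter_upwards [hcont.continuousAt.eventually
    (Ioo_mem_nhds hlt (Int.lt_floor_add_one (N * x i)))] with y hy
  exact Int.floor_eq_iff.2 ⟨hy.1.le, hy.2⟩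

theorem ae_mul_apply_ne_intCast {ι : Type*} [Fintype ι] {N : ℕ} (hN : N ≠ 0) :
    ∀ᵐ x : ι → ℝ, ∀ i (n : ℤ), N * x i ≠ n := by
  have hne : ∀ᵐ x : ι → ℝ, ∀ i (n : ℤ), x i ≠ n / N :=
    ae_all_iff.2 fun i => ae_all_iff.2 fun n => Measure.ae_eval_ne _ i _
  have hN' : (N : ℝ) ≠ 0 := Nat.cast_ne_zero.2 hN
  exact hne.mono fun x hx i n h => hx i n ((eq_div_iff hN').2 (mul_comm (N : ℝ) _ ▸ h))

theorem exists_norm_comp_gridIndex_le {ι F : Type*} [Fintype ι] [NormedAddCommGroup F] {N : ℕ}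
    (hN : N ≠ 0) (v : (ι → ℤ) → F) (R : ℝ) :
    ∃ C ≥ 0, ∀ x : ι → ℝ, ‖x‖ ≤ R → ‖v (gridIndex N x)‖ ≤ C := by
  classical
  obtain ⟨ρ, hρ⟩ := exists_nat_gt R
  refine ⟨∑ k ∈ gridBox ι N ρ, ‖v k‖, by positivity, fun x hx => ?_⟩
  exact Finset.single_le_sum (f := fun k => ‖v k‖) (fun _ _ => norm_nonneg _)
    (gridIndex_mem_gridBox_of_norm_lt hN (hx.trans_lt hρ))

-- Smoothing with respect to the pushforward of Lebesgue measure on the ball to the `T`-coordinates.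
theorem exists_contDiff_eq_comp_gridIndex {ι F : Type*} [Fintype ι] [NormedAddCommGroup F]
    [NormedSpace ℝ F] {N : ℕ} (hN : N ≠ 0) {T : Set ι} [Fintype T] (v : (T → ℤ) → F) (R : ℝ) :
    ∃ C ≥ 0, ∀ ε : ℝ≥0∞, ε ≠ 0 → ∃ g : (T → ℝ) → F, ContDiff ℝ ∞ g ∧ (∀ y, ‖g y‖ ≤ C) ∧
      volume {x ∈ Metric.closedBall (0 : ι → ℝ) R |
        g (T.domRestrict x) ≠ v (gridIndex N (T.domRestrict x))} ≤ ε := by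
  obtain ⟨C, hC, hvC⟩ := exists_norm_comp_gridIndex_le hN v R
  refine ⟨C, hC, fun ε hε => ?_⟩
  let B := Metric.closedBall (0 : ι → ℝ) R
  have hB : MeasurableSet B := Metric.isClosed_closedBall.measurableSet
  have : IsFiniteMeasure (volume.restrict B) :=
    isFiniteMeasure_restrict.2 measure_closedBall_lt_top.ne
  have hT : Measurable fun x : ι → ℝ => T.domRestrict x :=
    measurable_pi_lambda _ fun i => measurable_pi_apply i.1
  let μ := (volume.restrict B).map fun x => T.domRestrict x
  have hconst : ∀ᵐ y ∂μ, ∀ᶠ z in 𝓝 y, v (gridIndex N z) = v (gridIndex N y) := by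
    have hne : ∀ᵐ y ∂μ, ∀ i (n : ℤ), (N * y i : ℝ) ≠ n :=
      (ae_map_iff hT.aemeasurable (by measurability)).2
        (ae_restrict_of_ae ((ae_mul_apply_ne_intCast hN).mono fun x hx i => hx i))
    exact hne.mono fun y hy => (eventually_gridIndex_eq hy).mono fun z hz => by rw [hz]
  have hbdd : ∀ᵐ y ∂μ, ‖v (gridIndex N y)‖ ≤ C := by
    have hmeas : Measurable fun y : T → ℝ => ‖v (gridIndex N y)‖ :=
      (measurable_of_countable fun k => ‖v k‖).comp (measurable_gridIndex N)
    refine (ae_map_iff hT.aemeasurable (measurableSet_le hmeas measurable_const)).2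
      (ae_restrict_of_forall_mem hB fun x hx => hvC _ ?_)
    exact (pi_norm_le_iff_of_nonneg ((norm_nonneg x).trans (mem_closedBall_zero_iff.1 hx))).2
      fun i => (norm_le_pi_norm x i).trans (mem_closedBall_zero_iff.1 hx)
  obtain ⟨g, hg, hgC, hgε⟩ := exists_contDiff_eq_of_ae_eventually_eq μ hC hconst hbdd hε
  refine ⟨g, hg, hgC, le_trans ?_ ((Measure.le_map_apply hT.aemeasurable _).trans hgε)⟩
  rw [Measure.restrict_apply' hB, inter_comm]
  exact le_rfl

end Smoothing

section ApproximateShears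

variable {ι : Type*} [Fintype ι] {S T : Set ι} [Fintype S]

theorem norm_shear_le (f : (T → ℝ) → (S → ℝ)) (x : ι → ℝ) :
    ‖shear f x‖ ≤ ‖x‖ + ‖f (T.domRestrict x)‖ := by
  refine (pi_norm_le_iff_of_nonneg (by positivity)).2 fun i => ?_
  by_cases hi : i ∈ S
  · rw [shear_apply_of_mem f x hi]
    exact (norm_add_le _ _).trans (add_le_add (norm_le_pi_norm x i) (norm_le_pi_norm _ _))
  · rw [shear_apply_of_notMem f x hi]
    exact (norm_le_pi_norm x i).trans (le_add_of_nonneg_right (norm_nonneg _))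

variable [Fintype T] {Ψ : Set ((ι → ℝ) → (ι → ℝ))}

/-- The members of `Ψ` approximate, uniformly on balls, every smooth shear along `S` controlled by
the `T`-coordinates. -/
def ApproximatesSmoothShears (Ψ : Set ((ι → ℝ) → (ι → ℝ))) (S T : Set ι) [Fintype S]
    [Fintype T] : Prop :=
  ∀ g : (T → ℝ) → (S → ℝ), ContDiff ℝ ∞ g → ∀ R : ℝ, ∀ ε > 0,
    ∃ m ∈ Ψ, ∀ x ∈ Metric.closedBall 0 R, ‖shear g x - m x‖ ≤ ε

theorem ApproximatesSmoothShears.locallyApproximable_shear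
    (hΨ : ApproximatesSmoothShears Ψ S T) {N : ℕ} (hN : N ≠ 0) (v : (T → ℤ) → (S → ℝ)) :
    LocallyApproximable Ψ (shear fun y => v (gridIndex N y)) := by
  intro R
  obtain ⟨C, -, hC⟩ := exists_contDiff_eq_comp_gridIndex hN v R
  refine ⟨R + C + 1, fun ε hε => ?_⟩
  obtain ⟨g, hg, hgC, hgε⟩ := hC (ENNReal.ofReal ε) (ENNReal.ofReal_pos.2 hε).ne'
  obtain ⟨m, hm, hgm⟩ := hΨ g hg R (min ε 1) (by positivity)
  refine ⟨m, hm, fun x hx => ?_, (measure_mono ?_).trans hgε⟩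
  · have hx' : ‖x‖ ≤ R := mem_closedBall_zero_iff.1 hx
    linarith [norm_le_norm_add_norm_sub (shear g x) (m x), norm_shear_le g x,
      hgC (T.domRestrict x), (hgm x hx).trans (min_le_right _ _)]
  · rintro x ⟨hx, hxε⟩
    refine ⟨hx, fun hgv => hxε.not_ge ?_⟩
    rw [shear_congr (g := g) hgv.symm]
    exact (hgm x hx).trans (min_le_left _ _)

theorem locallyApproximable_gridMap (hcont : ∀ m ∈ Ψ, Continuous m)
    (hcomp : ∀ m₁ ∈ Ψ, ∀ m₂ ∈ Ψ, m₂ ∘ m₁ ∈ Ψ) (hST : Disjoint S T)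
    (hΨ : ApproximatesSmoothShears Ψ S T) (hΨ' : ApproximatesSmoothShears Ψ T S) {N : ℕ}
    (hN : N ≠ 0) {τ : Equiv.Perm (ι → ℤ)} (hτ : τ ∈ shearGroup ℤ hST) :
    LocallyApproximable Ψ (gridMap N τ) := by
  suffices h : LocallyApproximable Ψ (gridMap N τ) ∧ MeasurePreserving (gridMap N τ) from h.1
  have hshear (f : (T → ℤ) → (S → ℤ)) : LocallyApproximable Ψ (gridMap N (shear f)) ∧
      MeasurePreserving (gridMap N (shear f)) :=
    ⟨gridMap_shear N f ▸ hΨ.locallyApproximable_shear hN fun k i => (f k i : ℝ) / N,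
      measurePreserving_gridMap_shear hST N f⟩
  have hshear' (f : (S → ℤ) → (T → ℤ)) : LocallyApproximable Ψ (gridMap N (shear f)) ∧
      MeasurePreserving (gridMap N (shear f)) :=
    ⟨gridMap_shear N f ▸ hΨ'.locallyApproximable_shear hN fun k i => (f k i : ℝ) / N,
      measurePreserving_gridMap_shear hST.symm N f⟩
  induction hτ using Subgroup.closure_induction'' with
  | mem τ hτ =>
    obtain ⟨f, rfl⟩ | ⟨f, rfl⟩ := hτ
    exacts [hshear f, hshear' f]
  | inv_mem τ hτ =>
    obtain ⟨f, rfl⟩ | ⟨f, rfl⟩ := hτ <;> rw [shearPerm_inv]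
    exacts [hshear (-f), hshear' (-f)]
  | one =>
    rw [Equiv.Perm.coe_one, ← shear_zero (S := S) (T := T)]
    exact hshear 0
  | mul τ₁ τ₂ _ _ h₁ h₂ =>
    rw [Equiv.Perm.coe_mul, gridMap_comp hN]
    exact ⟨h₁.1.comp hcont hcomp h₂.1 h₂.2, h₁.2.comp h₂.2⟩

end ApproximateShears

section GridApproximation

variable {ι : Type*} [Fintype ι]

theorem eventually_exists_volume_symmDiff_gridIndex_preimage_le {A : Set (ι → ℝ)}
    (hA : MeasurableSet A) (hA' : volume A ≠ ⊤) {ε : ℝ≥0∞} (hε : ε ≠ 0) :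
    ∀ᶠ N : ℕ in atTop, ∃ P : Set (ι → ℤ), volume (symmDiff (gridIndex N ⁻¹' P) A) ≤ ε := by
  have hε2 : ε / 2 ≠ 0 := (ENNReal.half_pos hε).ne'
  obtain ⟨K, hKA, hK, hKε⟩ := hA.exists_isCompact_sdiff_lt hA' hε2
  obtain ⟨V, hAV, hV, -, hVε⟩ := hA.exists_isOpen_sdiff_lt hA' hε2
  obtain ⟨δ, hδ, hKV⟩ := hK.exists_thickening_subset_open hV (hKA.trans hAV)
  filter_upwards [tendsto_one_div_atTop_nhds_zero_nat.eventually_lt_const hδ, eventually_ne_atTop 0]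
    with N hNδ hN
  refine ⟨gridIndex N '' K, ?_⟩
  have hPV : gridIndex N ⁻¹' (gridIndex N '' K) ⊆ V := by
    rintro x ⟨y, hy, hyx⟩
    refine hKV (Metric.mem_thickening_iff.2 ⟨y, hy, ?_⟩)
    rw [dist_eq_norm]
    exact (norm_sub_le_of_gridIndex_eq hN hyx.symm).trans_lt hNδ
  calc volume (symmDiff (gridIndex N ⁻¹' (gridIndex N '' K)) A)
      ≤ volume (V \ A) + volume (A \ K) := by
        refine (measure_mono ?_).trans (measure_union_le _ _)
        exact union_subset_union (sdiff_subset_sdiff_left hPV)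
          (sdiff_subset_sdiff_right (subset_preimage_image _ K))
    _ ≤ ε := (add_le_add hVε.le hKε.le).trans_eq (ENNReal.add_halves ε)

theorem eventually_exists_pairwise_disjoint_gridIndex_preimage {γ : Type*} [Finite γ]
    {A : γ → Set (ι → ℝ)} (hA : ∀ j, MeasurableSet (A j)) (hA' : ∀ j, volume (A j) ≠ ⊤)
    (hdisj : Pairwise (Disjoint on A)) {ε : ℝ≥0∞} (hε : ε ≠ 0) :
    ∀ᶠ N : ℕ in atTop, ∃ P : γ → Set (ι → ℤ), Pairwise (Disjoint on P) ∧
      ∀ j, volume (symmDiff (gridIndex N ⁻¹' P j) (A j)) ≤ ε := by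
  cases nonempty_fintype γ
  have hε' : ε / Fintype.card γ ≠ 0 := (ENNReal.div_pos hε (ENNReal.natCast_ne_top _)).ne'
  filter_upwards [eventually_all.2 fun j =>
    eventually_exists_volume_symmDiff_gridIndex_preimage_le (hA j) (hA' j) hε'] with N hN
  choose P hP using hN
  let P' (j : γ) : Set (ι → ℤ) := {k ∈ P j | ∀ i, k ∈ P i → i = j}
  refine ⟨P', fun i j hij => Set.disjoint_left.2 fun k hi hj => hij (hj.2 i hi.1), fun j => ?_⟩
  have hsub : symmDiff (gridIndex N ⁻¹' P' j) (A j) ⊆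
      ⋃ i, symmDiff (gridIndex N ⁻¹' P i) (A i) := by
    rintro x (⟨hxP, hxA⟩ | ⟨hxA, hxP⟩)
    · exact mem_iUnion.2 ⟨j, .inl ⟨hxP.1, hxA⟩⟩
    · by_contra! hx
      simp only [mem_iUnion, mem_symmDiff, not_exists, not_or, not_and, not_not] at hx
      refine hxP ⟨(hx j).2 hxA, fun i hi => ?_⟩
      by_contra hij
      exact disjoint_left.1 (hdisj hij) ((hx i).1 hi) hxA
  calc volume (symmDiff (gridIndex N ⁻¹' P' j) (A j))
      ≤ ∑ i, volume (symmDiff (gridIndex N ⁻¹' P i) (A i)) :=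
        (measure_mono hsub).trans (measure_iUnion_fintype_le _ _)
    _ ≤ ∑ _i : γ, ε / Fintype.card γ := Finset.sum_le_sum fun i _ => hP i
    _ ≤ ε := by
        rw [Finset.sum_const, Finset.card_univ, nsmul_eq_mul]
        exact ENNReal.mul_div_le

end GridApproximation

section Rearrangement

theorem exists_perm_apply_eq {α κ : Type*} {X : Finset α} {u v : κ → α}
    (hu : Function.Injective u) (hv : Function.Injective v) (huX : ∀ j, u j ∈ X)
    (hvX : ∀ j, v j ∈ X) :
    ∃ e : Equiv.Perm α, MapsTo e X X ∧ ∀ j, e (u j) = v j := by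
  classical
  let u' (j : κ) : X := ⟨u j, huX j⟩
  let v' (j : κ) : X := ⟨v j, hvX j⟩
  have hu' : Function.Injective u' := fun j j' h => hu (congrArg Subtype.val h)
  have hv' : Function.Injective v' := fun j j' h => hv (congrArg Subtype.val h)
  let f : range u' ≃ range v' := (Equiv.ofInjective u' hu').symm.trans (Equiv.ofInjective v' hv')
  let e : Equiv.Perm X := f.extendSubtype
  have he (j : κ) : e (u' j) = v' j := by
    rw [f.extendSubtype_apply_of_mem _ (mem_range_self j)]
    simp [f, Equiv.ofInjective_symm_apply]
  refine ⟨Equiv.Perm.ofSubtype e, fun a ha => ?_, fun j => ?_⟩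
  · rw [Equiv.Perm.ofSubtype_apply_of_mem e ha]
    exact (e ⟨a, ha⟩).2
  · rw [Equiv.Perm.ofSubtype_apply_of_mem e (huX j)]
    exact congrArg Subtype.val (he j)

open scoped Finset in
theorem exists_perm_card_filter_notMem_le {α γ : Type*} [DecidableEq α] {X : Finset α}
    {P B : γ → Finset α} (hPX : ∀ j, P j ⊆ X) (hBX : ∀ j, B j ⊆ X)
    (hP : Pairwise (Disjoint on P)) (hB : Pairwise (Disjoint on B)) :
    ∃ e : Equiv.Perm α, MapsTo e X X ∧ ∀ j, #{a ∈ P j | e a ∉ B j} ≤ #(P j) - #(B j) := by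
  choose P' hP'P hP' using fun j =>
    Finset.exists_subset_card_eq (min_le_left (#(P j)) (#(B j)))
  choose B' hB'B hB' using fun j =>
    Finset.exists_subset_card_eq (min_le_right (#(P j)) (#(B j)))
  let f (j : γ) : P' j ≃ B' j := Finset.equivOfCardEq ((hP' j).trans (hB' j).symm)
  let u (a : Σ j, P' j) : α := a.2
  let v (a : Σ j, P' j) : α := f a.1 a.2
  have hu : Function.Injective u := by
    rintro ⟨i, a⟩ ⟨j, b⟩ (hab : (a : α) = b)
    obtain rfl : i = j := by
      by_contra hij
      exact Finset.disjoint_left.1 (hP hij) (hP'P i a.2) (hab ▸ hP'P j b.2)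
    rw [Subtype.ext hab]
  have hv : Function.Injective v := by
    rintro ⟨i, a⟩ ⟨j, b⟩ (hab : (f i a : α) = f j b)
    obtain rfl : i = j := by
      by_contra hij
      exact Finset.disjoint_left.1 (hB hij) (hB'B i (f i a).2) (hab ▸ hB'B j (f j b).2)
    rw [(f i).injective (Subtype.ext hab)]
  obtain ⟨e, heX, he⟩ := exists_perm_apply_eq hu hv (fun a => hPX a.1 (hP'P a.1 a.2.2))
    fun a => hBX a.1 (hB'B a.1 (f a.1 a.2).2)
  refine ⟨e, heX, fun j => ?_⟩
  calc #{a ∈ P j | e a ∉ B j} ≤ #(P j \ P' j) := Finset.card_le_card fun a ha => by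
        obtain ⟨haP, haB⟩ := Finset.mem_filter.1 ha
        refine Finset.mem_sdiff.2 ⟨haP, fun haP' => haB ?_⟩
        rw [show e a = f j ⟨a, haP'⟩ from he ⟨j, a, haP'⟩]
        exact hB'B j (f j ⟨a, haP'⟩).2
    _ = #(P j) - #(B j) := by rw [Finset.card_sdiff_of_subset (hP'P j), hP' j]; omega

variable {ι : Type*} [Fintype ι]

/-- The indices in `X` of the cells of an `L` times finer grid which lie in the cell of index `j`;
the quotient `k i / L` is the floor division of integers. -/
def subcells (L : ℕ) (X : Finset (ι → ℤ)) (j : ι → ℤ) : Finset (ι → ℤ) :=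
  {k ∈ X | ∀ i, k i / L = j i}

theorem volume_gridIndex_preimage_le_sub {N : ℕ} (hN : N ≠ 0) {C P B : Finset (ι → ℤ)}
    (h : C.card ≤ P.card - B.card) :
    volume (gridIndex N ⁻¹' (C : Set (ι → ℤ))) ≤
      volume (gridIndex N ⁻¹' (P : Set (ι → ℤ))) - volume (gridIndex N ⁻¹' (B : Set (ι → ℤ))) := by
  simp only [volume_gridIndex_preimage hN]
  rw [← ENNReal.sub_mul fun _ _ => ENNReal.pow_ne_top ENNReal.ofReal_ne_top, ← ENNReal.natCast_sub]
  gcongr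

theorem exists_perm_volume_notMem_le {γ : Type*} {N : ℕ} (hN : N ≠ 0) {X : Finset (ι → ℤ)}
    {P : γ → Set (ι → ℤ)} (hP : Pairwise (Disjoint on P)) {B : γ → Finset (ι → ℤ)}
    (hBX : ∀ j, B j ⊆ X) (hB : Pairwise (Disjoint on B)) {A : γ → Set (ι → ℝ)}
    (hAX : ∀ j, A j ⊆ gridIndex N ⁻¹' (X : Set (ι → ℤ)))
    (hAB : ∀ j, volume (A j) ≤ volume (gridIndex N ⁻¹' (B j : Set (ι → ℤ)))) {δ : ℝ≥0∞}
    (hPA : ∀ j, volume (symmDiff (gridIndex N ⁻¹' P j) (A j)) ≤ δ) :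
    ∃ e : Equiv.Perm (ι → ℤ), MapsTo e X X ∧
      ∀ j, volume {x ∈ A j | e (gridIndex N x) ∉ B j} ≤ 2 * δ := by
  classical
  let Q (j : γ) : Finset (ι → ℤ) := {k ∈ X | k ∈ P j}
  have hQ : Pairwise (Disjoint on Q) := fun i j hij => Finset.disjoint_left.2 fun k hi hj =>
    disjoint_left.1 (hP hij) (Finset.mem_filter.1 hi).2 (Finset.mem_filter.1 hj).2
  obtain ⟨e, heX, he⟩ :=
    exists_perm_card_filter_notMem_le (fun j => Finset.filter_subset _ X) hBX hQ hB
  refine ⟨e, heX, fun j => ?_⟩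
  let C : Finset (ι → ℤ) := {k ∈ Q j | e k ∉ B j}
  have hC : volume (gridIndex N ⁻¹' (C : Set (ι → ℤ))) ≤ δ :=
    calc volume (gridIndex N ⁻¹' (C : Set (ι → ℤ)))
        ≤ volume (gridIndex N ⁻¹' (Q j : Set (ι → ℤ))) -
            volume (gridIndex N ⁻¹' (B j : Set (ι → ℤ))) :=
          volume_gridIndex_preimage_le_sub hN (he j)
      _ ≤ volume (gridIndex N ⁻¹' P j) - volume (A j) := by
          have hQP : (Q j : Set (ι → ℤ)) ⊆ P j := fun k hk => (Finset.mem_filter.1 hk).2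
          exact tsub_le_tsub (measure_mono (preimage_mono hQP)) (hAB j)
      _ ≤ volume (gridIndex N ⁻¹' P j \ A j) := le_measure_sdiff
      _ ≤ δ := (measure_mono subset_union_left).trans (hPA j)
  calc volume {x ∈ A j | e (gridIndex N x) ∉ B j}
      ≤ volume (symmDiff (gridIndex N ⁻¹' P j) (A j)) +
          volume (gridIndex N ⁻¹' (C : Set (ι → ℤ))) := by
        refine (measure_mono ?_).trans (measure_union_le _ _)
        rintro x ⟨hxA, hxB⟩
        by_cases hxP : gridIndex N x ∈ P j
        · exact .inr (Finset.mem_filter.2 ⟨Finset.mem_filter.2 ⟨hAX j hxA, hxP⟩, hxB⟩)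
        · exact .inl (.inr ⟨hxA, hxP⟩)
    _ ≤ 2 * δ := (add_le_add (hPA j) hC).trans_eq (two_mul δ).symm

theorem mem_subcells_gridIndex [DecidableEq ι] {L M : ℕ} (hL : L ≠ 0) (hM : M ≠ 0) {ρ : ℕ}
    {j : ι → ℤ} (hj : j ∈ gridBox ι M ρ) (x : ι → ℝ) :
    gridIndex (L * M) x ∈ subcells L (gridBox ι (L * M) ρ) j ↔ gridIndex M x = j := by
  simp only [subcells, Finset.mem_filter, gridIndex_mul_ediv hL, ← funext_iff]
  refine and_iff_right_of_imp fun h : gridIndex M x = j => ?_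
  rw [gridIndex_mem_gridBox (mul_ne_zero hL hM), ← gridIndex_mem_gridBox hM, h]
  exact hj

theorem pairwise_disjoint_subcells (L : ℕ) (X : Finset (ι → ℤ)) :
    Pairwise (Disjoint on subcells L X) := fun _ _ hij =>
  Finset.disjoint_left.2 fun _ hi hj => hij <| funext fun a =>
    ((Finset.mem_filter.1 hi).2 a).symm.trans ((Finset.mem_filter.1 hj).2 a)

theorem setOf_lt_norm_sub_gridMap_subset [DecidableEq ι] {L M : ℕ} (hL : L ≠ 0) (hM : M ≠ 0)
    {U : Set (ι → ℝ)} {ψ : (ι → ℝ) → (ι → ℝ)} {ρ : ℕ} (hψρ : ∀ x ∈ U, ‖ψ x‖ < ρ) {ε : ℝ}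
    (hMε : 1 / (M : ℝ) ≤ ε) (e : (ι → ℤ) → (ι → ℤ)) :
    {x ∈ U | ε < ‖ψ x - gridMap (L * M) e x‖} ⊆ ⋃ j : gridBox ι M ρ,
      {x ∈ U ∩ ψ ⁻¹' (gridIndex M ⁻¹' {j.1}) |
        e (gridIndex (L * M) x) ∉ subcells L (gridBox ι (L * M) ρ) j.1} := by
  rintro x ⟨hxU, hxε⟩
  have hj : gridIndex M (ψ x) ∈ gridBox ι M ρ := gridIndex_mem_gridBox_of_norm_lt hM (hψρ x hxU)
  refine mem_iUnion.2 ⟨⟨_, hj⟩, ⟨hxU, rfl⟩, fun he => hxε.not_ge ?_⟩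
  rw [← gridIndex_gridMap (mul_ne_zero hL hM) e x, mem_subcells_gridIndex hL hM hj] at he
  exact (norm_sub_le_of_gridIndex_eq hM he.symm).trans hMε

theorem exists_gridMap_volume_le [DecidableEq ι] {U : Set (ι → ℝ)} (hU : MeasurableSet U)
    {ψ : (ι → ℝ) → (ι → ℝ)} (hψ : Measurable ψ)
    (hvol : ∀ B, MeasurableSet B → volume (U ∩ ψ ⁻¹' B) ≤ volume B) {ρ : ℕ}
    (hUρ : ∀ x ∈ U, ‖x‖ < ρ) (hψρ : ∀ x ∈ U, ‖ψ x‖ < ρ) {ε : ℝ} (hε : 0 < ε) :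
    ∃ N ≠ 0, ∃ e : Equiv.Perm (ι → ℤ), MapsTo e (gridBox ι N ρ) (gridBox ι N ρ) ∧
      volume {x ∈ U | ε < ‖ψ x - gridMap N e x‖} ≤ ENNReal.ofReal ε := by
  obtain ⟨M, hM, hMε⟩ : ∃ M : ℕ, M ≠ 0 ∧ 1 / (M : ℝ) < ε :=
    (exists_nat_one_div_lt hε).imp' (· + 1) fun n hn => ⟨n.succ_ne_zero, by exact_mod_cast hn⟩
  let A (j : gridBox ι M ρ) : Set (ι → ℝ) := U ∩ ψ ⁻¹' (gridIndex M ⁻¹' {j.1})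
  have hcell (k : ι → ℤ) : MeasurableSet (gridIndex M ⁻¹' {k}) :=
    measurable_gridIndex M (measurableSet_singleton k)
  have hA (j) : MeasurableSet (A j) := hU.inter (hψ (hcell j))
  have hA_vol (j) : volume (A j) ≤ volume (gridIndex M ⁻¹' {j.1}) := hvol _ (hcell j)
  have hA_top (j) : volume (A j) ≠ ⊤ := ((hA_vol j).trans_lt (by
    rw [volume_gridIndex_preimage_singleton hM]
    exact ENNReal.pow_lt_top ENNReal.ofReal_lt_top)).ne
  have hA_disj : Pairwise (Disjoint on A) := fun i j hij =>
    disjoint_left.2 fun x hi hj => hij (Subtype.ext (hi.2.symm.trans hj.2))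
  let δ := ENNReal.ofReal ε / Fintype.card (gridBox ι M ρ) / 2
  have hδ : δ ≠ 0 := (ENNReal.half_pos (ENNReal.div_pos (ENNReal.ofReal_pos.2 hε).ne'
    (ENNReal.natCast_ne_top _)).ne').ne'
  obtain ⟨L, ⟨P, hP, hPA⟩, hL⟩ := (((tendsto_id.atTop_mul_const' hM.bot_lt).eventually
    (eventually_exists_pairwise_disjoint_gridIndex_preimage hA hA_top hA_disj hδ)).and
      (eventually_ne_atTop 0)).exists
  have hN : L * M ≠ 0 := mul_ne_zero hL hM
  obtain ⟨e, heX, he⟩ := exists_perm_volume_notMem_le hN (X := gridBox ι (L * M) ρ) hP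
    (B := fun j => subcells L (gridBox ι (L * M) ρ) j.1) (fun j => Finset.filter_subset _ _)
    ((pairwise_disjoint_subcells L _).comp_of_injective Subtype.val_injective) (A := A)
    (fun j x hx => gridIndex_mem_gridBox_of_norm_lt hN (hUρ x hx.1))
    (fun j => (hA_vol j).trans (measure_mono fun x hx =>
      (mem_subcells_gridIndex hL hM j.2 x).2 hx)) hPA
  refine ⟨L * M, hN, e, heX, ?_⟩
  calc volume {x ∈ U | ε < ‖ψ x - gridMap (L * M) e x‖}
      ≤ ∑ j, volume {x ∈ A j | e (gridIndex (L * M) x) ∉ subcells L (gridBox ι (L * M) ρ) j.1} :=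
        (measure_mono (setOf_lt_norm_sub_gridMap_subset hL hM hψρ hMε.le e)).trans
          (measure_iUnion_fintype_le _ _)
    _ ≤ ∑ _j : gridBox ι M ρ, ENNReal.ofReal ε / Fintype.card (gridBox ι M ρ) :=
        Finset.sum_le_sum fun j _ => (he j).trans_eq
          (ENNReal.mul_div_cancel two_ne_zero ENNReal.ofNat_ne_top)
    _ ≤ ENNReal.ofReal ε := by
        rw [Finset.sum_const, Finset.card_univ, nsmul_eq_mul]
        exact ENNReal.mul_div_le

end Rearrangement

section LpNorm

variable {α : Type*} [MeasurableSpace α] {μ : Measure α}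

theorem exists_pos_forall_eLpNorm_le {E : Type*} [NormedAddCommGroup E] [IsFiniteMeasure μ]
    {p : ℝ≥0∞} (hp0 : p ≠ 0) (hp : p ≠ ⊤) (C : ℝ) {ε : ℝ≥0∞} (hε : ε ≠ 0) :
    ∃ δ > 0, ∀ f : α → E, (∀ᵐ x ∂μ, ‖f x‖ ≤ C) → μ {x | δ < ‖f x‖} ≤ ENNReal.ofReal δ →
      eLpNorm f p μ ≤ ε := by
  let q := p.toReal
  have hq : 0 < q := ENNReal.toReal_pos hp0 hp
  have hlim : Tendsto (fun δ : ℝ => ENNReal.ofReal δ ^ q * μ univ +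
      ENNReal.ofReal C ^ q * ENNReal.ofReal δ) (𝓝 0) (𝓝 0) := by
    have hδ : Tendsto ENNReal.ofReal (𝓝 0) (𝓝 0) := by
      simpa using ENNReal.continuous_ofReal.tendsto 0
    have hδq : Tendsto (fun δ => ENNReal.ofReal δ ^ q) (𝓝 0) (𝓝 0) := by
      simpa [hq] using hδ.ennrpow_const q
    simpa using (ENNReal.Tendsto.mul_const hδq (.inr (measure_ne_top μ univ))).add
      (ENNReal.Tendsto.const_mul hδ (.inr (by finiteness)))
  obtain ⟨δ, hδε, hδ : 0 < δ⟩ := (((hlim.eventually_lt_const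
    (ENNReal.rpow_pos_of_nonneg hε.bot_lt hq.le)).filter_mono nhdsWithin_le_nhds).and
      (self_mem_nhdsWithin (s := Ioi 0))).exists
  refine ⟨δ, hδ, fun f hfC hfδ => ?_⟩
  have hf : ∀ᵐ x ∂μ, ‖f x‖ₑ ^ q ≤
      ENNReal.ofReal δ ^ q + {x | δ < ‖f x‖}.indicator (fun _ => ENNReal.ofReal C ^ q) x := by
    filter_upwards [hfC] with x hx
    rw [← ofReal_norm]
    by_cases hxδ : δ < ‖f x‖
    · rw [indicator_of_mem (s := {x | δ < ‖f x‖}) hxδ]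
      exact le_add_left (by gcongr)
    · refine le_add_right ?_
      gcongr
      exact not_lt.1 hxδ
  rw [eLpNorm_eq_lintegral_rpow_enorm_toReal hp0 hp, one_div, ENNReal.rpow_inv_le_iff hq]
  calc ∫⁻ x, ‖f x‖ₑ ^ q ∂μ
      ≤ ENNReal.ofReal δ ^ q * μ univ + ENNReal.ofReal C ^ q * μ {x | δ < ‖f x‖} := by
        refine (lintegral_mono_ae hf).trans ?_
        rw [lintegral_add_left measurable_const, lintegral_const]
        gcongr
        exact lintegral_indicator_const_le _ _
    _ ≤ ε ^ q := le_trans (by gcongr) hδε.le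

theorem integral_rpow_abs_apply_le {ι : Type*} [Fintype ι] {f : α → ι → ℝ}
    (hf : AEStronglyMeasurable f μ) {p : ℝ} (hp : 0 < p) {ε : ℝ} (hε : 0 ≤ ε)
    (hfε : eLpNorm f (ENNReal.ofReal p) μ ≤ ENNReal.ofReal ε) (i : ι) :
    (∫ x, |f x i| ^ p ∂μ) ^ (1 / p) ≤ ε := by
  have hle : eLpNorm (fun x => f x i) (ENNReal.ofReal p) μ ≤ ENNReal.ofReal ε :=
    (eLpNorm_mono fun x => norm_le_pi_norm (f x) i).trans hfε
  have hmem : MemLp (fun x => f x i) (ENNReal.ofReal p) μ :=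
    ⟨(continuous_apply i).comp_aestronglyMeasurable hf, hle.trans_lt ENNReal.ofReal_lt_top⟩
  rw [hmem.eLpNorm_eq_integral_rpow_norm (ENNReal.ofReal_pos.2 hp).ne' ENNReal.ofReal_ne_top,
    ENNReal.toReal_ofReal hp.le, ENNReal.ofReal_le_ofReal_iff hε] at hle
  simpa only [one_div, Real.norm_eq_abs] using hle

end LpNorm

section Approximation

variable {ι : Type*} [Fintype ι] {S T : Set ι} [Fintype S] [Fintype T]
  {Ψ : Set ((ι → ℝ) → (ι → ℝ))}

theorem exists_locallyApproximable_volume_le (hcont : ∀ m ∈ Ψ, Continuous m)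
    (hcomp : ∀ m₁ ∈ Ψ, ∀ m₂ ∈ Ψ, m₂ ∘ m₁ ∈ Ψ) (hST : IsCompl S T) (hS : S.Nonempty)
    (hT : T.Nonempty) (hΨ : ApproximatesSmoothShears Ψ S T) (hΨ' : ApproximatesSmoothShears Ψ T S)
    {U : Set (ι → ℝ)} (hU : MeasurableSet U) {ψ : (ι → ℝ) → (ι → ℝ)} (hψ : Measurable ψ)
    (hvol : ∀ B, MeasurableSet B → volume (U ∩ ψ ⁻¹' B) ≤ volume B) {ρ : ℕ}
    (hUρ : ∀ x ∈ U, ‖x‖ < ρ) (hψρ : ∀ x ∈ U, ‖ψ x‖ < ρ) {ε : ℝ} (hε : 0 < ε) :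
    ∃ G : (ι → ℝ) → (ι → ℝ), LocallyApproximable Ψ G ∧ Measurable G ∧ (∀ x ∈ U, ‖G x‖ ≤ ρ) ∧
      volume {x ∈ U | ε < ‖ψ x - G x‖} ≤ ENNReal.ofReal ε := by
  classical
  obtain ⟨N, hN, e, heρ, heε⟩ := exists_gridMap_volume_le hU hψ hvol hUρ hψρ hε
  obtain ⟨τ, hτ, hτe⟩ := exists_mem_shearGroup_apply_eq hST hS hT
    (c := fun k : gridBox ι N ρ => (k : ι → ℤ)) (c' := fun k => e k) Subtype.val_injective
    (e.injective.comp Subtype.val_injective)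
  have hbox : ∀ x ∈ U, gridIndex N x ∈ gridBox ι N ρ := fun x hx =>
    gridIndex_mem_gridBox_of_norm_lt hN (hUρ x hx)
  have hτU : ∀ x ∈ U, τ (gridIndex N x) = e (gridIndex N x) := fun x hx => hτe ⟨_, hbox x hx⟩
  refine ⟨gridMap N τ, locallyApproximable_gridMap hcont hcomp hST.disjoint hΨ hΨ' hN hτ,
    measurable_gridMap N τ, fun x hx => ?_, le_trans (measure_mono ?_) heε⟩
  · refine norm_le_of_gridIndex_mem_gridBox hN ?_
    rw [gridIndex_gridMap hN, hτU x hx]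
    exact heρ (hbox x hx)
  · rintro x ⟨hxU, hxε⟩
    refine ⟨hxU, ?_⟩
    unfold gridMap at hxε ⊢
    rwa [hτU x hxU] at hxε

theorem exists_mem_eLpNorm_sub_le (hcont : ∀ m ∈ Ψ, Continuous m)
    (hcomp : ∀ m₁ ∈ Ψ, ∀ m₂ ∈ Ψ, m₂ ∘ m₁ ∈ Ψ) (hST : IsCompl S T) (hS : S.Nonempty)
    (hT : T.Nonempty) (hΨ : ApproximatesSmoothShears Ψ S T) (hΨ' : ApproximatesSmoothShears Ψ T S)
    {U : Set (ι → ℝ)} (hU : MeasurableSet U) (hU' : Bornology.IsBounded U)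
    {ψ : (ι → ℝ) → (ι → ℝ)} (hψ : Measurable ψ) (hψU : Bornology.IsBounded (ψ '' U))
    (hvol : ∀ B, MeasurableSet B → volume (U ∩ ψ ⁻¹' B) ≤ volume B) {p : ℝ≥0∞} (hp0 : p ≠ 0)
    (hp : p ≠ ⊤) {ε : ℝ≥0∞} (hε : ε ≠ 0) :
    ∃ m ∈ Ψ, eLpNorm (ψ - m) p (volume.restrict U) ≤ ε := by
  have : IsFiniteMeasure (volume.restrict U) := isFiniteMeasure_restrict.2 hU'.measure_lt_top.ne
  obtain ⟨ρ, hUρ, hψρ⟩ : ∃ ρ : ℕ, (∀ x ∈ U, ‖x‖ < ρ) ∧ ∀ x ∈ U, ‖ψ x‖ < ρ := by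
    obtain ⟨R, hR⟩ := (hU'.union hψU).exists_norm_le
    obtain ⟨ρ, hρ⟩ := exists_nat_gt R
    exact ⟨ρ, fun x hx => (hR x (.inl hx)).trans_lt hρ,
      fun x hx => (hR _ (.inr (mem_image_of_mem ψ hx))).trans_lt hρ⟩
  obtain ⟨η, hη, hηε⟩ := exists_Lp_half (ι → ℝ) (volume.restrict U) p hε
  obtain ⟨δ, hδ, hδη⟩ := exists_pos_forall_eLpNorm_le (μ := volume.restrict U) (E := ι → ℝ) hp0 hp
    (ρ + ρ) hη.ne'
  obtain ⟨G, hG, hGm, hGρ, hGδ⟩ :=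
    exists_locallyApproximable_volume_le hcont hcomp hST hS hT hΨ hΨ' hU hψ hvol hUρ hψρ hδ
  obtain ⟨R', hR'⟩ := hG ρ
  obtain ⟨δ', hδ', hδη'⟩ := exists_pos_forall_eLpNorm_le (μ := volume.restrict U) (E := ι → ℝ)
    hp0 hp (ρ + R') hη.ne'
  obtain ⟨m, hm, hmR', hmδ'⟩ := hR' δ' hδ'
  have hUball : U ⊆ Metric.closedBall 0 ρ := fun x hx => mem_closedBall_zero_iff.2 (hUρ x hx).le
  have hψG : eLpNorm (ψ - G) p (volume.restrict U) ≤ η := by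
    refine hδη _ (ae_restrict_of_forall_mem hU fun x hx =>
      (norm_sub_le _ _).trans (add_le_add (hψρ x hx).le (hGρ x hx))) ?_
    rw [Measure.restrict_apply' hU, inter_comm]
    exact hGδ
  have hGm' : eLpNorm (G - m) p (volume.restrict U) ≤ η := by
    refine hδη' _ (ae_restrict_of_forall_mem hU fun x hx =>
      (norm_sub_le _ _).trans (add_le_add (hGρ x hx) (hmR' x (hUball hx)))) ?_
    rw [Measure.restrict_apply' hU, inter_comm]
    exact (measure_mono (inter_subset_inter_left _ hUball)).trans hmδ'
  have hm_meas := (hcont m hm).measurable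
  have := hηε (ψ - G) (G - m) (hψ.sub hGm).aestronglyMeasurable
    (hGm.sub hm_meas).aestronglyMeasurable hψG hGm'
  rw [sub_add_sub_cancel] at this
  exact ⟨m, hm, this.le⟩

end Approximation

section Psi

theorem foldl_comp_comp {α : Type*} (l : List (α → α)) (f g : α → α) :
    l.foldl (fun h m => m ∘ h) f ∘ g = l.foldl (fun h m => m ∘ h) (f ∘ g) := by
  induction l generalizing f with
  | nil => rfl
  | cons m _ ih => exact ih (m ∘ f)

theorem continuous_foldl_comp {α : Type*} [TopologicalSpace α] {l : List (α → α)}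
    (hl : ∀ m ∈ l, Continuous m) : Continuous (l.foldl (fun h m => m ∘ h) id) :=
  List.foldlRecOn l _ continuous_id fun _ hh m hm => (hl m hm).comp hh

theorem _root_.IsGoodFamily.continuous {ι κ : Type} [Fintype ι] [Fintype κ]
    {F : Set ((ι → ℝ) → (κ → ℝ))} (hF : IsGoodFamily F) {f : (ι → ℝ) → (κ → ℝ)} (hf : f ∈ F) :
    Continuous f :=
  continuous_iff_continuousAt.2 fun x => by
    obtain ⟨L, hL⟩ := hF.1 f hf (Metric.closedBall x 1) (isCompact_closedBall x 1)
    exact hL.continuousOn.continuousAt (Metric.closedBall_mem_nhds x one_pos)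

theorem continuous_shear {ι : Type*} {S T : Set ι} {f : (T → ℝ) → (S → ℝ)} (hf : Continuous f) :
    Continuous (shear f) := by
  refine continuous_pi fun i => ?_
  by_cases hi : i ∈ S
  · simp only [shear_apply_of_mem f _ hi]
    exact (continuous_apply i).add ((continuous_apply _).comp (hf.comp
      (continuous_pi fun j => continuous_apply j.1)))
  · simpa only [shear_apply_of_notMem f _ hi] using continuous_apply i

theorem norm_shear_sub_shear_le {ι : Type*} [Fintype ι] {S T : Set ι} [Fintype S]
    (f g : (T → ℝ) → (S → ℝ)) (x : ι → ℝ) :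
    ‖shear f x - shear g x‖ ≤ ‖f (T.domRestrict x) - g (T.domRestrict x)‖ := by
  refine (pi_norm_le_iff_of_nonneg (norm_nonneg _)).2 fun i => ?_
  rw [Pi.sub_apply]
  by_cases hi : i ∈ S
  · rw [shear_apply_of_mem f x hi, shear_apply_of_mem g x hi, add_sub_add_left_eq_sub]
    exact norm_le_pi_norm (f (T.domRestrict x) - g (T.domRestrict x)) ⟨i, hi⟩
  · rw [shear_apply_of_notMem f x hi, shear_apply_of_notMem g x hi, sub_self, norm_zero]
    exact norm_nonneg _

theorem _root_.IsGoodFamily.approximatesSmoothShears {ι : Type} [Fintype ι] {S T : Set ι}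
    [Fintype S] [Fintype T] {F : Set ((T → ℝ) → (S → ℝ))} (hF : IsGoodFamily F)
    {Ψ : Set ((ι → ℝ) → (ι → ℝ))} (hΨ : ∀ f ∈ F, shear f ∈ Ψ) :
    ApproximatesSmoothShears Ψ S T := by
  intro g hg R ε hε
  have hcont : Continuous fun x : ι → ℝ => T.domRestrict x :=
    continuous_pi fun j => continuous_apply j.1
  obtain ⟨f, hf, hgf⟩ := hF.2 _ ((isCompact_closedBall 0 R).image hcont) g hg ε hε
  exact ⟨shear f, hΨ f hf, fun x hx =>
    (norm_shear_sub_shear_le g f x).trans (hgf _ (mem_image_of_mem _ hx))⟩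

section Modules

variable {D s : ℕ}

theorem upModule_eq_shear
    (f : ({i : Fin D // ¬ i.val < s - 1} → ℝ) → ({i : Fin D // i.val < s - 1} → ℝ)) :
    upModule D s f =
      shear (S := {i : Fin D | i.val < s - 1}) (T := {i : Fin D | ¬ i.val < s - 1}) f := by
  ext x i
  by_cases hi : i.val < s - 1
  · exact (dif_pos hi).trans (shear_apply_of_mem (S := {i : Fin D | i.val < s - 1})
      (T := {i : Fin D | ¬ i.val < s - 1}) f x hi).symm
  · exact (dif_neg hi).trans (shear_apply_of_notMem (S := {i : Fin D | i.val < s - 1})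
      (T := {i : Fin D | ¬ i.val < s - 1}) f x hi).symm

theorem lowModule_eq_shear
    (f : ({i : Fin D // i.val < s - 1} → ℝ) → ({i : Fin D // ¬ i.val < s - 1} → ℝ)) :
    lowModule D s f =
      shear (S := {i : Fin D | ¬ i.val < s - 1}) (T := {i : Fin D | i.val < s - 1}) f := by
  ext x i
  by_cases hi : i.val < s - 1
  · exact (dif_pos hi).trans (shear_apply_of_notMem (S := {i : Fin D | ¬ i.val < s - 1})
      (T := {i : Fin D | i.val < s - 1}) f x (not_not.2 hi)).symm
  · exact (dif_neg hi).trans (shear_apply_of_mem (S := {i : Fin D | ¬ i.val < s - 1})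
      (T := {i : Fin D | i.val < s - 1}) f x hi).symm

variable {NN1 : Set (({i : Fin D // ¬ i.val < s - 1} → ℝ) → ({i : Fin D // i.val < s - 1} → ℝ))}
  {NN2 : Set (({i : Fin D // i.val < s - 1} → ℝ) → ({i : Fin D // ¬ i.val < s - 1} → ℝ))}

theorem comp_mem_Psi {m₁ m₂ : (Fin D → ℝ) → (Fin D → ℝ)} (h₁ : m₁ ∈ Psi D s NN1 NN2)
    (h₂ : m₂ ∈ Psi D s NN1 NN2) : m₂ ∘ m₁ ∈ Psi D s NN1 NN2 := by
  obtain ⟨l₁, hl₁, hm₁, rfl⟩ := h₁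
  obtain ⟨l₂, -, hm₂, rfl⟩ := h₂
  refine ⟨l₁ ++ l₂, List.append_ne_nil_of_left_ne_nil hl₁ l₂, fun m hm => ?_, ?_⟩
  · exact (List.mem_append.1 hm).elim (hm₁ m) (hm₂ m)
  · rw [List.foldl_append, foldl_comp_comp, Function.id_comp]

theorem upModule_mem_Psi {f} (hf : f ∈ NN1) : upModule D s f ∈ Psi D s NN1 NN2 :=
  ⟨[upModule D s f], List.cons_ne_nil _ _, by simpa using .inl ⟨f, hf, rfl⟩, rfl⟩

theorem lowModule_mem_Psi {f} (hf : f ∈ NN2) : lowModule D s f ∈ Psi D s NN1 NN2 :=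
  ⟨[lowModule D s f], List.cons_ne_nil _ _, by simpa using .inr ⟨f, hf, rfl⟩, rfl⟩

theorem continuous_of_mem_Psi (hNN1 : IsGoodFamily NN1) (hNN2 : IsGoodFamily NN2)
    {m : (Fin D → ℝ) → (Fin D → ℝ)} (hm : m ∈ Psi D s NN1 NN2) : Continuous m := by
  obtain ⟨l, -, hl, rfl⟩ := hm
  refine continuous_foldl_comp fun m hm => ?_
  obtain ⟨f, hf, rfl⟩ | ⟨f, hf, rfl⟩ := hl m hm
  · rw [upModule_eq_shear]
    exact continuous_shear (hNN1.continuous hf)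
  · rw [lowModule_eq_shear]
    exact continuous_shear (hNN2.continuous hf)

theorem approximatesSmoothShears_Psi_up (hNN1 : IsGoodFamily NN1) :
    ApproximatesSmoothShears (Psi D s NN1 NN2)
      {i : Fin D | i.val < s - 1} {i : Fin D | ¬ i.val < s - 1} :=
  IsGoodFamily.approximatesSmoothShears (S := {i : Fin D | i.val < s - 1})
    (T := {i : Fin D | ¬ i.val < s - 1}) hNN1 fun f hf =>
      upModule_eq_shear f ▸ upModule_mem_Psi hf

theorem approximatesSmoothShears_Psi_low (hNN2 : IsGoodFamily NN2) :
    ApproximatesSmoothShears (Psi D s NN1 NN2)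
      {i : Fin D | ¬ i.val < s - 1} {i : Fin D | i.val < s - 1} :=
  IsGoodFamily.approximatesSmoothShears (S := {i : Fin D | ¬ i.val < s - 1})
    (T := {i : Fin D | i.val < s - 1}) hNN2 fun f hf =>
      lowModule_eq_shear f ▸ lowModule_mem_Psi hf

end Modules

end Psi

theorem volume_inter_preimage_le {α β : Type*} [MeasureSpace α] [MeasureSpace β] {U : Set α}
    {ψ : α → β} (himg : MeasurableSet (ψ '' U))
    (hmp : ∀ B ⊆ ψ '' U, MeasurableSet B → volume (U ∩ ψ ⁻¹' B) = volume B) (B : Set β)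
    (hB : MeasurableSet B) : volume (U ∩ ψ ⁻¹' B) ≤ volume B :=
  calc volume (U ∩ ψ ⁻¹' B) ≤ volume (U ∩ ψ ⁻¹' (B ∩ ψ '' U)) :=
        measure_mono fun _ hx => ⟨hx.1, hx.2, mem_image_of_mem ψ hx.1⟩
    _ = volume (B ∩ ψ '' U) := hmp _ inter_subset_right (hB.inter himg)
    _ ≤ volume B := measure_mono inter_subset_left

end MeasurePreservingNet

open MeasurePreservingNet in
theorem stmt18_general {D s : ℕ} (hs2 : 2 ≤ s) (hsD : s ≤ D)
    (NN1 : Set (({i : Fin D // ¬ i.val < s - 1} → ℝ) → ({i : Fin D // i.val < s - 1} → ℝ)))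
    (NN2 : Set (({i : Fin D // i.val < s - 1} → ℝ) → ({i : Fin D // ¬ i.val < s - 1} → ℝ)))
    (hNN1 : IsGoodFamily NN1) (hNN2 : IsGoodFamily NN2) (p : ℝ) (hp : 0 < p)
    (U : Set (Fin D → ℝ)) (hU : MeasurableSet U) (hU' : Bornology.IsBounded U)
    (ψ : (Fin D → ℝ) → (Fin D → ℝ)) (hψ : Measurable ψ) (hψU : Bornology.IsBounded (ψ '' U))
    (hvol : ∀ B, MeasurableSet B → volume (U ∩ ψ ⁻¹' B) ≤ volume B) :
    ∀ ε > 0, ∃ ψnet ∈ Psi D s NN1 NN2,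
      ∑ i : Fin D, (∫ x in U, |ψ x i - ψnet x i| ^ p) ^ (1 / p) ≤ ε := by
  intro ε hε
  have hD : (0 : ℝ) < D := by norm_cast; omega
  have hST : IsCompl {i : Fin D | i.val < s - 1} {i | ¬ i.val < s - 1} := isCompl_compl
  obtain ⟨m, hm, hmε⟩ := exists_mem_eLpNorm_sub_le (Ψ := Psi D s NN1 NN2)
    (fun m hm => continuous_of_mem_Psi hNN1 hNN2 hm) (fun m₁ h₁ m₂ h₂ => comp_mem_Psi h₁ h₂) hST
    ⟨⟨0, by omega⟩, show 0 < s - 1 by omega⟩ ⟨⟨s - 1, by omega⟩, lt_irrefl (s - 1)⟩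
    (approximatesSmoothShears_Psi_up hNN1) (approximatesSmoothShears_Psi_low hNN2)
    hU hU' hψ hψU hvol (ENNReal.ofReal_pos.2 hp).ne' ENNReal.ofReal_ne_top
    (ENNReal.ofReal_pos.2 (div_pos hε hD)).ne'
  have hψm : AEStronglyMeasurable (ψ - m) (volume.restrict U) :=
    (hψ.sub (continuous_of_mem_Psi hNN1 hNN2 hm).measurable).aestronglyMeasurable
  refine ⟨m, hm, ?_⟩
  calc ∑ i, (∫ x in U, |ψ x i - m x i| ^ p) ^ (1 / p) ≤ ∑ _i : Fin D, ε / D :=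
        Finset.sum_le_sum fun i _ => integral_rpow_abs_apply_le hψm hp (by positivity) hmε i
    _ = ε := by simp [mul_div_cancel₀ _ hD.ne']

/-- Main theorem: For `D ≥ 2`, `2 ≤ s ≤ D`, `1 ≤ p < ∞`, compact
`U ⊆ ℝᴰ`, and control families satisfying the Lipschitz and universal
approximation assumptions, every bounded injective Lebesgue measure-preserving
Borel map `ψ : U → ℝᴰ` can be approximated to arbitrary accuracy in the
`L^p(U)`-norm by measure-preserving neural networks from `Ψ`. -/
theorem stmt18 {D s : ℕ} (hD : 2 ≤ D) (hs2 : 2 ≤ s) (hsD : s ≤ D)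
    (NN1 : Set (({i : Fin D // ¬ i.val < s - 1} → ℝ) → ({i : Fin D // i.val < s - 1} → ℝ)))
    (NN2 : Set (({i : Fin D // i.val < s - 1} → ℝ) → ({i : Fin D // ¬ i.val < s - 1} → ℝ)))
    (hNN1 : IsGoodFamily NN1) (hNN2 : IsGoodFamily NN2)
    (p : ℝ) (hp : 1 ≤ p)
    (U : Set (Fin D → ℝ)) (hU : IsCompact U)
    (ψ : (Fin D → ℝ) → (Fin D → ℝ)) (hψm : Measurable ψ)
    (hbd : Bornology.IsBounded (ψ '' U)) (hinj : Set.InjOn ψ U)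
    (himg : MeasurableSet (ψ '' U))
    (hmp : ∀ B ⊆ ψ '' U, MeasurableSet B → volume (U ∩ ψ ⁻¹' B) = volume B) :
    ∀ ε > 0, ∃ ψnet ∈ Psi D s NN1 NN2,
      ∑ i : Fin D, (∫ x in U, |ψ x i - ψnet x i| ^ p) ^ (1 / p) ≤ ε :=
  stmt18_general hs2 hsD NN1 NN2 hNN1 hNN2 p (by linarith) U hU.measurableSet hU.isBounded ψ hψm hbd
    (MeasurePreservingNet.volume_inter_preimage_le himg hmp)
end
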